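/- arXiv:math/0608328 — 5 statements merged into one kernel-verified Lean document; each statement's English description precedes it below -/
import Mathlib

section
/- Let p be an odd prime, and let n > 0 and r be integers with (p−1) ∤ n and p ∤ r. Then ((−r)^n·F_p(pn,r) + n_*!)/(n_*!·n_*) + p·H_{n_*} − p·B_{p−1} + p − 1 ≡ (pn/n_*)·(q_p(r) − Σ_{k=2}^{p−n_*−1} binom(n_*+k, n_*)·B_k/(k·r^k)) (mod p²), where q_p(r) = (r^{p−1} − 1)/p is the Fermat quotient. -/
open Finset

/-- `x ≡ y (mod p^c)` for rationals: `x = y` or the `p`-adic valuation of `x - y`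
is at least `c`. -/
def modCong (p : ℕ) (c : ℤ) (x y : ℚ) : Prop :=
  x = y ∨ c ≤ padicValRat p (x - y)

/-- `C_p(n,r) = ∑_{0 ≤ k ≤ n, k ≡ r (mod p)} (-1)^k * binom(n,k)`. -/
def Cp (p n : ℕ) (r : ℤ) : ℚ :=
  ∑ k ∈ range (n+1), if ((k : ℤ) - r) % p = 0 then (-1 : ℚ)^k * (n.choose k) else 0

/-- The Fleck quotient `F_p(n,r) = (-p)^{-⌊(n-1)/(p-1)⌋} C_p(n,r) + [n = 0]`. -/
noncomputable def Fp (p n : ℕ) (r : ℤ) : ℚ :=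
  (-(p:ℚ)) ^ (-(Int.fdiv ((n:ℤ) - 1) ((p:ℤ) - 1))) * Cp p n r + (if n = 0 then 1 else 0)

/-- `n_*`: the unique integer in `{1,…,p-1}` with `n_* ≡ n (mod p-1)`. -/
def nLow (p n : ℕ) : ℕ := ((((n:ℤ) - 1) % ((p:ℤ) - 1)) + 1).toNat

/-- Harmonic number `H_r = ∑_{k=1}^r 1/k`. -/
def harm (r : ℕ) : ℚ := ∑ k ∈ Finset.Icc 1 r, 1/(k:ℚ)

section Teichmuller

variable {p : ℕ} [Fact p.Prime]

lemma PadicInt.toZMod_eq_zero_iff_dvd {x : ℤ_[p]} : PadicInt.toZMod x = 0 ↔ (p : ℤ_[p]) ∣ x := by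
  rw [← RingHom.mem_ker, PadicInt.ker_toZMod, PadicInt.maximalIdeal_eq_span_p,
    Ideal.mem_span_singleton]

lemma PadicInt.ringHom_zmod_eq_toZMod (f : ℤ_[p] →+* ZMod p) : f = PadicInt.toZMod := by
  ext x
  obtain ⟨y, hy⟩ : (p : ℤ_[p]) ∣ x - x.zmodRepr := by
    rw [← Ideal.mem_span_singleton, ← PadicInt.maximalIdeal_eq_span_p]
    exact PadicInt.sub_zmodRepr_mem x
  have hx : x = x.zmodRepr + p * y := by rw [← hy]; ring
  have key : ∀ g : ℤ_[p] →+* ZMod p, g x = x.zmodRepr := by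
    intro g
    have h := congrArg g hx
    rwa [map_add, map_mul, map_natCast, map_natCast, ZMod.natCast_self, zero_mul,
      add_zero] at h
  rw [key, key]

/-- The Teichmüller character of `ℤ_[p]`. -/
lemma exists_teichmuller (p : ℕ) [Fact p.Prime] :
    ∃ ω : ZMod p →*₀ ℤ_[p], ∀ a, PadicInt.toZMod (ω a) = a := by
  refine ⟨{ toFun := fun a => WittVector.toPadicInt p (WittVector.teichmuller p a)
            map_zero' := by simp
            map_one' := by simp
            map_mul' := by simp }, fun a => ?_⟩
  have h := PadicInt.ringHom_zmod_eq_toZMod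
    (WittVector.constantCoeff.comp (WittVector.fromPadicInt p))
  rw [← h]
  have h2 := WittVector.fromPadicInt_comp_toPadicInt_ext p (WittVector.teichmuller p a)
  simp only [RingHom.comp_apply, RingHom.id_apply] at h2
  simp [h2]

variable {ω : ZMod p →*₀ ℤ_[p]}

lemma teichmuller_mul_inv {a : ZMod p} (ha : a ≠ 0) : ω a * ω a⁻¹ = 1 := by
  rw [← map_mul, mul_inv_cancel₀ ha, map_one]

lemma teichmuller_pow_card_sub_one {a : ZMod p} (ha : a ≠ 0) : ω a ^ (p - 1) = 1 := by
  rw [← map_pow, ZMod.pow_card_sub_one_eq_one ha, map_one]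

lemma teichmuller_pow_card (a : ZMod p) : ω a ^ p = ω a := by
  rw [← map_pow, ZMod.pow_card]

lemma teichmuller_neg_one (hω : ∀ a, PadicInt.toZMod (ω a) = a) (hodd : Odd p) :
    ω (-1) = -1 := by
  have h : (ω (-1) - 1) * (ω (-1) + 1) = 0 := by
    have : ω (-1) * ω (-1) = 1 := by rw [← map_mul]; simp
    linear_combination this
  rcases mul_eq_zero.mp h with h | h
  · have h3 := congrArg PadicInt.toZMod h
    rw [map_sub, hω, map_one, map_zero] at h3
    have : Fact (2 < p) := ⟨by
      rcases (Fact.out : p.Prime).eq_two_or_odd with h | h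
      · subst h; exact absurd hodd (by decide)
      · have := (Fact.out : p.Prime).two_le; omega⟩
    exact absurd (sub_eq_zero.mp h3) (ZMod.neg_one_ne_one)
  · linear_combination h

lemma teichmuller_neg (hω : ∀ a, PadicInt.toZMod (ω a) = a) (hodd : Odd p) (a : ZMod p) :
    ω (-a) = -ω a := by
  rw [neg_eq_neg_one_mul, map_mul, teichmuller_neg_one hω hodd, neg_one_mul]

lemma sum_teichmuller_pow_eq_zero (hω : ∀ a, PadicInt.toZMod (ω a) = a) {i : ℕ}
    (hi : ¬ (p - 1) ∣ i) : ∑ a, ω a ^ i = 0 := by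
  obtain ⟨g, hg⟩ : ∃ g : (ZMod p)ˣ, g ^ i ≠ 1 := by
    by_contra! h
    exact hi (by simpa [ZMod.card] using (FiniteField.forall_pow_eq_one_iff (ZMod p) i).mp h)
  have hmul : ω g ^ i * ∑ a, ω a ^ i = ∑ a, ω a ^ i := by
    rw [mul_sum]
    refine Fintype.sum_equiv (Equiv.mulLeft₀ (g : ZMod p) g.ne_zero) _ _ fun a => ?_
    simp [mul_pow]
  have hne : ω g ^ i - 1 ≠ 0 := by
    intro h0
    have h3 := congrArg PadicInt.toZMod h0
    rw [map_sub, map_pow, hω, map_one, map_zero, sub_eq_zero] at h3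
    exact hg (Units.ext (by simpa using h3))
  exact (mul_eq_zero.mp (by linear_combination hmul :
    (ω g ^ i - 1) * ∑ a, ω a ^ i = 0)).resolve_left hne

lemma sum_teichmuller_inv_pow (i : ℕ) : ∑ a, ω a⁻¹ ^ i = ∑ a, ω a ^ i :=
  Fintype.sum_equiv (Equiv.inv (ZMod p)) _ _ fun _ => rfl

lemma sum_teichmuller_pow_of_dvd {i : ℕ} (hi : (p - 1) ∣ i) (hi0 : i ≠ 0) :
    ∑ a, ω a ^ i = (p : ℤ_[p]) - 1 := by
  obtain ⟨c, rfl⟩ := hi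
  have h : ∀ a : ZMod p, ω a ^ ((p - 1) * c) = if a = 0 then 0 else 1 := by
    intro a
    split_ifs with ha
    · rw [ha, map_zero, zero_pow hi0]
    · rw [pow_mul, teichmuller_pow_card_sub_one ha, one_pow]
  simp_rw [h]
  rw [sum_ite]
  simp [filter_ne', card_erase_of_mem, ZMod.card, Nat.cast_sub (Fact.out : p.Prime).one_le]

end Teichmuller

section GroupRing

variable {p : ℕ} [Fact p.Prime] {ω : ZMod p →*₀ ℤ_[p]}

/-- The element `∑ a, f a • [a]` of the group ring `ℤ_[p][ℤ/p]`. -/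
noncomputable def groupRingOf (f : ZMod p → ℤ_[p]) : AddMonoidAlgebra ℤ_[p] (ZMod p) :=
  .ofCoeff (Finsupp.equivFunOnFinite.symm f)

@[simp] lemma coeff_groupRingOf (f : ZMod p → ℤ_[p]) (a : ZMod p) :
    (groupRingOf f).coeff a = f a := rfl

lemma groupRing_coeff_mul (x y : AddMonoidAlgebra ℤ_[p] (ZMod p)) (r : ZMod p) :
    (x * y).coeff r = ∑ a, x.coeff a * y.coeff (r - a) := by
  classical
  rw [AddMonoidAlgebra.coeff_mul_antidiag x y r
    (univ.image fun a : ZMod p => (a, r - a))]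
  · rw [sum_image (by intro a _ b _ h; simpa using congrArg Prod.fst h)]
  · rintro ⟨a, b⟩
    simp only [mem_image, mem_univ, true_and, Prod.mk.injEq]
    constructor
    · rintro ⟨c, rfl, rfl⟩; ring
    · rintro rfl; exact ⟨a, rfl, by ring⟩

/-- The Gauss sum `∑ a, ω(a)⁻ʲ [a]` in the group ring. -/
noncomputable def gaussElt (ω : ZMod p →*₀ ℤ_[p]) (j : ℕ) : AddMonoidAlgebra ℤ_[p] (ZMod p) :=
  groupRingOf fun a => ω a⁻¹ ^ j

/-- The Jacobi sum attached to `ω⁻ˢ` and `ω⁻¹`. -/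
noncomputable def jacobiElt (ω : ZMod p →*₀ ℤ_[p]) (s : ℕ) : ℤ_[p] :=
  ∑ a, ω a⁻¹ ^ s * ω (1 - a)⁻¹

/-- The product of Jacobi sums relating `gaussElt ω 1 ^ s` to `gaussElt ω s`. -/
noncomputable def jacobiProd (ω : ZMod p →*₀ ℤ_[p]) (s : ℕ) : ℤ_[p] :=
  ∏ i ∈ Ico 1 s, jacobiElt ω i

lemma coeff_gaussElt_mul_of_ne_zero (s : ℕ) {r : ZMod p} (hr : r ≠ 0) :
    (gaussElt ω s * gaussElt ω 1).coeff r = jacobiElt ω s * ω r⁻¹ ^ (s + 1) := by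
  rw [groupRing_coeff_mul, jacobiElt, sum_mul]
  symm
  refine Fintype.sum_equiv (Equiv.mulLeft₀ r hr) _ _ fun a => ?_
  have : r - r * a = r * (1 - a) := by ring
  simp [gaussElt, this, mul_pow]
  ring

lemma coeff_gaussElt_mul_zero (hω : ∀ a, PadicInt.toZMod (ω a) = a) (hodd : Odd p) (s : ℕ) :
    (gaussElt ω s * gaussElt ω 1).coeff 0 = - ∑ a, ω a ^ (s + 1) := by
  rw [groupRing_coeff_mul, ← sum_teichmuller_inv_pow, ← sum_neg_distrib]
  refine sum_congr rfl fun a _ => ?_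
  simp [gaussElt, inv_neg, teichmuller_neg hω hodd, pow_succ]

lemma gaussElt_mul_gaussElt (hω : ∀ a, PadicInt.toZMod (ω a) = a) (hodd : Odd p) {s : ℕ}
    (hs : ¬ (p - 1) ∣ s + 1) :
    gaussElt ω s * gaussElt ω 1 = jacobiElt ω s • gaussElt ω (s + 1) := by
  ext r
  by_cases hr : r = 0
  · subst hr
    rw [coeff_gaussElt_mul_zero hω hodd, sum_teichmuller_pow_eq_zero hω hs]
    simp [gaussElt]
  · rw [coeff_gaussElt_mul_of_ne_zero s hr]
    simp [gaussElt]

lemma gaussElt_one_pow (hω : ∀ a, PadicInt.toZMod (ω a) = a) (hodd : Odd p) {s : ℕ}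
    (hs1 : 1 ≤ s) (hs2 : s ≤ p - 2) :
    gaussElt ω 1 ^ s = jacobiProd ω s • gaussElt ω s := by
  induction s, hs1 using Nat.le_induction with
  | base => simp [jacobiProd]
  | succ s hs ih =>
    have : ¬ (p - 1) ∣ s + 1 := fun h => by
      have := Nat.le_of_dvd (by omega) h
      omega
    rw [pow_succ, ih (by omega), smul_mul_assoc, gaussElt_mul_gaussElt hω hodd this, smul_smul,
      jacobiProd, jacobiProd, prod_Ico_succ_top hs]

lemma sum_teichmuller_mul_inv_one_sub (hω : ∀ a, PadicInt.toZMod (ω a) = a) (hodd : Odd p) :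
    ∑ a, ω a * ω (1 - a)⁻¹ = 1 := by
  have h1 : ¬ (p - 1) ∣ 1 := by
    intro h
    have := Nat.le_of_dvd one_pos h
    have h2 := (Fact.out : p.Prime).two_le
    have : p = 2 := by omega
    subst this
    exact absurd hodd (by decide)
  have h0 : ∑ b : ZMod p, ω b = 0 := by simpa using sum_teichmuller_pow_eq_zero hω h1
  rw [← add_sum_erase univ _ (mem_univ (-1 : ZMod p)), teichmuller_neg_one hω hodd] at h0
  rw [← add_sum_erase univ _ (mem_univ (1 : ZMod p))]
  have key : ∑ a ∈ univ.erase (1 : ZMod p), ω a * ω (1 - a)⁻¹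
      = ∑ b ∈ univ.erase (-1 : ZMod p), ω b := by
    refine sum_bij' (fun a _ => a * (1 - a)⁻¹) (fun b _ => b * (1 + b)⁻¹) ?_ ?_ ?_ ?_ ?_
    · intro a ha
      have ha : (1 - a) ≠ 0 := fun h => (mem_erase.mp ha).1 (by linear_combination -h)
      refine mem_erase.mpr ⟨fun h => ?_, mem_univ _⟩
      field_simp at h
      exact one_ne_zero (by linear_combination h)
    · intro b hb
      have hb : (1 + b) ≠ 0 := fun h => (mem_erase.mp hb).1 (by linear_combination h)
      refine mem_erase.mpr ⟨fun h => ?_, mem_univ _⟩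
      field_simp at h
      exact one_ne_zero (by linear_combination -h)
    · intro a ha
      have ha : (1 - a) ≠ 0 := fun h => (mem_erase.mp ha).1 (by linear_combination -h)
      have : 1 + a * (1 - a)⁻¹ = (1 - a)⁻¹ := by field_simp; ring
      rw [this]; field_simp
    · intro b hb
      have hb : (1 + b) ≠ 0 := fun h => (mem_erase.mp hb).1 (by linear_combination h)
      have : 1 - b * (1 + b)⁻¹ = (1 + b)⁻¹ := by field_simp; ring
      rw [this]; field_simp
    · intro a _; rw [map_mul]
  rw [key, sub_self, inv_zero, map_zero, mul_zero]
  linear_combination h0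

lemma teichmuller_inv_pow_card_sub_two (a : ZMod p) (hp3 : 3 ≤ p) : ω a⁻¹ ^ (p - 2) = ω a := by
  rw [← map_pow]
  by_cases ha : a = 0
  · subst ha; rw [inv_zero, zero_pow (by omega)]
  · congr 1
    have := ZMod.pow_card_sub_one_eq_one (inv_ne_zero ha)
    rw [show p - 1 = p - 2 + 1 by omega, pow_succ] at this
    field_simp at this
    simpa using this

lemma jacobiElt_card_sub_two (hω : ∀ a, PadicInt.toZMod (ω a) = a) (hodd : Odd p) (hp3 : 3 ≤ p) :
    jacobiElt ω (p - 2) = 1 := by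
  simp_rw [jacobiElt, teichmuller_inv_pow_card_sub_two _ hp3]
  exact sum_teichmuller_mul_inv_one_sub hω hodd

lemma gaussElt_one_pow_card_sub_one (hω : ∀ a, PadicInt.toZMod (ω a) = a) (hodd : Odd p)
    (hp3 : 3 ≤ p) :
    gaussElt ω 1 ^ (p - 1) =
      jacobiProd ω (p - 2) • (groupRingOf (fun _ => 1) - (p : ℤ_[p]) • 1) := by
  rw [show p - 1 = p - 2 + 1 by omega, pow_succ, gaussElt_one_pow hω hodd (by omega) le_rfl,
    smul_mul_assoc]
  congr 1
  ext r
  by_cases hr : r = 0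
  · subst hr
    rw [coeff_gaussElt_mul_zero hω hodd, show p - 2 + 1 = p - 1 by omega,
      sum_teichmuller_pow_of_dvd (dvd_refl _) (by omega)]
    simp [AddMonoidAlgebra.one_def]
  · rw [coeff_gaussElt_mul_of_ne_zero _ hr, jacobiElt_card_sub_two hω hodd hp3,
      show p - 2 + 1 = p - 1 by omega, teichmuller_pow_card_sub_one (inv_ne_zero hr)]
    simp [AddMonoidAlgebra.one_def, hr]

lemma gaussElt_one_pow_card (hω : ∀ a, PadicInt.toZMod (ω a) = a) (hodd : Odd p)
    (hp3 : 3 ≤ p) :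
    gaussElt ω 1 ^ p = (-(p : ℤ_[p]) * jacobiProd ω (p - 2)) • gaussElt ω 1 := by
  rw [← pow_sub_one_mul (by omega : p ≠ 0), gaussElt_one_pow_card_sub_one hω hodd hp3,
    smul_mul_assoc, sub_mul]
  have h0 : groupRingOf (fun _ : ZMod p => (1 : ℤ_[p])) * gaussElt ω 1 = 0 := by
    ext r
    rw [groupRing_coeff_mul]
    have h1 : ¬ (p - 1) ∣ 1 := fun h => by
      have := Nat.le_of_dvd one_pos h
      omega
    have := sum_teichmuller_pow_eq_zero hω h1
    rw [← sum_teichmuller_inv_pow] at this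
    simp only [coeff_groupRingOf, one_mul, gaussElt, AddMonoidAlgebra.coeff_zero,
      Finsupp.coe_zero, Pi.zero_apply]
    rw [← this]
    exact Fintype.sum_equiv (Equiv.subLeft r) _ _ fun a => rfl
  rw [h0, zero_sub, smul_mul_assoc, one_mul, smul_neg, smul_smul, ← neg_smul]
  congr 1
  ring

lemma gaussElt_one_pow_add_mul (hω : ∀ a, PadicInt.toZMod (ω a) = a) (hodd : Odd p)
    (hp3 : 3 ≤ p) {s : ℕ} (hs : 1 ≤ s) (m : ℕ) :
    gaussElt ω 1 ^ (s + m * (p - 1)) =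
      (-(p : ℤ_[p]) * jacobiProd ω (p - 2)) ^ m • gaussElt ω 1 ^ s := by
  induction m with
  | zero => simp
  | succ m ih =>
    have : s + (m + 1) * (p - 1) = (s + m * (p - 1) - 1) + p := by
      have : (m + 1) * (p - 1) = m * (p - 1) + (p - 1) := by ring
      omega
    rw [this, pow_add, gaussElt_one_pow_card hω hodd hp3, mul_smul_comm, ← pow_succ,
      show s + m * (p - 1) - 1 + 1 = s + m * (p - 1) by omega, ih, smul_smul, ← pow_succ']

end GroupRing

section Residues

variable {p : ℕ} [Fact p.Prime]

/-- Harmonic numbers modulo `p`. -/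
def harmZMod (p n : ℕ) : ZMod p := ∑ k ∈ Icc 1 n, (k : ZMod p)⁻¹

@[simp] lemma harmZMod_zero : harmZMod p 0 = 0 := by simp [harmZMod]

lemma harmZMod_succ (n : ℕ) : harmZMod p (n + 1) = harmZMod p n + ((n + 1 : ℕ) : ZMod p)⁻¹ := by
  rw [harmZMod, sum_Icc_succ_top (by omega), harmZMod]

lemma natCast_zmod_ne_zero {k : ℕ} (h1 : 1 ≤ k) (h2 : k < p) : (k : ZMod p) ≠ 0 := by
  rw [Ne, ZMod.natCast_eq_zero_iff]
  exact fun h => absurd (Nat.le_of_dvd h1 h) (by omega)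

lemma exists_mul_eq_one_of_toZMod_ne_zero {x : ℤ_[p]} (hx : PadicInt.toZMod x ≠ 0) :
    ∃ y, x * y = 1 ∧ PadicInt.toZMod y = (PadicInt.toZMod x)⁻¹ := by
  have hu : IsUnit x := by
    rw [← not_not (a := IsUnit x), ← mem_nonunits_iff, ← IsLocalRing.mem_maximalIdeal,
      ← PadicInt.ker_toZMod]
    exact hx
  obtain ⟨y, hy⟩ := hu.exists_right_inv
  refine ⟨y, hy, ?_⟩
  have := congrArg PadicInt.toZMod hy
  rw [map_mul, map_one] at this
  exact eq_inv_of_mul_eq_one_right this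

lemma toZMod_prime : PadicInt.toZMod (p : ℤ_[p]) = 0 := by simp

lemma padicInt_prime_ne_zero : (p : ℤ_[p]) ≠ 0 := by
  exact_mod_cast (Fact.out : p.Prime).ne_zero

lemma neg_one_pow_mul_choose_expansion {k : ℕ} (hk : k < p) :
    ∃ c : ℤ_[p], (-1) ^ k * ((p - 1).choose k : ℤ_[p]) = 1 + p * c ∧
      PadicInt.toZMod c = -harmZMod p k := by
  induction k with
  | zero => exact ⟨0, by simp, by simp⟩
  | succ k ih =>
    obtain ⟨c, hc, hc'⟩ := ih (by omega)
    have hne := natCast_zmod_ne_zero (p := p) (k := k + 1) (by omega) hk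
    obtain ⟨y, hy, hy'⟩ := exists_mul_eq_one_of_toZMod_ne_zero
      (x := ((k + 1 : ℕ) : ℤ_[p])) (by rwa [map_natCast])
    refine ⟨c - (1 + p * c) * y, ?_, ?_⟩
    · have h := congrArg (Nat.cast (R := ℤ_[p])) (Nat.choose_succ_right_eq (p - 1) k)
      rw [Nat.cast_mul, Nat.cast_mul, Nat.cast_sub (by omega),
        Nat.cast_sub (Fact.out : p.Prime).one_le] at h
      push_cast at h hy
      linear_combination
        (-(-1) ^ k * y) * h - ((-1) ^ (k + 1) * ((p - 1).choose (k + 1) : ℤ_[p])) * hy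
        + ((k + 1 : ℤ_[p]) - p) * y * hc + (1 + (p : ℤ_[p]) * c) * hy
    · rw [map_sub, map_mul, map_add, map_mul, toZMod_prime, hc', hy', harmZMod_succ]
      simp
      ring

end Residues

section FermatPolynomial

/-- The integer `(-1)ᵏ⁺¹ binom(p, k) / p`. -/
def fermatCoeff (p k : ℕ) : ℤ := (-1) ^ (k + 1) * ((p.choose k / p : ℕ) : ℤ)

variable {p : ℕ} [Fact p.Prime]

lemma prime_mul_fermatCoeff {k : ℕ} (h1 : 1 ≤ k) (h2 : k < p) :
    (p : ℤ) * fermatCoeff p k = (-1) ^ (k + 1) * (p.choose k : ℤ) := by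
  have := (Fact.out : p.Prime).dvd_choose_self (by omega) h2
  have h : ((p * (p.choose k / p) : ℕ) : ℤ) = (p.choose k : ℤ) := by
    rw [Nat.mul_div_cancel' this]
  push_cast at h
  rw [fermatCoeff]
  push_cast
  linear_combination (-1) ^ (k + 1) * h

lemma one_sub_pow_prime {R : Type*} [CommRing R] (hodd : Odd p) (w : R) :
    (1 - w) ^ p = 1 - w ^ p - p * ∑ k ∈ Ico 1 p, (fermatCoeff p k : R) * w ^ k := by
  have hp1 := (Fact.out : p.Prime).one_le
  rw [sub_eq_neg_add, add_pow, sum_range_succ, ← Nat.Ico_zero_eq_range,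
    sum_eq_sum_Ico_succ_bot (by omega)]
  have : (p : R) * ∑ k ∈ Ico 1 p, (fermatCoeff p k : R) * w ^ k
      = - ∑ k ∈ Ico 1 p, (-w) ^ k * 1 ^ (p - k) * (p.choose k : R) := by
    rw [mul_sum, ← sum_neg_distrib]
    refine sum_congr rfl fun k hk => ?_
    rw [mem_Ico] at hk
    have := congrArg (Int.cast (R := R)) (prime_mul_fermatCoeff hk.1 hk.2)
    push_cast at this
    rw [neg_pow w, one_pow]
    linear_combination w ^ k * this
  rw [this]
  simp [hodd.neg_pow]
  ring

lemma mul_fermatCoeff {k : ℕ} (h1 : 1 ≤ k) (h2 : k < p) :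
    ∃ c : ℤ_[p], (k : ℤ_[p]) * fermatCoeff p k = 1 + p * c ∧
      PadicInt.toZMod c = -harmZMod p (k - 1) := by
  obtain ⟨c, hc, hc'⟩ := neg_one_pow_mul_choose_expansion (p := p) (k := k - 1) (by omega)
  refine ⟨c, ?_, hc'⟩
  rw [← hc]
  obtain ⟨k, rfl⟩ : ∃ j, k = j + 1 := ⟨k - 1, by omega⟩
  have h3 := congrArg (Int.cast (R := ℤ_[p])) (prime_mul_fermatCoeff h1 h2)
  have h4 := congrArg (Nat.cast (R := ℤ_[p])) (Nat.add_one_mul_choose_eq (p - 1) k)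
  rw [show p - 1 + 1 = p by omega] at h4
  push_cast at h3 h4 ⊢
  apply mul_left_cancel₀ (padicInt_prime_ne_zero (p := p))
  linear_combination (k + 1 : ℤ_[p]) * h3 - (-1) ^ k * h4

lemma fermatCoeff_zmod {k : ℕ} (h1 : 1 ≤ k) (h2 : k < p) :
    (fermatCoeff p k : ZMod p) = (k : ZMod p)⁻¹ := by
  obtain ⟨c, hc, -⟩ := mul_fermatCoeff h1 h2
  have := congrArg PadicInt.toZMod hc
  rw [map_mul, map_natCast, map_intCast, map_add, map_mul, toZMod_prime, map_one, zero_mul,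
    add_zero] at this
  exact eq_inv_of_mul_eq_one_right this

/-- The truncated logarithm `∑ bᵏ / k` on `ZMod p`. -/
def truncLog (b : ZMod p) : ZMod p := ∑ k ∈ Ico 1 p, (k : ZMod p)⁻¹ * b ^ k

variable {ω : ZMod p →*₀ ℤ_[p]}

lemma one_sub_teichmuller (hω : ∀ a, PadicInt.toZMod (ω a) = a) (hodd : Odd p) (b : ZMod p) :
    ∃ u : ℤ_[p], 1 - ω b = ω (1 - b) + p * u ∧ PadicInt.toZMod u = truncLog b := by
  have h1 : (p : ℤ_[p]) ∣ (1 - ω b) - ω (1 - b) := by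
    rw [← PadicInt.toZMod_eq_zero_iff_dvd]
    simp [hω]
  obtain ⟨z, hz⟩ := dvd_sub_pow_of_dvd_sub h1 1
  rw [pow_one, one_sub_pow_prime hodd, teichmuller_pow_card, teichmuller_pow_card] at hz
  refine ⟨∑ k ∈ Ico 1 p, (fermatCoeff p k : ℤ_[p]) * ω b ^ k + p * z, ?_, ?_⟩
  · linear_combination hz
  · rw [map_add, map_mul, toZMod_prime, zero_mul, add_zero, map_sum, truncLog]
    refine sum_congr rfl fun k hk => ?_
    rw [mem_Ico] at hk
    rw [map_mul, map_intCast, map_pow, hω, fermatCoeff_zmod hk.1 hk.2]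

lemma truncLog_one_sub (hodd : Odd p) (b : ZMod p) : truncLog (1 - b) = truncLog b := by
  obtain ⟨ω, hω⟩ := exists_teichmuller p
  obtain ⟨u, hu, hu'⟩ := one_sub_teichmuller hω hodd b
  obtain ⟨v, hv, hv'⟩ := one_sub_teichmuller hω hodd (1 - b)
  rw [← hu', ← hv']
  congr 1
  apply mul_left_cancel₀ (padicInt_prime_ne_zero (p := p))
  rw [sub_sub_cancel] at hv
  linear_combination hu - hv

lemma truncLog_zero : truncLog (0 : ZMod p) = 0 := by
  refine sum_eq_zero fun k hk => ?_
  rw [mem_Ico] at hk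
  rw [zero_pow (by omega), mul_zero]

lemma truncLog_one (hodd : Odd p) : truncLog (1 : ZMod p) = 0 := by
  rw [← truncLog_one_sub hodd, sub_self, truncLog_zero]

lemma harmZMod_card_sub_one (hodd : Odd p) : harmZMod p (p - 1) = 0 := by
  rw [← truncLog_one hodd, harmZMod, truncLog]
  refine sum_congr ?_ fun k _ => by simp
  ext k
  have := (Fact.out : p.Prime).one_le
  simp only [mem_Icc, mem_Ico]
  omega

lemma sum_zmod_pow_eq_zero {i : ℕ} (hi : ¬ (p - 1) ∣ i) : ∑ b : ZMod p, b ^ i = 0 := by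
  obtain ⟨ω, hω⟩ := exists_teichmuller p
  have := congrArg PadicInt.toZMod (sum_teichmuller_pow_eq_zero hω hi)
  simpa [hω] using this

lemma sum_zmod_pow_of_dvd {i : ℕ} (hi : (p - 1) ∣ i) (hi0 : i ≠ 0) :
    ∑ b : ZMod p, b ^ i = -1 := by
  obtain ⟨ω, hω⟩ := exists_teichmuller p
  have := congrArg PadicInt.toZMod (sum_teichmuller_pow_of_dvd (ω := ω) hi hi0)
  simpa [hω] using this

lemma sum_pow_mul_truncLog {i : ℕ} (hi : i + 2 ≤ p) :
    ∑ b : ZMod p, b ^ i * truncLog b = ((i + 1 : ℕ) : ZMod p)⁻¹ := by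
  simp_rw [truncLog, mul_sum]
  rw [sum_comm, sum_eq_single (p - 1 - i)]
  · have : ∀ b : ZMod p, b ^ i * ((((p - 1 - i : ℕ) : ZMod p))⁻¹ * b ^ (p - 1 - i))
        = (((p - 1 - i : ℕ) : ZMod p))⁻¹ * b ^ (p - 1) := by
      intro b
      rw [mul_left_comm, ← pow_add, show i + (p - 1 - i) = p - 1 by omega]
    simp_rw [this]
    rw [← mul_sum, sum_zmod_pow_of_dvd (dvd_refl _) (by omega)]
    have h : ((p - 1 - i : ℕ) : ZMod p) = -((i + 1 : ℕ) : ZMod p) := by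
      rw [Nat.sub_sub, Nat.cast_sub (by omega), ZMod.natCast_self]
      push_cast; ring
    rw [h, inv_neg, neg_mul_neg, mul_one]
  · intro k hk hki
    rw [mem_Ico] at hk
    have : ∀ b : ZMod p, b ^ i * ((k : ZMod p)⁻¹ * b ^ k) = (k : ZMod p)⁻¹ * b ^ (i + k) := by
      intro b; rw [mul_left_comm, ← pow_add]
    simp_rw [this]
    rw [← mul_sum, sum_zmod_pow_eq_zero, mul_zero]
    rintro ⟨c, hc⟩
    rcases c with _ | _ | c
    · omega
    · omega
    · have : (p - 1) * (c + 1 + 1) ≥ (p - 1) * 2 := Nat.mul_le_mul_left _ (by omega)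
      omega
  · intro h
    exact absurd (mem_Ico.mpr ⟨by omega, by omega⟩) h

lemma sum_pow_mul_truncLog_mul_inv (hodd : Odd p) (hp3 : 3 ≤ p) {i : ℕ} (hi : i + 1 ≤ p) :
    ∑ b : ZMod p, b ^ i * truncLog b * (1 - b)⁻¹ = -(harmZMod p i + 1) := by
  induction i with
  | zero =>
    have h1 : ∑ b : ZMod p, b ^ 0 * truncLog b * (1 - b)⁻¹ = ∑ b : ZMod p, truncLog b * b⁻¹ := by
      refine Fintype.sum_equiv (Equiv.subLeft 1) _ _ fun b => ?_
      simp [truncLog_one_sub hodd]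
    rw [h1]
    simp_rw [truncLog, sum_mul]
    rw [sum_comm, sum_eq_single 1]
    · have : ∀ b : ZMod p, ((1 : ℕ) : ZMod p)⁻¹ * b ^ 1 * b⁻¹ = b ^ (p - 1) := by
        intro b
        by_cases hb : b = 0
        · subst hb; rw [zero_pow (by omega : p - 1 ≠ 0)]; simp
        · rw [ZMod.pow_card_sub_one_eq_one hb]; simp [hb]
      simp_rw [this]
      rw [sum_zmod_pow_of_dvd (dvd_refl _) (by omega)]
      simp
    · intro k hk hk1
      rw [mem_Ico] at hk
      have : ∀ b : ZMod p, (k : ZMod p)⁻¹ * b ^ k * b⁻¹ = (k : ZMod p)⁻¹ * b ^ (k - 1) := by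
        intro b
        by_cases hb : b = 0
        · subst hb; rw [zero_pow (by omega : k ≠ 0), zero_pow (by omega : k - 1 ≠ 0)]; simp
        · rw [mul_assoc, ← pow_sub_one_mul (by omega : k ≠ 0), mul_assoc (b ^ (k - 1)),
            mul_inv_cancel₀ hb, mul_one]
      simp_rw [this]
      rw [← mul_sum, sum_zmod_pow_eq_zero, mul_zero]
      intro h
      have := Nat.le_of_dvd (by omega) h
      omega
    · intro h
      exact absurd (mem_Ico.mpr ⟨by omega, by omega⟩) h
  | succ i ih =>
    have ih := ih (by omega)
    have hs := sum_pow_mul_truncLog (p := p) (i := i) (by omega)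
    have hd : ∑ b : ZMod p, b ^ i * truncLog b * (1 - b)⁻¹
        - ∑ b : ZMod p, b ^ (i + 1) * truncLog b * (1 - b)⁻¹ = ∑ b : ZMod p, b ^ i * truncLog b := by
      rw [← sum_sub_distrib]
      refine sum_congr rfl fun b _ => ?_
      by_cases hb : b = 1
      · subst hb; rw [truncLog_one hodd]; ring
      · have : (1 - b) * (1 - b)⁻¹ = 1 := mul_inv_cancel₀ (sub_ne_zero.mpr (Ne.symm hb))
        linear_combination b ^ i * truncLog b * this
    rw [harmZMod_succ]
    linear_combination ih - hd - hs

end FermatPolynomial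

section JacobiExpansion

variable {p : ℕ} [Fact p.Prime] {ω : ZMod p →*₀ ℤ_[p]}

lemma jacobiElt_eq_neg_sum (hω : ∀ a, PadicInt.toZMod (ω a) = a) (hodd : Odd p) {s : ℕ}
    (hs : 1 ≤ s) : jacobiElt ω s = -∑ b, ω b ^ (s + 1) * ω (1 - b)⁻¹ := by
  rw [jacobiElt, ← sum_neg_distrib]
  refine Fintype.sum_equiv (Equiv.inv (ZMod p)) _ _ fun a => ?_
  simp only [Equiv.inv_apply]
  by_cases ha : a = 0
  · subst ha
    simp [zero_pow (by omega : s ≠ 0)]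
  · have : (1 - a)⁻¹ = -(a⁻¹ * (1 - a⁻¹)⁻¹) := by
      by_cases h1 : a = 1
      · subst h1; simp
      · have h2 : 1 - a ≠ 0 := sub_ne_zero.mpr (Ne.symm h1)
        have h3 : 1 - a⁻¹ = -((1 - a) * a⁻¹) := by field_simp; ring
        rw [h3, inv_neg, mul_inv, inv_inv]
        field_simp
    rw [this, teichmuller_neg hω hodd, map_mul]
    ring

lemma sum_pow_mul_inv_one_sub_expansion (hω : ∀ a, PadicInt.toZMod (ω a) = a) (hodd : Odd p)
    (hp3 : 3 ≤ p) {i : ℕ} (hi1 : 1 ≤ i) (hi2 : i ≤ p - 1) :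
    ∃ c : ℤ_[p], ∑ b, ω b ^ i * ω (1 - b)⁻¹ = i + p * c ∧
      PadicInt.toZMod c = i * harmZMod p (i - 1) := by
  induction i, hi1 using Nat.le_induction with
  | base =>
    refine ⟨0, ?_, by simp⟩
    simp [sum_teichmuller_mul_inv_one_sub hω hodd]
  | succ i hi ih =>
    obtain ⟨c, hc, hc'⟩ := ih (by omega)
    choose u hu hu' using one_sub_teichmuller hω hodd
    have h0 : ∑ b, ω b ^ i = 0 := sum_teichmuller_pow_eq_zero hω fun h => by
      have := Nat.le_of_dvd (by omega) h
      omega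
    have key : ∑ b, ω b ^ i * ω (1 - b)⁻¹ - ∑ b, ω b ^ (i + 1) * ω (1 - b)⁻¹
        = -1 + p * ∑ b, ω b ^ i * u b * ω (1 - b)⁻¹ := by
      have h1 : ∑ b : ZMod p, (if b = 1 then (1 : ℤ_[p]) else 0) = 1 := by simp
      rw [← sum_sub_distrib, mul_sum]
      calc _ = ∑ b, (ω b ^ i - (if b = 1 then 1 else 0)
                + p * (ω b ^ i * u b * ω (1 - b)⁻¹)) := by
            refine sum_congr rfl fun b _ => ?_
            split_ifs with hb
            · subst hb; simp
            · have := teichmuller_mul_inv (ω := ω) (sub_ne_zero.mpr (Ne.symm hb))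
              linear_combination ω b ^ i * ω (1 - b)⁻¹ * hu b + ω b ^ i * this
        _ = _ := by
            rw [sum_add_distrib, sum_sub_distrib, h0, h1]
            ring
    refine ⟨c - ∑ b, ω b ^ i * u b * ω (1 - b)⁻¹, ?_, ?_⟩
    · push_cast
      linear_combination hc - key
    · have h2 : PadicInt.toZMod (∑ b, ω b ^ i * u b * ω (1 - b)⁻¹) = -(harmZMod p i + 1) := by
        rw [← sum_pow_mul_truncLog_mul_inv hodd hp3 (by omega)]
        simp [hω, hu']
      rw [map_sub, hc', h2, Nat.add_sub_cancel]
      obtain ⟨j, rfl⟩ : ∃ j, i = j + 1 := ⟨i - 1, by omega⟩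
      have hne := natCast_zmod_ne_zero (p := p) (k := j + 1) (by omega) (by omega)
      rw [Nat.add_sub_cancel, harmZMod_succ]
      push_cast at hne ⊢
      field_simp
      ring

lemma jacobiProd_expansion (hω : ∀ a, PadicInt.toZMod (ω a) = a) (hodd : Odd p)
    (hp3 : 3 ≤ p) {s : ℕ} (hs1 : 1 ≤ s) (hs2 : s ≤ p - 2) :
    ∃ c : ℤ_[p], (-1) ^ s * jacobiProd ω s = -(s.factorial + p * c) ∧
      PadicInt.toZMod c = s.factorial * (s * harmZMod p s - s) := by
  induction s, hs1 using Nat.le_induction with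
  | base => exact ⟨0, by simp [jacobiProd], by simp [harmZMod]⟩
  | succ s hs ih =>
    obtain ⟨c, hc, hc'⟩ := ih (by omega)
    obtain ⟨d, hd, hd'⟩ := sum_pow_mul_inv_one_sub_expansion hω hodd hp3
      (i := s + 1) (by omega) (by omega)
    rw [Nat.add_sub_cancel] at hd'
    have hJ : jacobiProd ω (s + 1) = jacobiProd ω s * jacobiElt ω s := by
      rw [jacobiProd, prod_Ico_succ_top hs, jacobiProd]
    refine ⟨c * (s + 1) + s.factorial * d + p * c * d, ?_, ?_⟩
    · rw [hJ, jacobiElt_eq_neg_sum hω hodd hs, hd, Nat.factorial_succ]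
      push_cast
      rw [pow_succ]
      linear_combination ((s : ℤ_[p]) + 1 + p * d) * hc
    · have hne := natCast_zmod_ne_zero (p := p) (k := s + 1) (by omega) (by omega)
      simp only [map_add, map_mul, hc', hd', map_natCast, map_one, ZMod.natCast_self]
      rw [Nat.factorial_succ, harmZMod_succ]
      push_cast at hne ⊢
      field_simp
      ring

end JacobiExpansion

section Reduction

variable {p : ℕ} [Fact p.Prime]

/-- `x` is a `p`-adic integer with residue class `a`. -/
def HasResidue (x : ℚ_[p]) (a : ZMod p) : Prop :=
  ∃ z : ℤ_[p], (z : ℚ_[p]) = x ∧ PadicInt.toZMod z = a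

namespace HasResidue

variable {x y : ℚ_[p]} {a b : ZMod p}

lemma coe (z : ℤ_[p]) : HasResidue (z : ℚ_[p]) (PadicInt.toZMod z) := ⟨z, rfl, rfl⟩

lemma unique (h : HasResidue x a) (h' : HasResidue x b) : a = b := by
  obtain ⟨z, hz, rfl⟩ := h
  obtain ⟨w, hw, rfl⟩ := h'
  rw [PadicInt.ext (hz.trans hw.symm)]

lemma add (h : HasResidue x a) (h' : HasResidue y b) : HasResidue (x + y) (a + b) := by
  obtain ⟨z, rfl, rfl⟩ := h
  obtain ⟨w, rfl, rfl⟩ := h'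
  exact ⟨z + w, by push_cast; rfl, map_add _ _ _⟩

lemma neg (h : HasResidue x a) : HasResidue (-x) (-a) := by
  obtain ⟨z, rfl, rfl⟩ := h
  exact ⟨-z, by push_cast; rfl, map_neg _ _⟩

lemma sub (h : HasResidue x a) (h' : HasResidue y b) : HasResidue (x - y) (a - b) := by
  rw [sub_eq_add_neg, sub_eq_add_neg]
  exact h.add h'.neg

lemma mul (h : HasResidue x a) (h' : HasResidue y b) : HasResidue (x * y) (a * b) := by
  obtain ⟨z, rfl, rfl⟩ := h
  obtain ⟨w, rfl, rfl⟩ := h'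
  exact ⟨z * w, by push_cast; rfl, map_mul _ _ _⟩

lemma natCast (n : ℕ) : HasResidue (n : ℚ_[p]) n := ⟨n, by push_cast; rfl, map_natCast _ _⟩

lemma intCast (n : ℤ) : HasResidue (n : ℚ_[p]) n := ⟨n, by push_cast; rfl, map_intCast _ _⟩

lemma zero : HasResidue (0 : ℚ_[p]) 0 := by simpa using natCast (p := p) 0

lemma one : HasResidue (1 : ℚ_[p]) 1 := by simpa using natCast (p := p) 1

lemma prime : HasResidue (p : ℚ_[p]) 0 := by simpa using natCast (p := p) p

lemma pow (h : HasResidue x a) (n : ℕ) : HasResidue (x ^ n) (a ^ n) := by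
  obtain ⟨z, rfl, rfl⟩ := h
  exact ⟨z ^ n, by push_cast; rfl, map_pow _ _ _⟩

lemma inv (h : HasResidue x a) (ha : a ≠ 0) : HasResidue x⁻¹ a⁻¹ := by
  obtain ⟨z, rfl, rfl⟩ := h
  obtain ⟨w, hw, hw'⟩ := exists_mul_eq_one_of_toZMod_ne_zero ha
  refine ⟨w, ?_, hw'⟩
  have := congrArg (fun t : ℤ_[p] => (t : ℚ_[p])) hw
  push_cast at this
  exact eq_inv_of_mul_eq_one_right this

lemma div (h : HasResidue x a) (h' : HasResidue y b) (hb : b ≠ 0) :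
    HasResidue (x / y) (a / b) := by
  rw [div_eq_mul_inv, div_eq_mul_inv]
  exact h.mul (h'.inv hb)

lemma sum {ι : Type*} {s : Finset ι} {f : ι → ℚ_[p]} {g : ι → ZMod p}
    (h : ∀ i ∈ s, HasResidue (f i) (g i)) : HasResidue (∑ i ∈ s, f i) (∑ i ∈ s, g i) := by
  classical
  induction s using Finset.induction_on with
  | empty => simpa using zero
  | insert i s hi ih =>
    rw [sum_insert hi, sum_insert hi]
    exact (h i (mem_insert_self _ _)).add (ih fun j hj => h j (mem_insert_of_mem hj))

lemma congr (h : HasResidue x a) (hx : x = y) (ha : a = b) : HasResidue y b := by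
  subst hx ha; exact h

end HasResidue

lemma hasResidue_bernoulli {k : ℕ} (hk : k + 2 ≤ p) :
    ∃ β : ZMod p, HasResidue ((bernoulli k : ℚ) : ℚ_[p]) β := by
  induction k using Nat.strong_induction_on with
  | _ k ih =>
    have h := sum_bernoulli (k + 1)
    rw [sum_range_succ] at h
    have h' := congrArg (fun q : ℚ => (q : ℚ_[p])) h
    push_cast at h'
    have hne := natCast_zmod_ne_zero (p := p) (k := k + 1) (by omega) (by omega)
    have hne' : ((k + 1 : ℕ) : ℚ_[p]) ≠ 0 := by exact_mod_cast (Nat.succ_ne_zero k)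
    have hs : ∃ γ : ZMod p, HasResidue
        (∑ x ∈ range k, ((k + 1).choose x : ℚ_[p]) * ((bernoulli x : ℚ) : ℚ_[p])) γ := by
      choose! β hβ using ih
      exact ⟨_, HasResidue.sum fun i hi => (HasResidue.natCast _).mul
        (hβ i (mem_range.mp hi) (by rw [mem_range] at hi; omega))⟩
    obtain ⟨γ, hγ⟩ := hs
    refine ⟨_, HasResidue.congr (((HasResidue.natCast (if k + 1 = 1 then 1 else 0)).sub hγ).div
      (HasResidue.natCast (k + 1)) hne) ?_ rfl⟩
    rw [div_eq_iff hne']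
    rw [Nat.choose_succ_self_right] at h'
    have hite : ((if k = 0 then 1 else 0 : ℚ) : ℚ_[p]) = if k = 0 then 1 else 0 := by
      split_ifs <;> simp
    rw [hite] at h'
    simp only [Nat.add_eq_right, Nat.cast_ite, Nat.cast_one, Nat.cast_zero]
    push_cast at h' ⊢
    linear_combination -h'

lemma exists_bernoulli_residue (p : ℕ) [Fact p.Prime] :
    ∃ β : ℕ → ZMod p, ∀ k, k + 2 ≤ p → HasResidue ((bernoulli k : ℚ) : ℚ_[p]) (β k) := by
  choose! β hβ using fun k (hk : k + 2 ≤ p) => hasResidue_bernoulli (p := p) hk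
  exact ⟨β, hβ⟩

lemma sum_range_pow_padic (N j : ℕ) :
    ∑ k ∈ range N, (k : ℚ_[p]) ^ j = ∑ l ∈ range (j + 1),
      ((bernoulli l : ℚ) : ℚ_[p]) * ((j + 1).choose l : ℚ_[p]) * (N : ℚ_[p]) ^ (j + 1 - l)
        / ((j + 1 : ℕ) : ℚ_[p]) := by
  have := congrArg (fun q : ℚ => (q : ℚ_[p])) (sum_range_pow N j)
  push_cast at this ⊢
  exact this

variable {β : ℕ → ZMod p}

lemma sum_range_pow_zmod (hβ : ∀ k, k + 2 ≤ p → HasResidue ((bernoulli k : ℚ) : ℚ_[p]) (β k))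
    (N : ℕ) {j : ℕ} (hj : j + 2 ≤ p) :
    ∑ k ∈ range N, (k : ZMod p) ^ j = ∑ l ∈ range (j + 1),
      β l * ((j + 1).choose l : ZMod p) * (N : ZMod p) ^ (j + 1 - l) / ((j + 1 : ℕ) : ZMod p) := by
  have h1 : HasResidue (∑ k ∈ range N, (k : ℚ_[p]) ^ j) (∑ k ∈ range N, (k : ZMod p) ^ j) :=
    HasResidue.sum fun k _ => (HasResidue.natCast k).pow j
  refine h1.unique ?_
  rw [sum_range_pow_padic]
  refine HasResidue.sum fun l hl => ?_
  rw [mem_range] at hl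
  exact (((hβ l (by omega)).mul (HasResidue.natCast _)).mul ((HasResidue.natCast N).pow _)).div
    (HasResidue.natCast _) (natCast_zmod_ne_zero (by omega) (by omega))

/-- `(∑_{k<p} kʲ) / p ≡ B_j (mod p)` for `j ≤ p - 2`. -/
lemma hasResidue_sum_pow_div_prime
    (hβ : ∀ k, k + 2 ≤ p → HasResidue ((bernoulli k : ℚ) : ℚ_[p]) (β k))
    {j : ℕ} (hj : j + 2 ≤ p) :
    HasResidue ((∑ k ∈ range p, (k : ℚ_[p]) ^ j) / (p : ℚ_[p])) (β j) := by
  have hp0 : (p : ℚ_[p]) ≠ 0 := by exact_mod_cast (Fact.out : p.Prime).ne_zero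
  have hne := natCast_zmod_ne_zero (p := p) (k := j + 1) (by omega) (by omega)
  have key : HasResidue (∑ l ∈ range (j + 1),
      ((bernoulli l : ℚ) : ℚ_[p]) * ((j + 1).choose l : ℚ_[p]) * (p : ℚ_[p]) ^ (j - l)
        / ((j + 1 : ℕ) : ℚ_[p]))
      (∑ l ∈ range (j + 1), β l * ((j + 1).choose l : ZMod p) * 0 ^ (j - l)
        / ((j + 1 : ℕ) : ZMod p)) := by
    refine HasResidue.sum fun l hl => ?_
    rw [mem_range] at hl
    exact (((hβ l (by omega)).mul (HasResidue.natCast _)).mul (HasResidue.prime.pow _)).div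
      (HasResidue.natCast _) hne
  refine key.congr ?_ ?_
  · rw [sum_range_pow_padic, sum_div]
    refine sum_congr rfl fun l hl => ?_
    rw [mem_range] at hl
    rw [show j + 1 - l = j - l + 1 by omega, pow_succ]
    field_simp
  · rw [sum_range_succ, sum_eq_zero]
    · rw [Nat.choose_succ_self_right]
      simp only [Nat.sub_self, pow_zero, mul_one, zero_add]
      field_simp
    · intro l hl
      rw [mem_range] at hl
      rw [zero_pow (by omega)]
      simp

/-- `∑_{k<p} kᵖ⁻¹ ≡ p B_{p-1} (mod p²)`. -/
lemma hasResidue_sum_pow_card_sub_one (hp3 : 3 ≤ p)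
    (hβ : ∀ k, k + 2 ≤ p → HasResidue ((bernoulli k : ℚ) : ℚ_[p]) (β k)) :
    HasResidue ((∑ k ∈ range p, (k : ℚ_[p]) ^ (p - 1)
      - (p : ℚ_[p]) * ((bernoulli (p - 1) : ℚ) : ℚ_[p])) / (p : ℚ_[p])) 0 := by
  have hp0 : (p : ℚ_[p]) ≠ 0 := by exact_mod_cast (Fact.out : p.Prime).ne_zero
  have key : HasResidue (∑ l ∈ range (p - 1),
      ((bernoulli l : ℚ) : ℚ_[p]) * (p.choose l : ℚ_[p]) * (p : ℚ_[p]) ^ (p - 2 - l))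
      (∑ l ∈ range (p - 1), β l * (p.choose l : ZMod p) * 0 ^ (p - 2 - l)) := by
    refine HasResidue.sum fun l hl => ?_
    rw [mem_range] at hl
    exact ((hβ l (by omega)).mul (HasResidue.natCast _)).mul (HasResidue.prime.pow _)
  refine key.congr ?_ ?_
  · rw [sum_range_pow_padic, sum_range_succ, show p - 1 + 1 = p by omega]
    have hlast : ((bernoulli (p - 1) : ℚ) : ℚ_[p]) * (p.choose (p - 1) : ℚ_[p])
        * (p : ℚ_[p]) ^ (p - (p - 1)) / (p : ℚ_[p])
        = (p : ℚ_[p]) * ((bernoulli (p - 1) : ℚ) : ℚ_[p]) := by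
      have hch : p.choose (p - 1) = p := by
        have := Nat.choose_succ_self_right (p - 1)
        rwa [show p - 1 + 1 = p by omega] at this
      rw [hch, show p - (p - 1) = 1 by omega]
      field_simp
    rw [hlast, add_sub_cancel_right, sum_div]
    refine sum_congr rfl fun l hl => ?_
    rw [mem_range] at hl
    rw [show p - l = p - 2 - l + 2 by omega, pow_add]
    field_simp
  · refine sum_eq_zero fun l hl => ?_
    rw [mem_range] at hl
    rcases Nat.eq_zero_or_pos l with rfl | h
    · rw [zero_pow (by omega), mul_zero]
    · rw [(ZMod.natCast_eq_zero_iff _ _).mpr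
        ((Fact.out : p.Prime).dvd_choose_self (by omega) (by omega)), mul_zero, zero_mul]

lemma sum_zmod_eq_sum_range {M : Type*} [AddCommMonoid M] (f : ZMod p → M) :
    ∑ a, f a = ∑ k ∈ range p, f (k : ZMod p) := by
  refine sum_bij' (fun a _ => a.val) (fun k _ => (k : ZMod p)) ?_ ?_ ?_ ?_ ?_
  · intro a _; exact mem_range.mpr (ZMod.val_lt a)
  · intro k _; exact mem_univ _
  · intro a _; exact ZMod.natCast_zmod_val a
  · intro k hk; exact ZMod.val_cast_of_lt (mem_range.mp hk)
  · intro a _; rw [ZMod.natCast_zmod_val]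

lemma sum_zmod_eq_sum_Ico {M : Type*} [AddCommMonoid M] (f : ZMod p → M) (h0 : f 0 = 0) :
    ∑ a, f a = ∑ k ∈ Ico 1 p, f (k : ZMod p) := by
  rw [sum_zmod_eq_sum_range, ← Nat.Ico_zero_eq_range,
    sum_eq_sum_Ico_succ_bot (Fact.out : p.Prime).pos]
  simp [h0]

lemma sum_range_eq_sum_zmod_val {M : Type*} [AddCommMonoid M] (f : ℕ → M) :
    ∑ k ∈ range p, f k = ∑ a : ZMod p, f a.val := by
  rw [sum_zmod_eq_sum_range]
  refine sum_congr rfl fun k hk => ?_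
  rw [ZMod.val_cast_of_lt (mem_range.mp hk)]

lemma harmZMod_eq_sum_range (hp3 : 3 ≤ p) {k : ℕ} (h1 : 1 ≤ k) (h2 : k ≤ p) :
    harmZMod p (k - 1) = ∑ i ∈ range k, (i : ZMod p) ^ (p - 2) := by
  rw [← Nat.Ico_zero_eq_range, sum_eq_sum_Ico_succ_bot (by omega), Nat.cast_zero,
    zero_pow (by omega), zero_add, harmZMod]
  refine sum_congr ?_ fun i hi => ?_
  · ext i; simp only [mem_Icc, mem_Ico]; omega
  · rw [mem_Ico] at hi
    have hne := natCast_zmod_ne_zero (p := p) (k := i) hi.1 (by omega)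
    have := ZMod.pow_card_sub_one_eq_one hne
    rw [show p - 1 = p - 2 + 1 by omega, pow_succ] at this
    exact (eq_inv_of_mul_eq_one_left this).symm

lemma sum_pow_mul_harmZMod (hp3 : 3 ≤ p)
    (hβ : ∀ k, k + 2 ≤ p → HasResidue ((bernoulli k : ℚ) : ℚ_[p]) (β k)) {j : ℕ}
    (hj : j + 2 ≤ p) :
    ∑ k ∈ Ico 1 p, (k : ZMod p) ^ j * harmZMod p (k - 1) = (-1) ^ j * β j := by
  have hcast : ((p - 2 + 1 : ℕ) : ZMod p) = -1 := by
    rw [show p - 2 + 1 = p - 1 by omega, Nat.cast_sub (by omega)]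
    simp
  have h1 : ∀ k ∈ Ico 1 p, (k : ZMod p) ^ j * harmZMod p (k - 1) = ∑ l ∈ range (p - 1),
      -(β l * ((p - 1).choose l : ZMod p)) * (k : ZMod p) ^ (j + (p - 1 - l)) := by
    intro k hk
    rw [mem_Ico] at hk
    rw [harmZMod_eq_sum_range hp3 hk.1 (by omega), sum_range_pow_zmod hβ k (by omega), hcast,
      show p - 2 + 1 = p - 1 by omega, mul_sum]
    refine sum_congr rfl fun l _ => ?_
    rw [pow_add, div_neg, div_one]
    ring
  rw [sum_congr rfl h1, sum_comm, sum_eq_single j]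
  · rw [← mul_sum, ← sum_zmod_eq_sum_Ico (fun a => a ^ (j + (p - 1 - j)))
      (zero_pow (by omega)), sum_zmod_pow_of_dvd (by rw [show j + (p - 1 - j) = p - 1 by omega])
      (by omega)]
    obtain ⟨c, hc, -⟩ := neg_one_pow_mul_choose_expansion (p := p) (k := j) (by omega)
    have := congrArg PadicInt.toZMod hc
    simp only [map_mul, map_pow, map_neg, map_one, map_natCast, map_add, ZMod.natCast_self,
      zero_mul, add_zero] at this
    have hsq : ((-1 : ZMod p) ^ j) * (-1) ^ j = 1 := by rw [← mul_pow]; simp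
    linear_combination (-1) ^ j * β j * this - ((p - 1).choose j : ZMod p) * β j * hsq
  · intro l hl hlj
    rw [mem_range] at hl
    rw [← mul_sum, ← sum_zmod_eq_sum_Ico (fun a => a ^ (j + (p - 1 - l)))
      (zero_pow (by omega)), sum_zmod_pow_eq_zero, mul_zero]
    rintro ⟨c, hc⟩
    rcases c with _ | _ | c
    · omega
    · omega
    · have : (p - 1) * (c + 1 + 1) ≥ (p - 1) * 2 := Nat.mul_le_mul_left _ (by omega)
      omega
  · intro h
    exact absurd (mem_range.mpr (by omega)) h

end Reduction

section Expansions

lemma one_add_mul_pow {R : Type*} [CommRing R] (x y : R) (n : ℕ) :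
    ∃ z, (1 + x * y) ^ n = 1 + n * (x * y) + x ^ 2 * z := by
  induction n with
  | zero => exact ⟨0, by simp⟩
  | succ n ih =>
    obtain ⟨z, hz⟩ := ih
    refine ⟨z + n * y ^ 2 + x * y * z, ?_⟩
    rw [pow_succ, hz]
    push_cast
    ring

lemma prod_one_add_mul {R ι : Type*} [CommRing R] (x : R) (s : Finset ι) (t : ι → R) :
    ∃ z, ∏ i ∈ s, (1 + x * t i) = 1 + x * ∑ i ∈ s, t i + x ^ 2 * z := by
  classical
  induction s using Finset.induction_on with
  | empty => exact ⟨0, by simp⟩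
  | insert i s hi ih =>
    obtain ⟨z, hz⟩ := ih
    refine ⟨z + t i * ∑ i ∈ s, t i + x * t i * z, ?_⟩
    rw [prod_insert hi, sum_insert hi, hz]
    ring

variable {p : ℕ} [Fact p.Prime] {ω : ZMod p →*₀ ℤ_[p]}

lemma exists_eq_teichmuller_mul (hω : ∀ a, PadicInt.toZMod (ω a) = a) {x : ℤ_[p]}
    (hx : PadicInt.toZMod x ≠ 0) :
    ∃ t, x = ω (PadicInt.toZMod x) * (1 + p * t) := by
  obtain ⟨t, ht⟩ : (p : ℤ_[p]) ∣ x * ω (PadicInt.toZMod x)⁻¹ - 1 := by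
    rw [← PadicInt.toZMod_eq_zero_iff_dvd, map_sub, map_mul, hω, map_one, mul_inv_cancel₀ hx,
      sub_self]
  refine ⟨t, ?_⟩
  linear_combination ω (PadicInt.toZMod x) * ht - x * teichmuller_mul_inv (ω := ω) hx

lemma exists_val_eq_teichmuller_mul (hω : ∀ a, PadicInt.toZMod (ω a) = a) :
    ∃ t : ZMod p → ℤ_[p], t 0 = 0 ∧ ∀ a : ZMod p, (a.val : ℤ_[p]) = ω a * (1 + p * t a) := by
  have h : ∀ a : ZMod p, ∃ t : ℤ_[p], (a = 0 → t = 0) ∧ (a.val : ℤ_[p]) = ω a * (1 + p * t) := by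
    intro a
    by_cases ha : a = 0
    · exact ⟨0, fun _ => rfl, by simp [ha]⟩
    · have hv : PadicInt.toZMod (a.val : ℤ_[p]) = a := by simp
      obtain ⟨t, ht⟩ := exists_eq_teichmuller_mul hω (x := (a.val : ℤ_[p])) (by rwa [hv])
      rw [hv] at ht
      exact ⟨t, fun h => absurd h ha, ht⟩
  choose t ht0 ht using h
  exact ⟨t, ht0 0 rfl, ht⟩

variable {t : ZMod p → ℤ_[p]} {β : ℕ → ZMod p}

lemma sum_range_pow_expansion (ht : ∀ a : ZMod p, (a.val : ℤ_[p]) = ω a * (1 + p * t a)) (i : ℕ) :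
    ∃ z, ∑ k ∈ range p, (k : ℤ_[p]) ^ i
      = ∑ a, ω a ^ i + p * (i * ∑ a, ω a ^ i * t a) + p ^ 2 * z := by
  choose z hz using fun a => one_add_mul_pow (p : ℤ_[p]) (t a) i
  refine ⟨∑ a, ω a ^ i * z a, ?_⟩
  rw [sum_range_eq_sum_zmod_val]
  simp_rw [ht, mul_pow, hz, mul_sum, ← sum_add_distrib]
  refine sum_congr rfl fun a _ => ?_
  ring

lemma coe_sum_natCast_pow (s : Finset ℕ) (i : ℕ) :
    ((∑ k ∈ s, (k : ℤ_[p]) ^ i : ℤ_[p]) : ℚ_[p]) = ∑ k ∈ s, (k : ℚ_[p]) ^ i := by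
  rw [PadicInt.coe_sum]
  simp

lemma mul_sum_pow_mul_lift (hω : ∀ a, PadicInt.toZMod (ω a) = a)
    (ht : ∀ a : ZMod p, (a.val : ℤ_[p]) = ω a * (1 + p * t a))
    (hβ : ∀ k, k + 2 ≤ p → HasResidue ((bernoulli k : ℚ) : ℚ_[p]) (β k)) {i : ℕ}
    (hi1 : 1 ≤ i) (hi : i + 2 ≤ p) :
    (i : ZMod p) * ∑ a, a ^ i * PadicInt.toZMod (t a) = β i := by
  obtain ⟨z, hz⟩ := sum_range_pow_expansion ht i
  rw [sum_teichmuller_pow_eq_zero hω (fun h => by have := Nat.le_of_dvd hi1 h; omega)] at hz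
  have hp0 : (p : ℚ_[p]) ≠ 0 := by exact_mod_cast (Fact.out : p.Prime).ne_zero
  have h1 := (HasResidue.coe ((i : ℤ_[p]) * ∑ a, ω a ^ i * t a + (p : ℤ_[p]) * z)).congr
    (b := (i : ZMod p) * ∑ a, a ^ i * PadicInt.toZMod (t a))
    (y := (∑ k ∈ range p, (k : ℚ_[p]) ^ i) / (p : ℚ_[p])) ?_ ?_
  · exact h1.unique (hasResidue_sum_pow_div_prime hβ hi)
  · have := congrArg (fun x : ℤ_[p] => (x : ℚ_[p])) hz
    rw [coe_sum_natCast_pow] at this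
    push_cast at this ⊢
    rw [this]
    field_simp
    ring
  · simp [hω]

lemma hasResidue_prime_mul_bernoulli (hp3 : 3 ≤ p) (ht0 : t 0 = 0)
    (ht : ∀ a : ZMod p, (a.val : ℤ_[p]) = ω a * (1 + p * t a))
    (hβ : ∀ k, k + 2 ≤ p → HasResidue ((bernoulli k : ℚ) : ℚ_[p]) (β k)) :
    HasResidue (((p : ℚ_[p]) * ((bernoulli (p - 1) : ℚ) : ℚ_[p]) - (p : ℚ_[p]) + 1) / (p : ℚ_[p]))
      (-PadicInt.toZMod (∑ a, t a)) := by
  obtain ⟨z, hz⟩ := sum_range_pow_expansion ht (p - 1)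
  have hsum : ∑ a, ω a ^ (p - 1) * t a = ∑ a, t a := by
    refine sum_congr rfl fun a _ => ?_
    by_cases ha : a = 0
    · rw [ha, ht0, mul_zero]
    · rw [teichmuller_pow_card_sub_one ha, one_mul]
  rw [sum_teichmuller_pow_of_dvd dvd_rfl (by omega), hsum, Nat.cast_sub (by omega)] at hz
  have hp0 : (p : ℚ_[p]) ≠ 0 := by exact_mod_cast (Fact.out : p.Prime).ne_zero
  have h := (HasResidue.coe (((p : ℤ_[p]) - 1) * ∑ a, t a + (p : ℤ_[p]) * z)).sub
    (hasResidue_sum_pow_card_sub_one hp3 hβ)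
  refine h.congr ?_ (by simp)
  have := congrArg (fun x : ℤ_[p] => (x : ℚ_[p])) hz
  rw [coe_sum_natCast_pow] at this
  push_cast at this ⊢
  rw [this]
  field_simp
  ring

lemma factorial_card_sub_one_expansion (hω : ∀ a, PadicInt.toZMod (ω a) = a) (hodd : Odd p)
    (ht0 : t 0 = 0) (ht : ∀ a : ZMod p, (a.val : ℤ_[p]) = ω a * (1 + p * t a)) :
    ∃ w : ℤ_[p], ((p - 1).factorial : ℤ_[p]) = -(1 + p * w) ∧
      PadicInt.toZMod w = PadicInt.toZMod (∑ a, t a) := by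
  have hp1 := (Fact.out : p.Prime).one_le
  obtain ⟨z, hz⟩ := prod_one_add_mul (p : ℤ_[p]) (Ico 1 p) (fun k : ℕ => t (k : ZMod p))
  refine ⟨∑ a, t a + p * z, ?_, by simp⟩
  have hfac : ∏ k ∈ Ico 1 p, k = (p - 1).factorial := by
    have := prod_Ico_id_eq_factorial (p - 1)
    rwa [show p - 1 + 1 = p by omega] at this
  have hω1 : ∏ k ∈ Ico 1 p, ω (k : ZMod p) = -1 := by
    rw [← map_prod, ← Nat.cast_prod, hfac, ZMod.wilsons_lemma, teichmuller_neg_one hω hodd]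
  rw [← hfac, Nat.cast_prod]
  have hk : ∀ k ∈ Ico 1 p, (k : ℤ_[p]) = ω (k : ZMod p) * (1 + p * t (k : ZMod p)) := by
    intro k hk
    rw [← ht, ZMod.val_cast_of_lt (mem_Ico.mp hk).2]
  rw [prod_congr rfl hk, prod_mul_distrib, hω1, hz, sum_zmod_eq_sum_Ico t ht0]
  ring

lemma harmZMod_card_sub_two (hodd : Odd p) (hp3 : 3 ≤ p) : harmZMod p (p - 2) = 1 := by
  have h := harmZMod_card_sub_one hodd
  rw [show p - 1 = p - 2 + 1 by omega, harmZMod_succ, show p - 2 + 1 = p - 1 by omega,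
    Nat.cast_sub (by omega)] at h
  simp only [ZMod.natCast_self, Nat.cast_one, zero_sub, inv_neg, inv_one] at h
  linear_combination h

lemma jacobiProd_card_sub_two_expansion (hω : ∀ a, PadicInt.toZMod (ω a) = a) (hodd : Odd p)
    (hp3 : 3 ≤ p) (ht0 : t 0 = 0)
    (ht : ∀ a : ZMod p, (a.val : ℤ_[p]) = ω a * (1 + p * t a)) :
    ∃ d : ℤ_[p], jacobiProd ω (p - 2) = 1 + p * d ∧
      PadicInt.toZMod d = 1 + PadicInt.toZMod (∑ a, t a) := by
  obtain ⟨w, hw, hw'⟩ := factorial_card_sub_one_expansion hω hodd ht0 ht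
  obtain ⟨c, hc, hc'⟩ := jacobiProd_expansion hω hodd hp3 (s := p - 2) (by omega) le_rfl
  rw [harmZMod_card_sub_two hodd hp3, mul_one, sub_self, mul_zero] at hc'
  have hodd2 : Odd (p - 2) := Nat.Odd.sub_even (by omega) hodd even_two
  rw [hodd2.neg_one_pow] at hc
  have hfac : ((p - 1).factorial : ℤ_[p]) = ((p : ℤ_[p]) - 1) * ((p - 2).factorial : ℤ_[p]) := by
    rw [show p - 1 = p - 2 + 1 by omega, Nat.factorial_succ, show p - 2 + 1 = p - 1 by omega,
      Nat.cast_mul, Nat.cast_sub (by omega), Nat.cast_one]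
  have hJ : jacobiProd ω (p - 2)
      = 1 + p * (jacobiProd ω (p - 2) + w - c * ((p : ℤ_[p]) - 1)) := by
    linear_combination ((p : ℤ_[p]) - 1) * hc + hfac - hw
  refine ⟨_, hJ, ?_⟩
  have hJ' := congrArg PadicInt.toZMod hJ
  rw [map_add, map_mul, toZMod_prime, zero_mul, add_zero, map_one] at hJ'
  rw [map_sub, map_add, hJ', hw', map_mul, hc', zero_mul, sub_zero]

end Expansions

section Fourier

variable {p : ℕ} [Fact p.Prime] {ω : ZMod p →*₀ ℤ_[p]}

lemma sum_Ico_teichmuller_pow (hω : ∀ a, PadicInt.toZMod (ω a) = a) (hp3 : 3 ≤ p) (x : ZMod p) :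
    ∑ j ∈ Ico 1 (p - 1), ω x ^ j
      = (if x = 1 then (p : ℤ_[p]) - 1 else 0) + (if x = 0 then 1 else 0) - 1 := by
  by_cases h0 : x = 0
  · subst h0
    rw [sum_eq_zero]
    · simp
    · intro j hj
      rw [mem_Ico] at hj
      rw [map_zero, zero_pow (by omega)]
  by_cases h1 : x = 1
  · subst h1
    simp only [map_one, one_pow, sum_const, Nat.card_Ico, nsmul_eq_mul, mul_one, if_true,
      if_neg h0]
    rw [show p - 1 - 1 = p - 2 by omega, Nat.cast_sub (by omega)]
    push_cast
    ring
  · have hg : (∑ j ∈ range (p - 1), ω x ^ j) * (ω x - 1) = 0 := by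
      rw [geom_sum_mul, teichmuller_pow_card_sub_one h0, sub_self]
    have hne : ω x - 1 ≠ 0 := fun h => h1 (by
      have := congrArg PadicInt.toZMod h
      rw [map_sub, hω, map_one, map_zero] at this
      exact sub_eq_zero.mp this)
    have hs := (mul_eq_zero.mp hg).resolve_right hne
    rw [← Nat.Ico_zero_eq_range, sum_eq_sum_Ico_succ_bot (by omega), pow_zero] at hs
    rw [if_neg h0, if_neg h1]
    linear_combination hs

/-- Fourier expansion of a function on `ℤ/p` orthogonal to the trivial character. -/
lemma exists_teichmuller_expansion (hω : ∀ a, PadicInt.toZMod (ω a) = a) (hp3 : 3 ≤ p)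
    {f : ZMod p → ℤ_[p]} (hf0 : f 0 = 0) (hf : ∑ a, f a = 0) :
    ∃ e : ℕ → ℤ_[p], (∀ a, f a = ∑ j ∈ Ico 1 (p - 1), e j * ω a⁻¹ ^ j) ∧
      ∀ j, PadicInt.toZMod (e j) = -∑ b, PadicInt.toZMod (f b) * b ^ j := by
  have hr : PadicInt.toZMod ((p : ℤ_[p]) - 1) = -1 := by simp
  obtain ⟨ν, hν, hν'⟩ := exists_mul_eq_one_of_toZMod_ne_zero (x := (p : ℤ_[p]) - 1)
    (by rw [hr]; simp)
  refine ⟨fun j => ν * ∑ b, f b * ω b ^ j, fun a => ?_, fun j => ?_⟩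
  · by_cases ha : a = 0
    · subst ha
      rw [hf0, sum_eq_zero]
      intro j hj
      rw [mem_Ico] at hj
      rw [inv_zero, map_zero, zero_pow (by omega), mul_zero]
    · have h1 : ∑ j ∈ Ico 1 (p - 1), (ν * ∑ b, f b * ω b ^ j) * ω a⁻¹ ^ j
          = ν * ∑ b, f b * ∑ j ∈ Ico 1 (p - 1), ω (b * a⁻¹) ^ j := by
        simp_rw [mul_sum, sum_mul]
        rw [sum_comm]
        refine sum_congr rfl fun b _ => sum_congr rfl fun j _ => ?_
        rw [map_mul, mul_pow]
        ring
      have h2 : ∀ b, f b * ∑ j ∈ Ico 1 (p - 1), ω (b * a⁻¹) ^ j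
          = (if b = a then f b * ((p : ℤ_[p]) - 1) else 0) - f b := by
        intro b
        rw [sum_Ico_teichmuller_pow hω hp3]
        have e1 : b * a⁻¹ = 1 ↔ b = a := by rw [mul_inv_eq_one₀ ha]
        have e2 : b * a⁻¹ = 0 ↔ b = 0 := by simp [ha]
        simp only [e1, e2]
        by_cases hb : b = 0
        · simp [hb, hf0]
        · rw [if_neg hb]
          split_ifs <;> ring
      rw [h1, sum_congr rfl fun b _ => h2 b, sum_sub_distrib, hf, sum_ite_eq' univ a,
        if_pos (mem_univ _)]
      linear_combination -f a * hν
  · rw [map_mul, hν', hr, map_sum, inv_neg, inv_one, neg_one_mul]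
    simp [hω]

lemma fermatCoeff_zero : fermatCoeff p 0 = 0 := by
  rw [fermatCoeff, Nat.choose_zero_right, Nat.div_eq_of_lt (Fact.out : p.Prime).one_lt]
  simp

lemma sum_fermatCoeff (hodd : Odd p) : ∑ k ∈ Ico 1 p, fermatCoeff p k = 0 := by
  have h := one_sub_pow_prime hodd (1 : ℤ)
  have hp := (Fact.out : p.Prime).ne_zero
  rw [sub_self, zero_pow hp] at h
  simp only [one_pow, sub_self, zero_sub, mul_one, Int.cast_id] at h
  have := neg_eq_zero.mp h.symm
  exact (mul_eq_zero.mp this).resolve_left (by exact_mod_cast hp)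

variable {t : ZMod p → ℤ_[p]} {β : ℕ → ZMod p}

lemma fermatCoeff_expansion (hω : ∀ a, PadicInt.toZMod (ω a) = a) (hodd : Odd p) (hp3 : 3 ≤ p)
    (ht : ∀ a : ZMod p, (a.val : ℤ_[p]) = ω a * (1 + p * t a)) :
    ∃ D : ZMod p → ℤ_[p], D 0 = 0 ∧ ∑ a, D a = 0 ∧
      (∀ a : ZMod p, (fermatCoeff p a.val : ℤ_[p]) = ω a⁻¹ + p * D a) ∧
      ∀ a, PadicInt.toZMod (D a)
        = a⁻¹ * (-harmZMod p (a.val - 1) - PadicInt.toZMod (t a)) := by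
  have h : ∀ a : ZMod p, ∃ d : ℤ_[p], (a = 0 → d = 0) ∧
      (fermatCoeff p a.val : ℤ_[p]) = ω a⁻¹ + p * d ∧
      PadicInt.toZMod d = a⁻¹ * (-harmZMod p (a.val - 1) - PadicInt.toZMod (t a)) := by
    intro a
    by_cases ha : a = 0
    · exact ⟨0, fun _ => rfl, by simp [ha, fermatCoeff_zero], by simp [ha]⟩
    · have hv1 : 1 ≤ a.val := Nat.one_le_iff_ne_zero.mpr (by simpa [ZMod.val_eq_zero] using ha)
      obtain ⟨c, hc, hc'⟩ := mul_fermatCoeff hv1 (ZMod.val_lt a)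
      refine ⟨ω a⁻¹ * c - fermatCoeff p a.val * t a, fun h => absurd h ha, ?_, ?_⟩
      · have h1 := ht a
        have h2 := teichmuller_mul_inv (ω := ω) ha
        linear_combination ω a⁻¹ * hc - ω a⁻¹ * fermatCoeff p a.val * h1
          - fermatCoeff p a.val * (1 + p * t a) * h2
      · rw [map_sub, map_mul, map_mul, hω, hc', map_intCast,
          fermatCoeff_zmod hv1 (ZMod.val_lt a), ZMod.natCast_zmod_val]
        ring
  choose D hD0 hD hD' using h
  refine ⟨D, hD0 0 rfl, ?_, hD, hD'⟩
  have h1 : ∑ a : ZMod p, (fermatCoeff p a.val : ℤ_[p]) = 0 := by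
    have h2 : ∑ k ∈ range p, (fermatCoeff p k : ℤ_[p]) = 0 := by
      rw [← Nat.Ico_zero_eq_range, sum_eq_sum_Ico_succ_bot (by omega), fermatCoeff_zero,
        ← Int.cast_sum, sum_fermatCoeff hodd]
      simp
    rw [← sum_range_eq_sum_zmod_val (fun k => (fermatCoeff p k : ℤ_[p])), h2]
  have h3 : ∑ a : ZMod p, ω a⁻¹ = 0 := by
    have := sum_teichmuller_inv_pow (ω := ω) 1
    rw [sum_teichmuller_pow_eq_zero hω (fun h => by
      have := Nat.le_of_dvd one_pos h; omega)] at this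
    simpa using this
  simp_rw [hD] at h1
  rw [sum_add_distrib, h3, zero_add, ← mul_sum] at h1
  exact (mul_eq_zero.mp h1).resolve_left padicInt_prime_ne_zero

lemma residue_zero_eq_one (hp3 : 3 ≤ p)
    (hβ : ∀ k, k + 2 ≤ p → HasResidue ((bernoulli k : ℚ) : ℚ_[p]) (β k)) : β 0 = 1 :=
  (hβ 0 (by omega)).unique (by simpa using HasResidue.one)

lemma residue_eq_zero_of_odd
    (hβ : ∀ k, k + 2 ≤ p → HasResidue ((bernoulli k : ℚ) : ℚ_[p]) (β k)) {k : ℕ}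
    (hk : k + 2 ≤ p) (hk1 : 1 < k) (hodd : Odd k) : β k = 0 :=
  (hβ k hk).unique (by simpa [bernoulli_eq_zero_of_odd hodd hk1] using HasResidue.zero)

/-- Fourier expansion of `fermatCoeff` in powers of `ω⁻¹`, with the coefficients given modulo `p`
in terms of Bernoulli numbers. -/
lemma exists_fermatCoeff_fourier (hω : ∀ a, PadicInt.toZMod (ω a) = a) (hodd : Odd p)
    (hp3 : 3 ≤ p) (ht0 : t 0 = 0)
    (ht : ∀ a : ZMod p, (a.val : ℤ_[p]) = ω a * (1 + p * t a))
    (hβ : ∀ k, k + 2 ≤ p → HasResidue ((bernoulli k : ℚ) : ℚ_[p]) (β k)) :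
    ∃ e : ℕ → ℤ_[p],
      (∀ a : ZMod p, (fermatCoeff p a.val : ℤ_[p])
        = ω a⁻¹ + p * ∑ j ∈ Ico 1 (p - 1), e j * ω a⁻¹ ^ j) ∧
      PadicInt.toZMod (e 1) = 1 + PadicInt.toZMod (∑ a, t a) ∧
      (4 ≤ p → PadicInt.toZMod (e 2) = 0) ∧
      ∀ k, 2 ≤ k → k + 3 ≤ p →
        PadicInt.toZMod (e (k + 1)) = ((k + 1 : ℕ) : ZMod p) * β k / (k : ZMod p) := by
  obtain ⟨D, hD0, hDs, hD, hD'⟩ := fermatCoeff_expansion hω hodd hp3 ht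
  obtain ⟨e, he, he'⟩ := exists_teichmuller_expansion hω hp3 hD0 hDs
  have hres : ∀ i, i + 2 ≤ p → PadicInt.toZMod (e (i + 1))
      = (-1) ^ i * β i + ∑ k ∈ Ico 1 p, (k : ZMod p) ^ i * PadicInt.toZMod (t k) := by
    intro i hi
    rw [he', sum_zmod_eq_sum_Ico _ (by rw [zero_pow (by omega), mul_zero]),
      ← sum_pow_mul_harmZMod hp3 hβ hi, ← sum_add_distrib, ← sum_neg_distrib]
    refine sum_congr rfl fun k hk => ?_
    rw [mem_Ico] at hk
    have hne := natCast_zmod_ne_zero (p := p) hk.1 hk.2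
    rw [hD', ZMod.val_cast_of_lt hk.2, pow_succ]
    field_simp
    ring
  have hmul : ∀ i, 1 ≤ i → i + 2 ≤ p → (i : ZMod p) * PadicInt.toZMod (e (i + 1))
      = ((-1) ^ i * i + 1) * β i := by
    intro i hi1 hi
    have := mul_sum_pow_mul_lift hω ht hβ hi1 hi
    rw [sum_zmod_eq_sum_Ico _ (by rw [zero_pow (by omega), zero_mul])] at this
    rw [hres i hi]
    linear_combination this
  refine ⟨e, fun a => by rw [hD, he], ?_, ?_, ?_⟩
  · rw [hres 0 (by omega), residue_zero_eq_one hp3 hβ, map_sum,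
      sum_zmod_eq_sum_Ico _ (by rw [ht0, map_zero])]
    simp
  · intro hp4
    have := hmul 1 le_rfl (by omega)
    simpa using this
  · intro k hk hkp
    have hne := natCast_zmod_ne_zero (p := p) (k := k) (by omega) (by omega)
    rw [eq_div_iff hne, mul_comm, hmul k (by omega) (by omega)]
    rcases Nat.even_or_odd k with h | h
    · rw [h.neg_one_pow]
      push_cast
      ring
    · rw [residue_eq_zero_of_odd hβ (by omega) (by omega) h]
      simp

end Fourier

section GroupRing

variable {p : ℕ} [Fact p.Prime] {ω : ZMod p →*₀ ℤ_[p]}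

/-- The canonical generator of the group ring `ℤ_[p][ℤ/p]`. -/
noncomputable def groupGen (p : ℕ) [Fact p.Prime] : AddMonoidAlgebra ℤ_[p] (ZMod p) :=
  AddMonoidAlgebra.single 1 1

/-- The element `∑ₖ (-1)ᵏ⁻¹ (binom(p,k) / p) [k]`. -/
noncomputable def fermatElt (p : ℕ) [Fact p.Prime] : AddMonoidAlgebra ℤ_[p] (ZMod p) :=
  groupRingOf fun a => (fermatCoeff p a.val : ℤ_[p])

lemma groupGen_pow (k : ℕ) : groupGen p ^ k = AddMonoidAlgebra.single (k : ZMod p) 1 := by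
  rw [groupGen, AddMonoidAlgebra.single_pow]
  simp

lemma coeff_intCast_mul_groupGen_pow (c : ℤ) (k : ℕ) (r : ZMod p) :
    ((c : AddMonoidAlgebra ℤ_[p] (ZMod p)) * groupGen p ^ k).coeff r
      = if (k : ZMod p) = r then (c : ℤ_[p]) else 0 := by
  classical
  have : (c : AddMonoidAlgebra ℤ_[p] (ZMod p)) * groupGen p ^ k
      = (c : ℤ_[p]) • groupGen p ^ k := by
    rw [Algebra.smul_def, map_intCast]
  rw [this, groupGen_pow, AddMonoidAlgebra.coeff_smul, AddMonoidAlgebra.coeff_single,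
    Finsupp.smul_apply, Finsupp.single_apply]
  simp

lemma coeff_one_sub_groupGen_pow (N : ℕ) (r : ZMod p) :
    ((1 - groupGen p) ^ N).coeff r
      = ∑ k ∈ range (N + 1), if (k : ZMod p) = r then ((-1) ^ k * N.choose k : ℤ_[p]) else 0 := by
  have : (1 - groupGen p) ^ N = ∑ k ∈ range (N + 1),
      (((-1) ^ k * N.choose k : ℤ) : AddMonoidAlgebra ℤ_[p] (ZMod p)) * groupGen p ^ k := by
    rw [sub_eq_neg_add, add_pow]
    refine sum_congr rfl fun k _ => ?_
    rw [neg_pow]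
    push_cast
    ring
  rw [this, AddMonoidAlgebra.coeff_sum, Finsupp.finsetSum_apply]
  refine sum_congr rfl fun k _ => ?_
  rw [coeff_intCast_mul_groupGen_pow]
  push_cast
  rfl

lemma one_sub_groupGen_pow_prime (hodd : Odd p) :
    (1 - groupGen p) ^ p = (-(p : ℤ_[p])) • fermatElt p := by
  rw [one_sub_pow_prime hodd, groupGen_pow]
  have h1 : (AddMonoidAlgebra.single ((p : ℕ) : ZMod p) 1 : AddMonoidAlgebra ℤ_[p] (ZMod p))
      = 1 := by
    rw [ZMod.natCast_self]; rfl
  have h2 : ∑ k ∈ Ico 1 p, (fermatCoeff p k : AddMonoidAlgebra ℤ_[p] (ZMod p)) * groupGen p ^ k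
      = fermatElt p := by
    ext r
    rw [AddMonoidAlgebra.coeff_sum, Finsupp.finsetSum_apply, fermatElt, coeff_groupRingOf]
    simp_rw [coeff_intCast_mul_groupGen_pow]
    by_cases hr : r = 0
    · subst hr
      rw [sum_eq_zero]
      · simp [fermatCoeff_zero]
      · intro k hk
        rw [mem_Ico] at hk
        rw [if_neg (natCast_zmod_ne_zero hk.1 hk.2)]
    · have hv1 : 1 ≤ r.val := Nat.one_le_iff_ne_zero.mpr (by simpa [ZMod.val_eq_zero] using hr)
      rw [sum_eq_single r.val]
      · rw [if_pos (ZMod.natCast_zmod_val r)]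
      · intro k hk hkr
        rw [mem_Ico] at hk
        refine if_neg fun h => hkr ?_
        rw [← h, ZMod.val_cast_of_lt hk.2]
      · intro h
        exact absurd (mem_Ico.mpr ⟨hv1, ZMod.val_lt r⟩) h
  rw [h1, h2, sub_self, zero_sub, neg_smul, Algebra.smul_def, map_natCast]

lemma toZMod_jacobiProd (hω : ∀ a, PadicInt.toZMod (ω a) = a) (hodd : Odd p) (hp3 : 3 ≤ p)
    {s : ℕ} (hs1 : 1 ≤ s) (hs2 : s ≤ p - 2) :
    PadicInt.toZMod (jacobiProd ω s) = -((-1) ^ s * (s.factorial : ZMod p)) := by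
  obtain ⟨c, hc, -⟩ := jacobiProd_expansion hω hodd hp3 hs1 hs2
  have h := congrArg PadicInt.toZMod hc
  simp only [map_mul, map_pow, map_neg, map_one, map_add, map_natCast, ZMod.natCast_self,
    zero_mul, add_zero] at h
  have hsq : ((-1 : ZMod p) ^ s) * (-1) ^ s = 1 := by rw [← mul_pow]; simp
  linear_combination (-1) ^ s * h - PadicInt.toZMod (jacobiProd ω s) * hsq

lemma toZMod_coeff_gaussElt_pow (hω : ∀ a, PadicInt.toZMod (ω a) = a) (hodd : Odd p)
    (hp3 : 3 ≤ p) {i : ℕ} (hi : 1 ≤ i) {r : ZMod p} (hr : r ≠ 0) :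
    PadicInt.toZMod ((gaussElt ω 1 ^ i).coeff r)
      = -((-1) ^ i * (i.factorial : ZMod p) * r⁻¹ ^ i) := by
  rcases lt_or_ge i p with hip | hip
  · rcases Nat.lt_or_ge i (p - 1) with h | h
    · rw [gaussElt_one_pow hω hodd hi (by omega), AddMonoidAlgebra.coeff_smul,
        Finsupp.smul_apply, smul_eq_mul, map_mul, toZMod_jacobiProd hω hodd hp3 hi (by omega),
        gaussElt, coeff_groupRingOf, map_pow, hω]
      ring
    · obtain rfl : i = p - 1 := by omega
      have hfac : ((p - 1).factorial : ZMod p) = -((p - 2).factorial : ZMod p) := by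
        rw [show p - 1 = p - 2 + 1 by omega, Nat.factorial_succ, show p - 2 + 1 = p - 1 by omega,
          Nat.cast_mul, Nat.cast_sub (by omega)]
        simp
      have hev : Even (p - 1) := Nat.Odd.sub_odd hodd odd_one
      have hodd2 : Odd (p - 2) := Nat.Odd.sub_even (by omega) hodd even_two
      have hone : (1 : AddMonoidAlgebra ℤ_[p] (ZMod p)).coeff r = 0 := by
        classical
        rw [AddMonoidAlgebra.one_def, AddMonoidAlgebra.coeff_single, Finsupp.single_apply,
          if_neg (Ne.symm hr)]
      rw [gaussElt_one_pow_card_sub_one hω hodd hp3, AddMonoidAlgebra.coeff_smul,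
        AddMonoidAlgebra.coeff_sub, AddMonoidAlgebra.coeff_smul, Finsupp.smul_apply,
        Finsupp.sub_apply, Finsupp.smul_apply, hone, coeff_groupRingOf, hfac,
        ZMod.pow_card_sub_one_eq_one (inv_ne_zero hr), hev.neg_one_pow, smul_zero, sub_zero,
        smul_eq_mul, mul_one, toZMod_jacobiProd hω hodd hp3 (by omega) le_rfl,
        hodd2.neg_one_pow]
      ring
  · rw [(ZMod.natCast_eq_zero_iff _ _).mpr ((Fact.out : p.Prime).dvd_factorial.mpr hip),
      ← Nat.sub_add_cancel hip, pow_add, gaussElt_one_pow_card hω hodd hp3, mul_smul_comm,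
      AddMonoidAlgebra.coeff_smul, Finsupp.smul_apply, smul_eq_mul, map_mul, map_mul, map_neg,
      toZMod_prime]
    simp

variable {t : ZMod p → ℤ_[p]} {β : ℕ → ZMod p}

lemma exists_fermatElt_eq_gaussElt_mul (hω : ∀ a, PadicInt.toZMod (ω a) = a) (hodd : Odd p)
    (hp3 : 3 ≤ p) {e : ℕ → ℤ_[p]}
    (he : ∀ a : ZMod p, (fermatCoeff p a.val : ℤ_[p])
        = ω a⁻¹ + p * ∑ j ∈ Ico 1 (p - 1), e j * ω a⁻¹ ^ j) :
    ∃ E : AddMonoidAlgebra ℤ_[p] (ZMod p),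
      fermatElt p = gaussElt ω 1 * (1 + (p : AddMonoidAlgebra ℤ_[p] (ZMod p)) * E) ∧
      ∀ s, 1 ≤ s → ∀ r : ZMod p, r ≠ 0 → PadicInt.toZMod ((gaussElt ω 1 ^ s * E).coeff r)
        = -((-1) ^ s * r⁻¹ ^ s * ∑ k ∈ range (p - 2), PadicInt.toZMod (e (k + 1))
            * ((s + k).factorial : ZMod p) / ((k + 1).factorial : ZMod p) * r⁻¹ ^ k) := by
  have hfac : ∀ j, j < p → (j.factorial : ZMod p) ≠ 0 := by
    intro j hj
    rw [Ne, ZMod.natCast_eq_zero_iff, (Fact.out : p.Prime).dvd_factorial]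
    omega
  have hy : ∀ j, 1 ≤ j → j ≤ p - 2 → ∃ y, jacobiProd ω j * y = 1 ∧
      PadicInt.toZMod y = (-((-1) ^ j * (j.factorial : ZMod p)))⁻¹ := by
    intro j h1 h2
    obtain ⟨y, hy, hy'⟩ := exists_mul_eq_one_of_toZMod_ne_zero (x := jacobiProd ω j) (by
      rw [toZMod_jacobiProd hω hodd hp3 h1 h2]
      exact neg_ne_zero.mpr (mul_ne_zero (pow_ne_zero _ (by simp)) (hfac j (by omega))))
    exact ⟨y, hy, by rw [hy', toZMod_jacobiProd hω hodd hp3 h1 h2]⟩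
  choose! y hy hy' using hy
  refine ⟨∑ j ∈ Ico 1 (p - 1), (e j * y j) • gaussElt ω 1 ^ (j - 1), ?_, ?_⟩
  · have h1 : gaussElt ω 1 * ∑ j ∈ Ico 1 (p - 1), (e j * y j) • gaussElt ω 1 ^ (j - 1)
        = ∑ j ∈ Ico 1 (p - 1), e j • gaussElt ω j := by
      rw [mul_sum]
      refine sum_congr rfl fun j hj => ?_
      rw [mem_Ico] at hj
      rw [mul_smul_comm, ← pow_succ', show j - 1 + 1 = j by omega,
        gaussElt_one_pow hω hodd hj.1 (by omega), smul_smul,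
        show e j * y j * jacobiProd ω j = e j by
          linear_combination e j * hy j hj.1 (by omega)]
    rw [mul_add, mul_one, mul_left_comm, h1]
    have h2 : ∀ x : AddMonoidAlgebra ℤ_[p] (ZMod p),
        (p : AddMonoidAlgebra ℤ_[p] (ZMod p)) * x = (p : ℤ_[p]) • x := by
      intro x
      rw [Algebra.smul_def, map_natCast]
    rw [h2]
    ext a
    rw [fermatElt, coeff_groupRingOf, he, AddMonoidAlgebra.coeff_add, Finsupp.add_apply,
      AddMonoidAlgebra.coeff_smul, Finsupp.smul_apply, AddMonoidAlgebra.coeff_sum,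
      Finsupp.finsetSum_apply]
    simp [gaussElt]
  · intro s hs r hr
    rw [mul_sum, AddMonoidAlgebra.coeff_sum, Finsupp.finsetSum_apply, map_sum,
      sum_Ico_eq_sum_range, mul_sum, ← sum_neg_distrib]
    refine sum_congr (by rw [show p - 1 - 1 = p - 2 by omega]) fun k hk => ?_
    rw [mem_range] at hk
    have hf := hfac (k + 1) (by omega)
    have hsq : ((-1 : ZMod p) ^ k) * (-1) ^ k = 1 := by rw [← mul_pow]; simp
    rw [show 1 + k = k + 1 by ring, Nat.add_sub_cancel, mul_smul_comm, ← pow_add,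
      AddMonoidAlgebra.coeff_smul, Finsupp.smul_apply, smul_eq_mul, map_mul, map_mul,
      toZMod_coeff_gaussElt_pow hω hodd hp3 (by omega) hr, hy' (k + 1) (by omega) (by omega),
      show -((-1 : ZMod p) ^ (k + 1) * ((k + 1).factorial : ZMod p))
        = (-1) ^ k * ((k + 1).factorial : ZMod p) by ring, mul_inv,
      show ((-1 : ZMod p) ^ k)⁻¹ = (-1) ^ k from inv_eq_of_mul_eq_one_left hsq, pow_add, pow_add]
    linear_combination (-(PadicInt.toZMod (e (k + 1)) * ((k + 1).factorial : ZMod p)⁻¹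
      * (-1) ^ s * ((s + k).factorial : ZMod p) * (r⁻¹ ^ s * r⁻¹ ^ k))) * hsq

lemma sum_fourier_eq_bernoulli_sum (hodd : Odd p) (hp3 : 3 ≤ p)
    (hβ : ∀ k, k + 2 ≤ p → HasResidue ((bernoulli k : ℚ) : ℚ_[p]) (β k))
    {e : ℕ → ZMod p} {w : ZMod p} (he1 : e 1 = 1 + w) (he2 : 4 ≤ p → e 2 = 0)
    (he : ∀ k, 2 ≤ k → k + 3 ≤ p → e (k + 1) = ((k + 1 : ℕ) : ZMod p) * β k / (k : ZMod p))
    {s : ℕ} (hs1 : 1 ≤ s) (hs2 : s ≤ p - 2) (r : ZMod p) :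
    ∑ k ∈ range (p - 2), e (k + 1) * ((s + k).factorial : ZMod p)
        / ((k + 1).factorial : ZMod p) * r⁻¹ ^ k
      = s.factorial * (1 + w + ∑ k ∈ Icc 2 (p - s - 1),
          ((s + k).choose s : ZMod p) * β k / ((k : ZMod p) * r ^ k)) := by
  have hterm : ∀ k ∈ Ico 2 (p - 2), e (k + 1) * ((s + k).factorial : ZMod p)
        / ((k + 1).factorial : ZMod p) * r⁻¹ ^ k
      = s.factorial * (((s + k).choose s : ZMod p) * β k / ((k : ZMod p) * r ^ k)) := by
    intro k hk
    rw [mem_Ico] at hk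
    have h1 := natCast_zmod_ne_zero (p := p) (k := k + 1) (by omega) (by omega)
    have h2 := natCast_zmod_ne_zero (p := p) (k := k) (by omega) (by omega)
    have h3 : (k.factorial : ZMod p) ≠ 0 := by
      rw [Ne, ZMod.natCast_eq_zero_iff, (Fact.out : p.Prime).dvd_factorial]
      omega
    have h4 : ((s + k).factorial : ZMod p)
        = ((s + k).choose s : ZMod p) * s.factorial * k.factorial := by
      rw [← Nat.add_choose_mul_factorial_mul_factorial s k, Nat.choose_symm_add]
      push_cast
      ring
    rw [he k hk.1 (by omega), h4, Nat.factorial_succ, Nat.cast_mul, inv_pow,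
      div_mul_eq_div_div _ (k : ZMod p) (r ^ k), div_eq_mul_inv _ (r ^ k)]
    generalize (r ^ k)⁻¹ = u
    field_simp
  have htail : ∑ k ∈ Ico 2 (p - 2), ((s + k).choose s : ZMod p) * β k / ((k : ZMod p) * r ^ k)
      = ∑ k ∈ Icc 2 (p - s - 1),
          ((s + k).choose s : ZMod p) * β k / ((k : ZMod p) * r ^ k) := by
    have hsub : Ico 2 (p - 2) ⊆ Icc 2 (p - 2) := Ico_subset_Icc_self
    have hsub' : Icc 2 (p - s - 1) ⊆ Icc 2 (p - 2) := Icc_subset_Icc_right (by omega)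
    rw [sum_subset hsub, ← sum_subset hsub']
    · intro k hk hk'
      rw [mem_Icc] at hk hk'
      have : (((s + k).choose s : ℕ) : ZMod p) = 0 := by
        rw [ZMod.natCast_eq_zero_iff]
        exact (Fact.out : p.Prime).dvd_choose_add (by omega) (by omega) (by omega)
      rw [this]
      simp
    · intro k hk hk'
      rw [mem_Icc] at hk
      rw [mem_Ico] at hk'
      obtain rfl : k = p - 2 := by omega
      rw [residue_eq_zero_of_odd hβ (by omega) (by omega)
        (Nat.Odd.sub_even (by omega) hodd even_two)]
      simp
  have h0 : e (0 + 1) * ((s + 0).factorial : ZMod p) / ((0 + 1).factorial : ZMod p) * r⁻¹ ^ 0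
      = s.factorial * (1 + w) := by
    rw [zero_add, he1]
    simp
    ring
  rw [← htail, mul_add, mul_sum, ← sum_congr rfl hterm, ← h0, ← Nat.Ico_zero_eq_range,
    sum_eq_sum_Ico_succ_bot (by omega)]
  congr 1
  rcases Nat.lt_or_ge p 4 with h | h
  · obtain rfl : p = 3 := by omega
    simp
  · have : p ≠ 4 := by rintro rfl; exact absurd hodd (by decide)
    rw [zero_add, sum_eq_sum_Ico_succ_bot (by omega), he2 h]
    simp

end GroupRing

section FleckQuotient

variable {p : ℕ}

lemma nLow_eq {n : ℕ} (hp3 : 3 ≤ p) (hn : 0 < n) : nLow p n = (n - 1) % (p - 1) + 1 := by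
  rw [nLow, show (n : ℤ) - 1 = ((n - 1 : ℕ) : ℤ) by omega,
    show (p : ℤ) - 1 = ((p - 1 : ℕ) : ℤ) by omega]
  norm_cast

lemma exists_eq_nLow_add {n : ℕ} (hp3 : 3 ≤ p) (hn : 0 < n) (h : ¬ (p - 1) ∣ n) :
    ∃ m, n = nLow p n + m * (p - 1) ∧ 1 ≤ nLow p n ∧ nLow p n ≤ p - 2 := by
  have hdm := Nat.div_add_mod (n - 1) (p - 1)
  have hlt := Nat.mod_lt (n - 1) (show p - 1 > 0 by omega)
  rw [nLow_eq hp3 hn]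
  refine ⟨(n - 1) / (p - 1), ?_, by omega, ?_⟩
  · rw [mul_comm]
    omega
  · by_contra hc
    refine h ⟨(n - 1) / (p - 1) + 1, ?_⟩
    rw [mul_add, mul_one]
    omega

lemma fdiv_eq {n s m : ℕ} (hp3 : 3 ≤ p) (hn : n = s + m * (p - 1)) (hs1 : 1 ≤ s)
    (hs2 : s ≤ p - 2) :
    Int.fdiv (((p * n : ℕ) : ℤ) - 1) ((p : ℤ) - 1) = ((n + m : ℕ) : ℤ) := by
  rw [Int.fdiv_eq_ediv_of_nonneg _ (by omega)]
  have hn' : (n : ℤ) = s + m * ((p : ℤ) - 1) := by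
    rw [hn]
    push_cast [Nat.cast_sub (show 1 ≤ p by omega)]
    ring
  have : ((p * n : ℕ) : ℤ) - 1 = ((s : ℤ) - 1) + ((n + m : ℕ) : ℤ) * ((p : ℤ) - 1) := by
    push_cast
    linear_combination hn'
  rw [this, Int.add_mul_ediv_right _ _ (by omega), Int.ediv_eq_zero_of_lt (by omega) (by omega),
    zero_add]

variable [Fact p.Prime] {ω : ZMod p →*₀ ℤ_[p]}

lemma Cp_cast (N : ℕ) (r : ℤ) :
    ((Cp p N r : ℚ) : ℚ_[p]) = (((1 - groupGen p) ^ N).coeff (r : ZMod p) : ℤ_[p]) := by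
  rw [coeff_one_sub_groupGen_pow, PadicInt.coe_sum, Cp, Rat.cast_sum]
  refine sum_congr rfl fun k _ => ?_
  have : ((k : ℤ) - r) % p = 0 ↔ (k : ZMod p) = (r : ZMod p) := by
    rw [← Int.dvd_iff_emod_eq_zero, ← ZMod.intCast_zmod_eq_zero_iff_dvd]
    push_cast
    rw [sub_eq_zero]
  simp only [this]
  split_ifs <;> push_cast <;> rfl

lemma Fp_cast (hω : ∀ a, PadicInt.toZMod (ω a) = a) (hodd : Odd p) (hp3 : 3 ≤ p)
    {E : AddMonoidAlgebra ℤ_[p] (ZMod p)}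
    (hE : fermatElt p = gaussElt ω 1 * (1 + (p : AddMonoidAlgebra ℤ_[p] (ZMod p)) * E))
    {n s m : ℕ} (hn : n = s + m * (p - 1)) (hs1 : 1 ≤ s) (hs2 : s ≤ p - 2) (r : ℤ) :
    ((Fp p (p * n) r : ℚ) : ℚ_[p]) = ((jacobiProd ω (p - 2) ^ m
      * (gaussElt ω 1 ^ s * (1 + (p : AddMonoidAlgebra ℤ_[p] (ZMod p)) * E) ^ n).coeff
          (r : ZMod p) : ℤ_[p]) : ℚ_[p]) := by
  have hp0 : (p : ℚ_[p]) ≠ 0 := by exact_mod_cast (Fact.out : p.Prime).ne_zero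
  have hN : p * n ≠ 0 := Nat.mul_ne_zero (by omega) (by omega)
  have hpow : (1 - groupGen p) ^ (p * n) = ((-(p : ℤ_[p])) ^ (n + m) * jacobiProd ω (p - 2) ^ m) •
      (gaussElt ω 1 ^ s * (1 + (p : AddMonoidAlgebra ℤ_[p] (ZMod p)) * E) ^ n) := by
    rw [pow_mul, one_sub_groupGen_pow_prime hodd, smul_pow, hE, mul_pow]
    have hT := gaussElt_one_pow_add_mul hω hodd hp3 hs1 m
    rw [← hn] at hT
    rw [hT, smul_mul_assoc, smul_smul, mul_pow, pow_add, mul_assoc]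
  rw [Fp, if_neg hN, add_zero, fdiv_eq hp3 hn hs1 hs2]
  push_cast
  rw [Cp_cast, hpow, AddMonoidAlgebra.coeff_smul, Finsupp.smul_apply, smul_eq_mul, zpow_neg]
  push_cast
  rw [← Nat.cast_add, zpow_natCast, mul_assoc,
    inv_mul_cancel_left₀ (pow_ne_zero _ (neg_ne_zero.mpr hp0))]

lemma mul_expansion {x₁ x₂ x₃ a : ℤ_[p]} :
    ∃ v, (1 + p * x₁) * (1 + p * x₂) * (-a + p * x₃) = -a + p * v ∧
      PadicInt.toZMod v = PadicInt.toZMod x₃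
        - PadicInt.toZMod a * (PadicInt.toZMod x₁ + PadicInt.toZMod x₂) := by
  refine ⟨x₃ - a * (x₁ + x₂) + p * (x₁ * x₃ + x₂ * x₃ - a * x₁ * x₂ + p * (x₁ * x₂ * x₃)),
    by ring, ?_⟩
  rw [map_add, map_mul _ (p : ℤ_[p]), toZMod_prime, zero_mul, add_zero, map_sub, map_mul, map_add]

variable {t : ZMod p → ℤ_[p]}

lemma neg_pow_mul_fleck_expansion (hω : ∀ a, PadicInt.toZMod (ω a) = a) (hodd : Odd p)
    (hp3 : 3 ≤ p) (ht0 : t 0 = 0)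
    (ht : ∀ a : ZMod p, (a.val : ℤ_[p]) = ω a * (1 + p * t a))
    {E : AddMonoidAlgebra ℤ_[p] (ZMod p)}
    {n s m : ℕ} (hn : n = s + m * (p - 1)) (hs1 : 1 ≤ s) (hs2 : s ≤ p - 2) {r : ℤ_[p]} {a : ZMod p}
    (ha : a ≠ 0) {τ : ℤ_[p]} (hr : r = ω a * (1 + p * τ)) {σ : ZMod p}
    (hE : PadicInt.toZMod ((gaussElt ω 1 ^ s * E).coeff a)
        = -((-1) ^ s * a⁻¹ ^ s * (s.factorial * (1 + PadicInt.toZMod (∑ a, t a) + σ)))) :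
    ∃ v : ℤ_[p], (-r) ^ n * (jacobiProd ω (p - 2) ^ m
      * (gaussElt ω 1 ^ s * (1 + (p : AddMonoidAlgebra ℤ_[p] (ZMod p)) * E) ^ n).coeff a)
        = -(s.factorial : ℤ_[p]) + p * v ∧
      PadicInt.toZMod v = -(s.factorial : ZMod p) * (n * PadicInt.toZMod τ
        + s * PadicInt.toZMod (∑ a, t a) + s * harmZMod p s + n * σ) := by
  obtain ⟨d, hd, hd'⟩ := jacobiProd_card_sub_two_expansion hω hodd hp3 ht0 ht
  obtain ⟨c, hc, hc'⟩ := jacobiProd_expansion hω hodd hp3 hs1 hs2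
  obtain ⟨z₁, hz₁⟩ := one_add_mul_pow (p : ℤ_[p]) τ n
  obtain ⟨z₂, hz₂⟩ := one_add_mul_pow (p : ℤ_[p]) d m
  obtain ⟨Z, hZ⟩ := one_add_mul_pow (p : AddMonoidAlgebra ℤ_[p] (ZMod p)) E n
  have hsign : (-1 : ℤ_[p]) ^ n = (-1) ^ s := by
    have hev : Even (m * (p - 1)) := (Nat.Odd.sub_odd hodd odd_one).mul_left m
    rw [hn, pow_add, hev.neg_one_pow, mul_one]
  have hωn : ω a ^ n = ω a ^ s := by
    rw [hn, pow_add, mul_comm m, pow_mul, teichmuller_pow_card_sub_one ha, one_pow, mul_one]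
  set K := (gaussElt ω 1 ^ s * E).coeff a with hK
  have hC : (gaussElt ω 1 ^ s * (1 + (p : AddMonoidAlgebra ℤ_[p] (ZMod p)) * E) ^ n).coeff a
      = jacobiProd ω s * ω a⁻¹ ^ s + n * (p * K) + p ^ 2 * (gaussElt ω 1 ^ s * Z).coeff a := by
    have h1 : gaussElt ω 1 ^ s * (1 + (p : AddMonoidAlgebra ℤ_[p] (ZMod p)) * E) ^ n
        = gaussElt ω 1 ^ s + (n * p : ℤ_[p]) • (gaussElt ω 1 ^ s * E)
          + ((p : ℤ_[p]) ^ 2) • (gaussElt ω 1 ^ s * Z) := by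
      rw [hZ, Algebra.smul_def, Algebra.smul_def, map_mul, map_pow, map_natCast, map_natCast]
      ring
    rw [h1, AddMonoidAlgebra.coeff_add, AddMonoidAlgebra.coeff_add, Finsupp.add_apply,
      Finsupp.add_apply, AddMonoidAlgebra.coeff_smul, AddMonoidAlgebra.coeff_smul,
      Finsupp.smul_apply, Finsupp.smul_apply, gaussElt_one_pow hω hodd hs1 hs2,
      AddMonoidAlgebra.coeff_smul, Finsupp.smul_apply, ← gaussElt_one_pow hω hodd hs1 hs2, ← hK]
    simp only [smul_eq_mul, gaussElt, coeff_groupRingOf]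
    ring
  set Y := (gaussElt ω 1 ^ s * Z).coeff a
  have hinv : ω a ^ s * ω a⁻¹ ^ s = 1 := by rw [← mul_pow, teichmuller_mul_inv ha, one_pow]
  obtain ⟨v, hv, hv'⟩ := mul_expansion (p := p) (x₁ := n * τ + p * z₁) (x₂ := m * d + p * z₂)
    (x₃ := -c + (-1) ^ s * ω a ^ s * (n * K) + p * ((-1) ^ s * ω a ^ s * Y))
    (a := (s.factorial : ℤ_[p]))
  refine ⟨v, ?_, ?_⟩
  · rw [← hv, hC, hr, hd, hz₂, neg_pow, mul_pow, hz₁, hsign, hωn]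
    have h3 : (-1) ^ s * ω a ^ s * (jacobiProd ω s * ω a⁻¹ ^ s + n * (p * K) + p ^ 2 * Y)
        = -(s.factorial : ℤ_[p])
          + p * (-c + (-1) ^ s * ω a ^ s * (n * K) + p * ((-1) ^ s * ω a ^ s * Y)) := by
      linear_combination hc + (-1) ^ s * jacobiProd ω s * hinv
    rw [← h3]
    ring
  · have hinv' : a ^ s * a⁻¹ ^ s = 1 := by rw [← mul_pow, mul_inv_cancel₀ ha, one_pow]
    have hsq : ((-1 : ZMod p) ^ s) * (-1) ^ s = 1 := by rw [← mul_pow]; simp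
    have hnm : (n : ZMod p) + m = s := by
      rw [hn, Nat.cast_add, Nat.cast_mul, Nat.cast_sub (by omega)]
      simp
    rw [hv']
    simp only [map_add, map_mul, map_neg, map_pow, map_one, map_natCast, ZMod.natCast_self,
      zero_mul, add_zero, hω, hc', hd', hE]
    generalize PadicInt.toZMod (∑ a, t a) = W at *
    generalize harmZMod p s = h at *
    have hone : a ^ s * a⁻¹ ^ s * ((-1) ^ s * (-1) ^ s) = 1 := by rw [hinv', hsq, one_mul]
    linear_combination (-(n : ZMod p) * (s.factorial : ZMod p) * (1 + W + σ)) * hone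
      - (s.factorial : ZMod p) * (1 + W) * hnm

lemma modCong_two_of_hasResidue {x y : ℚ}
    (h : HasResidue (((x - y : ℚ) : ℚ_[p]) / (p : ℚ_[p])) 0) : modCong p 2 x y := by
  by_cases hxy : x = y
  · exact Or.inl hxy
  right
  have hp0 : (p : ℚ_[p]) ≠ 0 := by exact_mod_cast (Fact.out : p.Prime).ne_zero
  obtain ⟨z, hz, hz0⟩ := h
  obtain ⟨w, rfl⟩ := PadicInt.toZMod_eq_zero_iff_dvd.mp hz0
  have hx : ((x - y : ℚ) : ℚ_[p]) = (p : ℚ_[p]) ^ 2 * (w : ℚ_[p]) := by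
    rw [eq_div_iff hp0] at hz
    rw [← hz]
    push_cast
    ring
  have hnorm : ‖((x - y : ℚ) : ℚ_[p])‖ ≤ (p : ℝ) ^ (-2 : ℤ) := by
    rw [hx, norm_mul, norm_pow, Padic.norm_p]
    calc ((p : ℝ)⁻¹) ^ 2 * ‖(w : ℚ_[p])‖ ≤ ((p : ℝ)⁻¹) ^ 2 * 1 :=
          mul_le_mul_of_nonneg_left w.2 (by positivity)
      _ = (p : ℝ) ^ (-2 : ℤ) := by rw [mul_one, zpow_neg, inv_pow]; norm_cast
  rw [Padic.eq_padicNorm, padicNorm.eq_zpow_of_nonzero (sub_ne_zero.mpr hxy)] at hnorm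
  push_cast at hnorm
  rw [zpow_le_zpow_iff_right₀ (by exact_mod_cast (Fact.out : p.Prime).one_lt)] at hnorm
  omega

end FleckQuotient

section FermatQuotient

variable {p : ℕ} [Fact p.Prime] {ω : ZMod p →*₀ ℤ_[p]}

lemma hasResidue_fermatQuotient (hp3 : 3 ≤ p) {r : ℤ} {a : ZMod p} (ha : a ≠ 0) {τ : ℤ_[p]}
    (hr : (r : ℤ_[p]) = ω a * (1 + p * τ)) :
    HasResidue (((r : ℚ_[p]) ^ (p - 1) - 1) / (p : ℚ_[p])) (-PadicInt.toZMod τ) := by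
  have hp0 : (p : ℚ_[p]) ≠ 0 := by exact_mod_cast (Fact.out : p.Prime).ne_zero
  obtain ⟨z, hz⟩ := one_add_mul_pow (p : ℤ_[p]) τ (p - 1)
  have h : (r : ℤ_[p]) ^ (p - 1) = 1 + ((p : ℤ_[p]) - 1) * (p * τ) + p ^ 2 * z := by
    rw [hr, mul_pow, teichmuller_pow_card_sub_one ha, one_mul, hz, Nat.cast_sub (by omega),
      Nat.cast_one]
  refine (HasResidue.coe (((p : ℤ_[p]) - 1) * τ + (p : ℤ_[p]) * z)).congr ?_ (by simp)
  have := congrArg (fun x : ℤ_[p] => (x : ℚ_[p])) h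
  push_cast at this ⊢
  rw [this]
  field_simp
  ring

lemma hasResidue_harm {s : ℕ} (hs : s < p) :
    HasResidue ((harm s : ℚ) : ℚ_[p]) (harmZMod p s) := by
  rw [harm, harmZMod, Rat.cast_sum]
  refine HasResidue.sum fun k hk => ?_
  rw [mem_Icc] at hk
  refine ((HasResidue.natCast k).inv (natCast_zmod_ne_zero hk.1 (by omega))).congr ?_ rfl
  push_cast
  rw [one_div]

end FermatQuotient

theorem stmt11 (p n : ℕ) (r : ℤ) (hp : p.Prime) (hodd : Odd p) (hn : 0 < n)
    (h1 : ¬ (p - 1) ∣ n) (h2 : ¬ (p:ℤ) ∣ r) :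
    modCong p 2
      ((((-(r:ℚ))^n * Fp p (p*n) r + ((nLow p n).factorial : ℚ))
          / (((nLow p n).factorial : ℚ) * (nLow p n : ℚ)))
        + (p:ℚ) * harm (nLow p n) - (p:ℚ) * bernoulli (p-1) + (p:ℚ) - 1)
      (((p:ℚ) * (n:ℚ) / (nLow p n : ℚ)) *
        (((r:ℚ)^(p-1) - 1) / (p:ℚ)
          - ∑ k ∈ Finset.Icc 2 (p - nLow p n - 1),
              (((nLow p n + k).choose (nLow p n) : ℕ) : ℚ) * bernoulli k / ((k:ℚ) * (r:ℚ)^k))) := by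
  have : Fact p.Prime := ⟨hp⟩
  have hp3 : 3 ≤ p := by
    have := hp.two_le
    have : p ≠ 2 := by rintro rfl; exact absurd hodd (by decide)
    omega
  obtain ⟨m, hnm, hs1, hs2⟩ := exists_eq_nLow_add hp3 hn h1
  generalize nLow p n = s at *
  obtain ⟨ω, hω⟩ := exists_teichmuller p
  obtain ⟨t, ht0, ht⟩ := exists_val_eq_teichmuller_mul hω
  obtain ⟨β, hβ⟩ := exists_bernoulli_residue p
  obtain ⟨e, he, he1, he2, hek⟩ := exists_fermatCoeff_fourier hω hodd hp3 ht0 ht hβ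
  obtain ⟨E, hE, hE'⟩ := exists_fermatElt_eq_gaussElt_mul hω hodd hp3 he
  have ha : (r : ZMod p) ≠ 0 := by rwa [Ne, ZMod.intCast_zmod_eq_zero_iff_dvd]
  obtain ⟨τ, hτ⟩ := exists_eq_teichmuller_mul hω (x := (r : ℤ_[p])) (by rwa [map_intCast])
  rw [map_intCast] at hτ
  have hEs := hE' s hs1 (r : ZMod p) ha
  rw [sum_fourier_eq_bernoulli_sum (e := fun j => PadicInt.toZMod (e j)) hodd hp3 hβ he1 he2 hek
    hs1 hs2] at hEs
  obtain ⟨v, hv, hv'⟩ := neg_pow_mul_fleck_expansion hω hodd hp3 ht0 ht hnm hs1 hs2 ha hτ hEs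
  have hF := congrArg (fun x : ℤ_[p] => (x : ℚ_[p])) hv
  push_cast at hF
  have hF' := Fp_cast hω hodd hp3 hE hnm hs1 hs2 r
  push_cast at hF'
  rw [← hF'] at hF
  have hs0 := natCast_zmod_ne_zero (p := p) hs1 (by omega)
  have hf0 : (s.factorial : ZMod p) ≠ 0 := by
    rw [Ne, ZMod.natCast_eq_zero_iff, hp.dvd_factorial]
    omega
  have hsum : HasResidue (∑ k ∈ Icc 2 (p - s - 1),
      ((s + k).choose s : ℚ_[p]) * ((bernoulli k : ℚ) : ℚ_[p]) / ((k : ℚ_[p]) * (r : ℚ_[p]) ^ k))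
      (∑ k ∈ Icc 2 (p - s - 1),
        ((s + k).choose s : ZMod p) * β k / ((k : ZMod p) * (r : ZMod p) ^ k)) := by
    refine HasResidue.sum fun k hk => ?_
    rw [mem_Icc] at hk
    exact ((HasResidue.natCast _).mul (hβ k (by omega))).div
      ((HasResidue.natCast k).mul ((HasResidue.intCast r).pow k))
      (mul_ne_zero (natCast_zmod_ne_zero (by omega) (by omega)) (pow_ne_zero _ ha))
  have hp0 : (p : ℚ_[p]) ≠ 0 := by exact_mod_cast hp.ne_zero
  have hs0' : (s : ℚ_[p]) ≠ 0 := by exact_mod_cast (show s ≠ 0 by omega)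
  have hf0' : (s.factorial : ℚ_[p]) ≠ 0 := by exact_mod_cast s.factorial_ne_zero
  refine modCong_two_of_hasResidue ?_
  have hmain := (((((HasResidue.coe v).div ((HasResidue.natCast s.factorial).mul
    (HasResidue.natCast s)) (mul_ne_zero hf0 hs0)).add (hasResidue_harm (p := p) (s := s)
      (by omega))).sub (hasResidue_prime_mul_bernoulli hp3 ht0 ht hβ)).sub
    (((HasResidue.natCast n).div (HasResidue.natCast s) hs0).mul
      ((hasResidue_fermatQuotient hp3 ha hτ).sub hsum)))
  refine hmain.congr ?_ ?_
  · push_cast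
    rw [hF]
    generalize (∑ k ∈ Icc 2 (p - s - 1), _ : ℚ_[p]) = S
    field_simp
    ring
  · rw [hv']
    generalize (∑ k ∈ Icc 2 (p - s - 1), _ : ZMod p) = S
    field_simp
    ring
end

section
/- Let p be a prime, and let a ≥ 1, l ≥ 0, m ≥ 0, n ≥ 0 be integers with m < p and 2 ≤ n−l−m ≤ p. Let d be a positive integer with d = 1 if a ≤ 2, and 1 ≤ d ≤ p^{a−2} if a ≥ 2. Then (1/p^{n−l})·Σ_{k=l+1}^{n} binom(p^a·n − p^{a−1}·m − d, p^a·k − p^{a−1}·m − d)·(−1)^{pk}·binom(k−1, l) ≡ (−1)^{l−1}·(n!/l!)/(∏_{k=0}^{m} (n−l−k)) · B^{(m+1)}_{p−n+l+m} (mod p). -/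
open Finset

/-- The `m`-th order Bernoulli number
`B_k^{(m)} = k! ∑_{i₁+⋯+i_m = k} ∏_j B_{i_j}/i_j!`. -/
noncomputable def bernHigher (m k : ℕ) : ℚ :=
  (k.factorial : ℚ) *
    ∑ i ∈ Finset.Nat.antidiagonalTuple m k, ∏ j, bernoulli (i j) / (i j).factorial

namespace FleckQuotient

section PowerSeriesIdentity

open PowerSeries

/-- The power series of `log (1 - X)`. -/
noncomputable def logOneSub : ℚ⟦X⟧ := PowerSeries.mk fun i => -(1 / (i : ℚ))

theorem one_sub_X_mul_derivative_logOneSub :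
    (1 - X) * derivative ℚ logOneSub = -1 := by
  have h : derivative ℚ logOneSub = -PowerSeries.mk 1 := by
    ext i
    have : (i : ℚ) + 1 ≠ 0 := by positivity
    simp only [coeff_derivative, logOneSub, coeff_mk, map_neg, Pi.one_apply]
    push_cast
    field_simp
  rw [h, mul_neg, mul_comm, mk_one_mul_one_sub_eq_one]

theorem one_sub_X_mul_derivative_logOneSub_pow (m v : ℕ) :
    (1 - X) * derivative ℚ ((1 - X) ^ m * logOneSub ^ v) =
      -(m : ℚ⟦X⟧) * ((1 - X) ^ m * logOneSub ^ v)
        - (v : ℚ⟦X⟧) * ((1 - X) ^ m * logOneSub ^ (v - 1)) := by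
  have h := one_sub_X_mul_derivative_logOneSub
  have hm : (m : ℚ⟦X⟧) * (1 - X : ℚ⟦X⟧) ^ (m - 1) * (1 - X) = (m : ℚ⟦X⟧) * (1 - X : ℚ⟦X⟧) ^ m := by
    cases m with
    | zero => simp
    | succ m => rw [Nat.add_sub_cancel]; ring
  have hX : derivative ℚ (1 - X : ℚ⟦X⟧) = -1 := by simp
  rw [Derivation.leibniz, derivative_pow, derivative_pow, hX, smul_eq_mul, smul_eq_mul]
  linear_combination (-(logOneSub ^ v)) * hm + (1 - X) ^ m * (v * logOneSub ^ (v - 1)) * h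

theorem X_mul_derivative_bernoulliPowerSeries :
    X * derivative ℚ (bernoulliPowerSeries ℚ) =
      bernoulliPowerSeries ℚ - X * bernoulliPowerSeries ℚ - bernoulliPowerSeries ℚ ^ 2 := by
  have h := bernoulliPowerSeries_mul_exp_sub_one ℚ
  have hd := congrArg (derivative ℚ) h
  rw [Derivation.leibniz, map_sub, derivative_exp] at hd
  simp only [smul_eq_mul, derivative_X, derivative_one, sub_zero] at hd
  have hne : exp ℚ - 1 ≠ 0 := by
    intro h0
    rw [h0, mul_zero] at h
    exact X_ne_zero h.symm
  apply mul_right_cancel₀ hne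
  linear_combination X * hd + (bernoulliPowerSeries ℚ - 1) * h

theorem succ_mul_coeff_logOneSub_pow (m N v : ℕ) :
    (N + 1 : ℚ) * coeff (N + 1) ((1 - X) ^ m * logOneSub ^ v) =
      (N - m) * coeff N ((1 - X) ^ m * logOneSub ^ v)
        - v * coeff N ((1 - X) ^ m * logOneSub ^ (v - 1)) := by
  have h := congrArg (coeff N) (one_sub_X_mul_derivative_logOneSub_pow m v)
  have hX : coeff N (X * derivative ℚ ((1 - X) ^ m * logOneSub ^ v)) =
      (N : ℚ) * coeff N ((1 - X) ^ m * logOneSub ^ v) := by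
    cases N with
    | zero => simp
    | succ N => rw [coeff_succ_X_mul, coeff_derivative]; push_cast; ring
  rw [sub_mul, one_mul, map_sub, hX, coeff_derivative, map_sub, ← map_natCast (C (R := ℚ)) m,
    ← map_natCast (C (R := ℚ)) v, ← map_neg, coeff_C_mul, coeff_C_mul] at h
  linear_combination h

theorem succ_mul_coeff_X_pow_mul_exp_pow_mul_bernoulliPowerSeries_pow (m N v : ℕ) :
    (N + 1 : ℚ) * coeff (N + 1)
        (X ^ v * (exp ℚ ^ (m + 1) * bernoulliPowerSeries ℚ ^ (N + 1 + 1))) =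
      (m - N) * coeff N (X ^ v * (exp ℚ ^ (m + 1) * bernoulliPowerSeries ℚ ^ (N + 1)))
        + v * coeff N
          (X ^ (v - 1) * (exp ℚ ^ (m + 1) * bernoulliPowerSeries ℚ ^ (N + 1))) := by
  set f := bernoulliPowerSeries ℚ with hf
  have hfd := X_mul_derivative_bernoulliPowerSeries
  rw [← hf] at hfd
  have key : ((N + 1 : ℕ) : ℚ⟦X⟧) * (X ^ v * (exp ℚ ^ (m + 1) * f ^ (N + 1 + 1))) =
      ((N + 1 : ℕ) : ℚ⟦X⟧) * (X ^ v * (exp ℚ ^ (m + 1) * f ^ (N + 1)))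
        + X * (((m : ℚ⟦X⟧) - (N : ℚ⟦X⟧)) * (X ^ v * (exp ℚ ^ (m + 1) * f ^ (N + 1))))
        + X * ((v : ℚ⟦X⟧) * (X ^ (v - 1) * (exp ℚ ^ (m + 1) * f ^ (N + 1))))
        - X * derivative ℚ (X ^ v * (exp ℚ ^ (m + 1) * f ^ (N + 1))) := by
    rw [Derivation.leibniz, Derivation.leibniz, derivative_pow, derivative_pow, derivative_pow,
      derivative_exp, derivative_X]
    simp only [smul_eq_mul, Nat.add_sub_cancel]
    push_cast
    linear_combination (((N : ℚ⟦X⟧) + 1) * X ^ v * exp ℚ ^ (m + 1) * f ^ N) * hfd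
  have h := congrArg (coeff (N + 1)) key
  have hmN : (m : ℚ⟦X⟧) - (N : ℚ⟦X⟧) = C (m - N : ℚ) := by simp
  rw [map_sub, map_add, map_add, coeff_succ_X_mul, coeff_succ_X_mul, coeff_succ_X_mul,
    coeff_derivative, hmN, ← map_natCast (C (R := ℚ)) v, ← map_natCast (C (R := ℚ)) (N + 1),
    coeff_C_mul, coeff_C_mul, coeff_C_mul, coeff_C_mul] at h
  push_cast at h
  linear_combination h

/-- The coefficients of `(1 - X) ^ m * log (1 - X) ^ v`, by the change of variable
`X = 1 - exp Z`. -/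
theorem coeff_logOneSub_pow (m N v : ℕ) :
    coeff N ((1 - X) ^ m * logOneSub ^ v) =
      (-1) ^ N * coeff N (X ^ v * (exp ℚ ^ (m + 1) * bernoulliPowerSeries ℚ ^ (N + 1))) := by
  induction N generalizing v with
  | zero =>
    have h0 : constantCoeff (bernoulliPowerSeries ℚ) = 1 := by
      simp [bernoulliPowerSeries, ← coeff_zero_eq_constantCoeff_apply]
    have h1 : constantCoeff logOneSub = 0 := by
      simp [logOneSub, ← coeff_zero_eq_constantCoeff_apply]
    simp [coeff_zero_eq_constantCoeff_apply, h0, h1]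
  | succ N ih =>
    have hN : (N + 1 : ℚ) ≠ 0 := by positivity
    apply mul_left_cancel₀ hN
    rw [succ_mul_coeff_logOneSub_pow, ih, ih, mul_left_comm (N + 1 : ℚ),
      succ_mul_coeff_X_pow_mul_exp_pow_mul_bernoulliPowerSeries_pow]
    ring

end PowerSeriesIdentity

section PIntegral

variable (p : ℕ) [Fact p.Prime]

/-- The subring of `p`-integral rational numbers. -/
def pIntegral : Subring ℚ where
  carrier := {x | padicNorm p x ≤ 1}
  mul_mem' {x y} hx hy := by
    simp only [Set.mem_ofPred_eq, padicNorm.mul] at *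
    exact mul_le_one₀ hx (padicNorm.nonneg _) hy
  one_mem' := by simp
  add_mem' {x y} hx hy := padicNorm.nonarchimedean.trans (max_le hx hy)
  zero_mem' := by simp
  neg_mem' {x} hx := by simpa using hx

variable {p}

theorem mem_pIntegral {x : ℚ} : x ∈ pIntegral p ↔ padicNorm p x ≤ 1 := Iff.rfl

theorem one_div_natCast_mem_pIntegral {n : ℕ} (hn : ¬p ∣ n) : 1 / (n : ℚ) ∈ pIntegral p := by
  rw [mem_pIntegral, padicNorm.div, padicNorm.one, (padicNorm.nat_eq_one_iff n).2 hn, div_one]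

theorem intCast_div_prime_mem_pIntegral {z : ℤ} (hz : (p : ℤ) ∣ z) :
    (z : ℚ) / p ∈ pIntegral p := by
  obtain ⟨c, rfl⟩ := hz
  have hp : (p : ℚ) ≠ 0 := Nat.cast_ne_zero.2 (Fact.out : p.Prime).ne_zero
  rw [Int.cast_mul, Int.cast_natCast, mul_div_cancel_left₀ _ hp]
  exact intCast_mem _ _

theorem modCong_one_of_sub_div_mem {x y : ℚ} (h : (x - y) / p ∈ pIntegral p) :
    modCong p 1 x y := by
  by_cases hxy : x = y
  · exact Or.inl hxy
  have hp : (p : ℚ) ≠ 0 := Nat.cast_ne_zero.2 (Fact.out : p.Prime).ne_zero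
  have hne : (x - y) / p ≠ 0 := div_ne_zero (sub_ne_zero.2 hxy) hp
  have hp1 : (1 : ℚ) < p := by exact_mod_cast (Fact.out : p.Prime).one_lt
  rw [mem_pIntegral, padicNorm.eq_zpow_of_nonzero hne, padicValRat.div (sub_ne_zero.2 hxy) hp,
    padicValRat.self (Fact.out : p.Prime).one_lt, zpow_le_one_iff_right₀ hp1] at h
  exact Or.inr (by linarith)

end PIntegral

section IntegralUpTo

open PowerSeries

variable (p : ℕ) [Fact p.Prime] (D : ℕ)

/-- Power series whose coefficients up to degree `D` are `p`-integral. -/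
def integralUpTo : Subring ℚ⟦X⟧ where
  carrier := {f | ∀ i ≤ D, coeff i f ∈ pIntegral p}
  mul_mem' {f g} hf hg i hi := by
    rw [coeff_mul]
    refine sum_mem fun x hx => ?_
    have := mem_antidiagonal.1 hx
    exact mul_mem (hf _ (by omega)) (hg _ (by omega))
  one_mem' i _ := by
    rw [coeff_one]
    split_ifs
    exacts [one_mem _, zero_mem _]
  add_mem' {f g} hf hg i hi := by
    rw [map_add]
    exact add_mem (hf i hi) (hg i hi)
  zero_mem' i _ := by
    rw [map_zero]
    exact zero_mem _
  neg_mem' {f} hf i hi := by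
    rw [map_neg]
    exact neg_mem (hf i hi)

/-- Power series whose coefficients up to degree `D` are `p`-integral multiples of `p`. -/
def smallUpTo : AddSubgroup ℚ⟦X⟧ where
  carrier := {f | ∀ i ≤ D, coeff i f / p ∈ pIntegral p}
  add_mem' {f g} hf hg i hi := by
    rw [map_add, add_div]
    exact add_mem (hf i hi) (hg i hi)
  zero_mem' i _ := by
    rw [map_zero, zero_div]
    exact zero_mem _
  neg_mem' {f} hf i hi := by
    rw [map_neg, neg_div]
    exact neg_mem (hf i hi)

variable {p D}

theorem mul_mem_smallUpTo {f g : ℚ⟦X⟧} (hf : f ∈ smallUpTo p D) (hg : g ∈ integralUpTo p D) :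
    f * g ∈ smallUpTo p D := by
  intro i hi
  rw [coeff_mul, sum_div]
  refine sum_mem fun x hx => ?_
  have := mem_antidiagonal.1 hx
  rw [mul_div_right_comm]
  exact mul_mem (hf _ (by omega)) (hg _ (by omega))

theorem pow_sub_pow_mem_smallUpTo {f g : ℚ⟦X⟧} (hf : f ∈ integralUpTo p D)
    (hg : g ∈ integralUpTo p D) (h : f - g ∈ smallUpTo p D) (v : ℕ) :
    f ^ v - g ^ v ∈ smallUpTo p D := by
  induction v with
  | zero => simp [zero_mem]
  | succ v ih =>
    have : f ^ (v + 1) - g ^ (v + 1) = (f ^ v - g ^ v) * f + (f - g) * g ^ v := by ring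
    rw [this]
    exact add_mem (mul_mem_smallUpTo ih hf) (mul_mem_smallUpTo h (pow_mem hg v))

theorem mem_integralUpTo_of_mul_eq_one {f g : ℚ⟦X⟧} (hg : g ∈ integralUpTo p D)
    (hg0 : constantCoeff g = 1) (h : f * g = 1) : f ∈ integralUpTo p D := by
  intro i
  induction i using Nat.strong_induction_on with
  | _ i ih =>
    intro hi
    have hc := congrArg (coeff i) h
    cases i with
    | zero =>
      rw [coeff_zero_eq_constantCoeff_apply, map_mul, hg0, mul_one] at hc
      rw [coeff_zero_eq_constantCoeff_apply, hc, coeff_one, if_pos rfl]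
      exact one_mem _
    | succ i =>
      rw [coeff_mul, Nat.sum_antidiagonal_succ', coeff_zero_eq_constantCoeff_apply, hg0, mul_one,
        coeff_one, if_neg (Nat.succ_ne_zero i)] at hc
      rw [eq_neg_of_add_eq_zero_left hc]
      refine neg_mem (sum_mem fun x hx => ?_)
      have := mem_antidiagonal.1 hx
      exact mul_mem (ih _ (by omega) (by omega)) (hg _ (by omega))

theorem pow_prime_sub_one_mem_smallUpTo (hD : D < p) {f : ℚ⟦X⟧} (hf : f ∈ integralUpTo p D)
    (hf0 : constantCoeff f = 1) : f ^ p - 1 ∈ smallUpTo p D := by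
  have hp : p.Prime := Fact.out
  have hp0 : (p : ℚ) ≠ 0 := Nat.cast_ne_zero.2 hp.ne_zero
  let y : integralUpTo p D := ⟨f - 1, sub_mem hf (one_mem _)⟩
  obtain ⟨r, hr⟩ := exists_add_pow_prime_eq hp 1 y
  have hr' := congrArg (Subtype.val) hr
  have hy : X ∣ f - 1 := by rw [X_dvd_iff, map_sub, hf0, map_one, sub_self]
  have hyp : X ^ p ∣ (f - 1) ^ p := pow_dvd_pow_of_dvd hy p
  have key : f ^ p - 1 = (f - 1) ^ p + C (p : ℚ) * ((y * r : integralUpTo p D) : ℚ⟦X⟧) := by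
    simp only [y, Subring.coe_add, Subring.coe_mul, Subring.coe_pow, Subring.coe_one,
      Subring.coe_natCast] at hr' ⊢
    rw [add_sub_cancel] at hr'
    rw [hr', map_natCast]
    ring
  intro i hi
  rw [key, map_add, X_pow_dvd_iff.1 hyp i (by omega), zero_add, coeff_C_mul,
    mul_div_cancel_left₀ _ hp0]
  exact (y * r).2 i hi

end IntegralUpTo

section Bernoulli

open PowerSeries

theorem constantCoeff_bernoulliPowerSeries : constantCoeff (bernoulliPowerSeries ℚ) = 1 := by
  simp [bernoulliPowerSeries, ← coeff_zero_eq_constantCoeff_apply]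

theorem bernHigher_eq_coeff (m k : ℕ) :
    bernHigher m k = (k.factorial : ℚ) * coeff k (bernoulliPowerSeries ℚ ^ m) := by
  have h : bernoulliPowerSeries ℚ ^ m = ∏ _j : Fin m, bernoulliPowerSeries ℚ := by simp
  rw [bernHigher, h, PowerSeries.coeff_prod, ← piAntidiag_univ_fin_eq_antidiagonalTuple]
  congr 1
  refine (sum_nbij' (fun l : Fin m →₀ ℕ => (l : Fin m → ℕ))
    (fun l => Finsupp.equivFunOnFinite.symm l) ?_ ?_ ?_ ?_ ?_).symm
  · intro l hl
    simpa [mem_finsuppAntidiag, mem_piAntidiag] using hl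
  · intro l hl
    simpa [mem_finsuppAntidiag, mem_piAntidiag] using hl
  · intro l _
    ext; simp
  · intro l _
    ext; simp
  · intro l _
    simp [bernoulliPowerSeries]

theorem evalNegHom_bernoulliPowerSeries :
    evalNegHom (bernoulliPowerSeries ℚ) = exp ℚ * bernoulliPowerSeries ℚ := by
  have h := bernoulliPowerSeries_mul_exp_sub_one ℚ
  have hneg := congrArg evalNegHom h
  rw [map_mul, map_sub, map_one, evalNegHom_X] at hneg
  have he := exp_mul_exp_neg_eq_one (A := ℚ)
  have hne : exp ℚ - 1 ≠ 0 := by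
    intro h0
    rw [h0, mul_zero] at h
    exact X_ne_zero h.symm
  apply mul_right_cancel₀ hne
  linear_combination (-exp ℚ) * hneg + evalNegHom (bernoulliPowerSeries ℚ) * he - exp ℚ * h

variable {p : ℕ} [Fact p.Prime]

theorem not_dvd_factorial_of_lt {i : ℕ} (hi : i < p) : ¬p ∣ i.factorial := by
  rw [(Fact.out : p.Prime).dvd_factorial]
  omega

theorem bernoulliPowerSeries_mem_integralUpTo :
    bernoulliPowerSeries ℚ ∈ integralUpTo p (p - 2) := by
  have hp2 := (Fact.out : p.Prime).two_le
  have hE : X * (PowerSeries.mk fun i => 1 / ((i + 1).factorial : ℚ)) = exp ℚ - 1 := by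
    ext i
    cases i with
    | zero => simp
    | succ i => simp [coeff_succ_X_mul, coeff_exp, coeff_one]
  refine mem_integralUpTo_of_mul_eq_one
    (g := PowerSeries.mk fun i => 1 / ((i + 1).factorial : ℚ)) ?_ ?_ ?_
  · intro i hi
    rw [coeff_mk]
    exact one_div_natCast_mem_pIntegral (not_dvd_factorial_of_lt (by omega))
  · simp [← coeff_zero_eq_constantCoeff_apply]
  · apply mul_left_cancel₀ (X_ne_zero (R := ℚ))
    rw [mul_left_comm, hE, bernoulliPowerSeries_mul_exp_sub_one, mul_one]

theorem evalNegHom_mem_integralUpTo {D : ℕ} {f : ℚ⟦X⟧} (hf : f ∈ integralUpTo p D) :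
    evalNegHom f ∈ integralUpTo p D := by
  intro i hi
  rw [evalNegHom, coeff_rescale]
  exact mul_mem (pow_mem (neg_mem (one_mem _)) i) (hf i hi)

theorem factorial_mul_factorial_modEq {w : ℕ} (hw : 1 ≤ w) (hwp : w ≤ p) :
    (p : ℤ) ∣ ((w - 1).factorial : ℤ) * ((p - w).factorial : ℤ) - (-1) ^ w := by
  have hp1 := (Fact.out : p.Prime).one_le
  rw [← ZMod.intCast_zmod_eq_zero_iff_dvd _ p]
  push_cast
  rw [sub_eq_zero]
  induction w, hw using Nat.le_induction with
  | base => simp [ZMod.wilsons_lemma]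
  | succ w hw ih =>
    have ih := ih (by omega)
    obtain ⟨u, rfl⟩ : ∃ u, w = u + 1 := ⟨w - 1, by omega⟩
    obtain ⟨t, ht⟩ : ∃ t, p = t + 1 + (u + 1) := ⟨p - (u + 1) - 1, by omega⟩
    have h1 : p - (u + 1) = t + 1 := by omega
    have h2 : p - (u + 1 + 1) = t := by omega
    rw [h1, Nat.add_sub_cancel, Nat.factorial_succ] at ih
    rw [h2, Nat.add_sub_cancel, Nat.factorial_succ, pow_succ, ← ih]
    have h0 : ((t + 1 + (u + 1) : ℕ) : ZMod p) = 0 := by rw [← ht]; simp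
    push_cast at h0 ⊢
    linear_combination ((u.factorial : ZMod p) * t.factorial) * h0

theorem coeff_logOneSub_pow_congr {m w : ℕ} (hw : 2 ≤ w) (hwp : w ≤ p) :
    (coeff (p + m) ((1 - X) ^ m * logOneSub ^ (m + w))
      - (-1) ^ m * ((w - 1).factorial * bernHigher (m + 1) (p - w))) / p ∈ pIntegral p := by
  have hf := bernoulliPowerSeries_mem_integralUpTo (p := p)
  set f := bernoulliPowerSeries ℚ with hfdef
  set k := p - w with hk
  have hdeg : p + m = k + (m + w) := by omega
  have hsplit : exp ℚ ^ (m + 1) * f ^ (p + m + 1) =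
      evalNegHom (f ^ (m + 1)) + (f ^ p - 1) * evalNegHom (f ^ (m + 1)) := by
    rw [map_pow, evalNegHom_bernoulliPowerSeries]
    ring
  have hsmall : coeff k ((f ^ p - 1) * evalNegHom (f ^ (m + 1))) / (p : ℚ) ∈ pIntegral p :=
    mul_mem_smallUpTo (pow_prime_sub_one_mem_smallUpTo
      (by have := (Fact.out : p.Prime).two_le; omega) hf constantCoeff_bernoulliPowerSeries)
      (evalNegHom_mem_integralUpTo (pow_mem hf _)) k (by omega)
  have hint : coeff k (f ^ (m + 1)) ∈ pIntegral p := pow_mem hf (m + 1) k (by omega)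
  have hfac := intCast_div_prime_mem_pIntegral
    (factorial_mul_factorial_modEq (p := p) (w := w) (by omega) hwp)
  rw [coeff_logOneSub_pow, bernHigher_eq_coeff, ← hfdef, hsplit]
  nth_rewrite 2 [hdeg]
  rw [coeff_X_pow_mul, map_add]
  have hneg : coeff k (evalNegHom (f ^ (m + 1))) = (-1) ^ k * coeff k (f ^ (m + 1)) := by
    rw [evalNegHom, coeff_rescale]
  rw [hneg]
  have hsign : (-1 : ℚ) ^ (p + m) * (-1) ^ k = (-1) ^ m * (-1) ^ w := by
    rw [hdeg]
    have : (-1 : ℚ) ^ k * (-1) ^ k = 1 := by rw [← mul_pow]; simp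
    rw [pow_add, pow_add]
    linear_combination ((-1) ^ m * (-1) ^ w) * this
  have hpow (i : ℕ) : (-1 : ℚ) ^ i ∈ pIntegral p := pow_mem (neg_mem (one_mem _)) i
  convert sub_mem (mul_mem (hpow (p + m)) hsmall) (mul_mem (hpow m) (mul_mem hfac hint)) using 1
  push_cast
  rw [← hk]
  linear_combination (coeff k (f ^ (m + 1)) / p) * hsign

end Bernoulli

section Congruences

open Polynomial

variable {p : ℕ}

theorem natCast_dvd_iff_map_eq_zero {f : ℤ[X]} :
    (p : ℤ[X]) ∣ f ↔ f.map (Int.castRingHom (ZMod p)) = 0 := by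
  rw [← Polynomial.C_eq_natCast, C_dvd_iff_dvd_coeff, Polynomial.ext_iff]
  refine forall_congr' fun i => ?_
  rw [coeff_map, coeff_zero, eq_intCast, ZMod.intCast_zmod_eq_zero_iff_dvd]

theorem natCast_dvd_coeff {f : ℤ[X]} (h : (p : ℤ[X]) ∣ f) (i : ℕ) : (p : ℤ) ∣ f.coeff i := by
  rw [← Polynomial.C_eq_natCast, C_dvd_iff_dvd_coeff] at h
  exact h i

theorem natCast_dvd_one_sub_X_pow [Fact p.Prime] (b : ℕ) :
    (p : ℤ[X]) ∣ (1 - X) ^ p ^ b - (1 - X ^ p ^ b) := by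
  rw [natCast_dvd_iff_map_eq_zero]
  simp [sub_pow_char_pow]

variable (p) in
/-- There is an integer polynomial `K` with `(1 - X) ^ p = 1 - X ^ p + p * (X * K)`. -/
theorem exists_one_sub_X_pow_prime_eq [Fact p.Prime] :
    ∃ K : ℤ[X], (1 - X) ^ p = 1 - X ^ p + (p : ℤ[X]) * (X * K) := by
  obtain ⟨K, hK⟩ := natCast_dvd_one_sub_X_pow (p := p) 1
  rw [pow_one] at hK
  have hp : p.Prime := Fact.out
  have h0 : X ∣ K := by
    rw [X_dvd_iff]
    have := congrArg (coeff · 0) hK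
    simpa [coeff_zero_eq_eval_zero, hp.ne_zero] using this
  obtain ⟨K, rfl⟩ := h0
  exact ⟨K, by linear_combination hK⟩

/-- The analogue of `exists_one_sub_X_pow_prime_eq` for the exponent `p ^ 2`. -/
theorem exists_one_sub_X_pow_prime_sq_eq {K : ℤ[X]}
    (hK : (1 - X) ^ p = 1 - X ^ p + (p : ℤ[X]) * (X * K)) :
    ∃ J : ℤ[X], (1 - X) ^ p ^ 2 =
      1 - X ^ p ^ 2 + (p : ℤ[X]) * (X ^ p * K.comp (X ^ p))
      + (p : ℤ[X]) ^ 2 * (X * J) := by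
  obtain ⟨k, hk⟩ := powAddExpansion (1 - X ^ p : ℤ[X]) ((p : ℤ[X]) * (X * K)) p
  have hc := congrArg (Polynomial.comp · (X ^ p)) hK
  simp only [pow_comp, sub_comp, one_comp, X_comp, add_comp, mul_comp, natCast_comp] at hc
  refine ⟨K * (1 - X ^ p) ^ (p - 1) + k * X * K ^ 2, ?_⟩
  rw [pow_two p, pow_mul, hK, hk, hc]
  ring

theorem exists_quotient_eq [Fact p.Prime] {K : ℤ[X]}
    (hK : (1 - X) ^ p = 1 - X ^ p + (p : ℤ[X]) * (X * K)) {a d : ℕ} (ha : 1 ≤ a)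
    (hd : d ≤ p ^ (a - 2)) :
    ∃ H ε η : ℤ[X], X ^ p ^ a = 1 - (1 - X) ^ p ^ a + (p : ℤ[X]) * H ∧
      H = expand ℤ (p ^ (a - 1)) (X * K) + (p : ℤ[X]) * (X ^ d * ε) + (p : ℤ[X]) ^ 2 * η := by
  obtain rfl | ha : a = 1 ∨ 2 ≤ a := by omega
  · refine ⟨X * K, 0, 0, ?_, by simp⟩
    rw [pow_one, hK]
    ring
  obtain ⟨b, rfl⟩ := Nat.exists_eq_add_of_le' ha
  rw [Nat.add_sub_cancel] at hd
  obtain ⟨c, hc⟩ := Nat.exists_eq_add_of_le hd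
  obtain ⟨J, hJ⟩ := exists_one_sub_X_pow_prime_sq_eq hK
  have hJ' := congrArg (Polynomial.comp · (X ^ p ^ b)) hJ
  simp only [pow_comp, sub_comp, one_comp, X_comp, add_comp, mul_comp, natCast_comp] at hJ'
  obtain ⟨η, hη⟩ := dvd_sub_pow_of_dvd_sub (natCast_dvd_one_sub_X_pow (p := p) b) 2
  refine ⟨_, X ^ c * J.comp (X ^ p ^ b), η, ?_, rfl⟩
  have hX (f : ℤ[X]) : expand ℤ (p ^ (b + 2 - 1)) f = (f.comp (X ^ p)).comp (X ^ p ^ b) := by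
    rw [expand_eq_comp_X_pow, comp_assoc, pow_comp, X_comp, ← pow_mul, ← pow_succ]
    rfl
  rw [hX, mul_comp, X_comp, mul_comp, pow_comp, X_comp]
  have hXd : (X : ℤ[X]) ^ d * X ^ c = X ^ p ^ b := by rw [← pow_add, ← hc]
  have hpow (f : ℤ[X]) : (f ^ p ^ b) ^ p ^ 2 = f ^ p ^ (b + 2) := by rw [← pow_mul, ← pow_add]
  rw [hpow, hJ', hpow] at hη
  linear_combination (-(p : ℤ[X]) ^ 2 * J.comp (X ^ p ^ b)) * hXd + hη

end Congruences

section Functional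

open Polynomial

/-- The weight of `X ^ j` under `fleckFunctional`. -/
def fleckWeight (q l j : ℕ) : ℤ :=
  if q ∣ j + 1 then (-1) ^ l * (((j + 1) / q - 1).choose l : ℤ) else 0

/-- The linear functional sending `(1 - X) ^ j` to `fleckWeight q l j`. -/
noncomputable def fleckFunctional (q l : ℕ) : ℤ[X] →ₗ[ℤ] ℤ :=
  (Polynomial.lsum fun j => fleckWeight q l j • LinearMap.id) ∘ₗ
    (aeval (1 - X : ℤ[X])).toLinearMap

theorem fleckWeight_sub_add {q : ℕ} (hq : 0 < q) (l j : ℕ) :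
    fleckWeight q (l + 1) j - fleckWeight q (l + 1) (j + q) = fleckWeight q l j := by
  have h : q ∣ j + q + 1 ↔ q ∣ j + 1 := by
    rw [add_right_comm, Nat.dvd_add_self_right]
  simp only [fleckWeight, h]
  split_ifs with hj
  · obtain ⟨i, hi⟩ := hj
    obtain ⟨i, rfl⟩ : ∃ k, i = k + 1 := ⟨i - 1, by
      cases i <;> simp_all⟩
    rw [add_right_comm, Nat.add_div_right _ hq, hi, Nat.mul_div_cancel_left _ hq,
      Nat.add_sub_cancel, Nat.add_sub_cancel, Nat.choose_succ_succ]
    push_cast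
    ring
  · simp

theorem fleckWeight_zero_add {q : ℕ} (j : ℕ) :
    fleckWeight q 0 (j + q) = fleckWeight q 0 j := by
  have h : q ∣ j + q + 1 ↔ q ∣ j + 1 := by
    rw [add_right_comm, Nat.dvd_add_self_right]
  simp [fleckWeight, h]

theorem fleckFunctional_one_sub_X_pow (q l j : ℕ) :
    fleckFunctional q l ((1 - X) ^ j) = fleckWeight q l j := by
  simp [fleckFunctional, lsum_apply, ← monomial_one_right_eq_X_pow, sum_monomial_index]

theorem eq_sum_one_sub_X_pow (f : ℤ[X]) :
    f = ∑ j ∈ (f.comp (1 - X)).support, (f.comp (1 - X)).coeff j • (1 - X) ^ j := by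
  have h : (f.comp (1 - X)).comp (1 - X) = f := by rw [comp_assoc]; simp
  conv_lhs => rw [← h, comp_eq_sum_left, Polynomial.sum]
  simp [smul_eq_C_mul]

theorem fleckFunctional_mul_one_sub {q : ℕ} (hq : 0 < q) (l : ℕ) (f : ℤ[X]) :
    fleckFunctional q (l + 1) (f * (1 - (1 - X) ^ q)) = fleckFunctional q l f := by
  rw [eq_sum_one_sub_X_pow f, sum_mul, map_sum, map_sum]
  refine sum_congr rfl fun j _ => ?_
  rw [smul_mul_assoc, map_smul, map_smul, mul_sub, mul_one, ← pow_add, map_sub]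
  simp only [fleckFunctional_one_sub_X_pow, fleckWeight_sub_add hq]

theorem fleckFunctional_zero_mul_one_sub (q : ℕ) (f : ℤ[X]) :
    fleckFunctional q 0 (f * (1 - (1 - X) ^ q)) = 0 := by
  rw [eq_sum_one_sub_X_pow f, sum_mul, map_sum]
  refine sum_eq_zero fun j _ => ?_
  rw [smul_mul_assoc, map_smul, mul_sub, mul_one, ← pow_add, map_sub]
  simp only [fleckFunctional_one_sub_X_pow, fleckWeight_zero_add, sub_self, smul_zero]

theorem fleckFunctional_mul_one_sub_pow {q : ℕ} (hq : 0 < q) (l i : ℕ) (f : ℤ[X]) :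
    fleckFunctional q l (f * (1 - (1 - X) ^ q) ^ i) =
      if i ≤ l then fleckFunctional q (l - i) f else 0 := by
  induction i generalizing l with
  | zero => simp
  | succ i ih =>
    rw [pow_succ, ← mul_assoc]
    cases l with
    | zero => simp [fleckFunctional_zero_mul_one_sub]
    | succ l => simp [fleckFunctional_mul_one_sub hq, ih]

theorem fleckFunctional_one_sub_X_pow_mul_X_pow (q l c N : ℕ) :
    fleckFunctional q l ((1 - X) ^ c * X ^ N) =
      ∑ j ∈ range (N + 1), (-1) ^ j * (N.choose j : ℤ) * fleckWeight q l (c + j) := by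
  have h : (1 - X : ℤ[X]) ^ c * X ^ N =
      ∑ j ∈ range (N + 1), ((-1) ^ j * (N.choose j : ℤ)) • (1 - X) ^ (c + j) := by
    have : (X : ℤ[X]) ^ N = (-(1 - X) + 1) ^ N := by ring
    rw [this, add_pow, mul_sum]
    refine sum_congr rfl fun j _ => ?_
    rw [smul_eq_C_mul, neg_pow (1 - X : ℤ[X]), pow_add]
    simp only [map_mul, map_pow, map_neg, map_one, map_natCast, one_pow]
    ring
  rw [h, map_sum]
  refine sum_congr rfl fun j _ => ?_
  rw [map_smul, fleckFunctional_one_sub_X_pow, smul_eq_mul]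

theorem fleckFunctional_X_pow_of_lt {q t : ℕ} (l : ℕ) (ht : t < q) :
    fleckFunctional q l (X ^ t) = if l = 0 ∧ t + 1 = q then (-1) ^ t else 0 := by
  have h := fleckFunctional_one_sub_X_pow_mul_X_pow q l 0 t
  rw [pow_zero, one_mul] at h
  rw [h, sum_range_succ, sum_eq_zero]
  · have h1 : q ∣ 0 + t + 1 ↔ t + 1 = q := by
      rw [zero_add]
      exact ⟨fun h => le_antisymm ht (Nat.le_of_dvd t.succ_pos h), fun h => h ▸ dvd_rfl⟩
    by_cases hq : t + 1 = q
    · subst hq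
      cases l <;> simp [fleckWeight]
    · rw [fleckWeight, if_neg (h1.not.2 hq), mul_zero, if_neg (fun h => hq h.2), add_zero]
  · intro j hj
    have : ¬q ∣ 0 + j + 1 := by
      intro h
      have := Nat.le_of_dvd (Nat.succ_pos _) h
      have := mem_range.1 hj
      omega
    rw [fleckWeight, if_neg this, mul_zero]

variable {p : ℕ}

variable (p) in
theorem prime_dvd_neg_one_pow_add_one [Fact p.Prime] (a : ℕ) : (p : ℤ) ∣ (-1) ^ p ^ a + 1 := by
  rw [← ZMod.intCast_zmod_eq_zero_iff_dvd]
  simp [ZMod.pow_card_pow]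

theorem natCast_pow_dvd_fleckFunctional (q l k : ℕ) {f : ℤ[X]} (h : (p : ℤ[X]) ^ k ∣ f) :
    (p : ℤ) ^ k ∣ fleckFunctional q l f := by
  obtain ⟨g, rfl⟩ := h
  have : (p : ℤ[X]) ^ k * g = ((p : ℤ) ^ k) • g := by
    rw [smul_eq_C_mul]
    simp
  rw [this, map_smul]
  exact dvd_mul_right _ _

theorem prime_dvd_fleckFunctional_X_pow_sub [Fact p.Prime] {a : ℕ} {H : ℤ[X]}
    (hH : X ^ p ^ a = 1 - (1 - X) ^ p ^ a + (p : ℤ[X]) * H) (l r : ℕ) :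
    (p : ℤ) ∣ fleckFunctional (p ^ a) l (X ^ r) - (X ^ r : ℤ[X]).coeff (p ^ a * l + p ^ a - 1) := by
  have hq : 0 < p ^ a := pow_pos (Fact.out : p.Prime).pos a
  induction r using Nat.strong_induction_on generalizing l with
  | _ r ih =>
    by_cases hr : r < p ^ a
    · rw [fleckFunctional_X_pow_of_lt l hr, coeff_X_pow]
      have hiff : p ^ a * l + p ^ a - 1 = r ↔ l = 0 ∧ r + 1 = p ^ a := by
        constructor
        · intro h
          have : l = 0 := by
            by_contra h0
            have := Nat.le_mul_of_pos_right (p ^ a) (Nat.pos_of_ne_zero h0)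
            omega
          subst this
          omega
        · rintro ⟨rfl, h⟩
          omega
      simp only [hiff]
      split_ifs with h
      · have h1 := prime_dvd_neg_one_pow_add_one p a
        rw [← h.2, pow_succ] at h1
        rw [← dvd_neg, neg_sub, sub_eq_add_neg, add_comm]
        simpa using h1
      · simp
    · obtain ⟨s, rfl⟩ := Nat.exists_eq_add_of_le' (not_lt.1 hr)
      have hsplit : (X : ℤ[X]) ^ (s + p ^ a) =
          X ^ s * (1 - (1 - X) ^ p ^ a) + (p : ℤ[X]) * (X ^ s * H) := by
        rw [pow_add, hH]
        ring
      have hp1 : (p : ℤ) ∣ fleckFunctional (p ^ a) l ((p : ℤ[X]) * (X ^ s * H)) := by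
        simpa using natCast_pow_dvd_fleckFunctional (p := p) (p ^ a) l 1
          (f := (p : ℤ[X]) * (X ^ s * H)) (by simp)
      have hval : fleckFunctional (p ^ a) l (X ^ (s + p ^ a)) =
          fleckFunctional (p ^ a) l (X ^ s * (1 - (1 - X) ^ p ^ a))
            + fleckFunctional (p ^ a) l ((p : ℤ[X]) * (X ^ s * H)) := by
        rw [hsplit, map_add]
      rw [hval, add_sub_right_comm]
      refine dvd_add ?_ hp1
      cases l with
      | zero =>
        rw [fleckFunctional_zero_mul_one_sub, coeff_X_pow, if_neg (by omega), sub_zero]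
        exact dvd_zero _
      | succ l =>
        have hi : p ^ a * (l + 1) + p ^ a - 1 = p ^ a * l + p ^ a - 1 + p ^ a := by
          rw [mul_add, mul_one]
          omega
        rw [fleckFunctional_mul_one_sub hq, hi, pow_add, coeff_mul_X_pow]
        exact ih s (by omega) l

theorem prime_dvd_fleckFunctional_sub_coeff [Fact p.Prime] {a : ℕ} {H : ℤ[X]}
    (hH : X ^ p ^ a = 1 - (1 - X) ^ p ^ a + (p : ℤ[X]) * H) (l : ℕ) (f : ℤ[X]) :
    (p : ℤ) ∣ fleckFunctional (p ^ a) l f - f.coeff (p ^ a * l + p ^ a - 1) := by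
  induction f using Polynomial.induction_on' with
  | add f g hf hg =>
    rw [map_add, coeff_add, add_sub_add_comm]
    exact dvd_add hf hg
  | monomial r c =>
    rw [← smul_X_eq_monomial, map_smul, coeff_smul, ← smul_sub]
    exact Dvd.dvd.mul_left (prime_dvd_fleckFunctional_X_pow_sub hH l r) c

end Functional

section Expansion

open Polynomial

variable {p : ℕ}

theorem natCast_pow_dvd_fleckFunctional_mul_X_pow_sub [Fact p.Prime] {a : ℕ} {H : ℤ[X]}
    (hH : X ^ p ^ a = 1 - (1 - X) ^ p ^ a + (p : ℤ[X]) * H) (f : ℤ[X]) (κ : ℤ) {l s : ℕ}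
    (hls : l ≤ s)
    (h0 : (p : ℤ) ^ 2 ∣ fleckFunctional (p ^ a) 0 (f * H ^ (s - l)) - p * κ)
    (h1 : (p : ℤ) ∣ fleckFunctional (p ^ a) 1 (f * H ^ (s - l + 1)) - κ) :
    (p : ℤ) ^ (s - l + 2) ∣
      fleckFunctional (p ^ a) l (f * (X ^ p ^ a) ^ s) -
        p ^ (s - l + 1) * ((s + 1).choose l * κ) := by
  have hq : 0 < p ^ a := pow_pos (Fact.out : p.Prime).pos a
  have hexp : fleckFunctional (p ^ a) l (f * (X ^ p ^ a) ^ s) =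
      ∑ i ∈ range (s + 1), (s.choose i * (p : ℤ) ^ (s - i)) *
        if i ≤ l then fleckFunctional (p ^ a) (l - i) (f * H ^ (s - i)) else 0 := by
    rw [hH, add_pow, mul_sum, map_sum]
    refine sum_congr rfl fun i _ => ?_
    rw [← fleckFunctional_mul_one_sub_pow hq, ← smul_eq_mul (s.choose i * (p : ℤ) ^ (s - i)),
      ← map_smul]
    congr 1
    rw [smul_eq_C_mul]
    simp only [map_mul, map_pow, map_natCast, mul_pow]
    ring
  have hpascal : ((s + 1).choose l : ℤ) =
      ∑ i ∈ range (s + 1), (s.choose i : ℤ) * if i = l ∨ i + 1 = l then 1 else 0 := by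
    cases l with
    | zero => simp [sum_ite_eq']
    | succ l =>
      have (i : ℕ) : (if i = l + 1 ∨ i + 1 = l + 1 then (1 : ℤ) else 0) =
          (if i = l then 1 else 0) + if i = l + 1 then 1 else 0 := by
        split_ifs <;> omega
      simp only [this, mul_add, sum_add_distrib, mul_ite, mul_one, mul_zero, sum_ite_eq', mem_range]
      rw [if_pos (by omega), if_pos (by omega), Nat.choose_succ_succ, Nat.cast_add]
  rw [hexp, hpascal, sum_mul, mul_sum, ← sum_sub_distrib]
  refine dvd_sum fun i hi => ?_
  have hi := mem_range.1 hi
  obtain h | rfl | rfl | h : l < i ∨ i = l ∨ i + 1 = l ∨ i + 2 ≤ l := by omega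
  · rw [if_neg (by omega), if_neg (by omega)]
    simp
  · rw [if_pos le_rfl, if_pos (Or.inl rfl), Nat.sub_self]
    have := mul_dvd_mul_left ((p : ℤ) ^ (s - i)) (h0.mul_left (s.choose i : ℤ))
    rw [← pow_add] at this
    refine this.trans (dvd_of_eq ?_)
    ring
  · rw [if_pos (by omega), if_pos (Or.inr rfl), Nat.add_sub_cancel_left]
    rw [show s - i = s - (i + 1) + 1 by omega]
    have := mul_dvd_mul_left ((p : ℤ) ^ (s - (i + 1) + 1)) (h1.mul_left (s.choose i : ℤ))
    rw [← pow_succ] at this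
    refine this.trans (dvd_of_eq ?_)
    ring
  · rw [if_pos (by omega), if_neg (by omega), mul_zero, zero_mul, mul_zero, sub_zero]
    exact ((pow_dvd_pow _ (by omega)).mul_left _).mul_right _

theorem exists_pow_eq_X_pow_mul {H g ε η : ℤ[X]} {P d e j : ℕ}
    (hH : H = X ^ P * g + (p : ℤ[X]) * (X ^ d * ε) + (p : ℤ[X]) ^ 2 * η)
    (he : e ≤ P * (j + 1)) (he' : e ≤ P * j + d) :
    ∃ F F₁ F₂ : ℤ[X],
      H ^ (j + 1) = X ^ e * F + (p : ℤ[X]) * (X ^ e * F₁) + (p : ℤ[X]) ^ 2 * F₂ := by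
  obtain ⟨k, hk⟩ := powAddExpansion (X ^ P * g)
    ((p : ℤ[X]) * (X ^ d * ε) + (p : ℤ[X]) ^ 2 * η) (j + 1)
  obtain ⟨c, hc⟩ := Nat.exists_eq_add_of_le he
  obtain ⟨c', hc'⟩ := Nat.exists_eq_add_of_le he'
  have hX : ((X : ℤ[X]) ^ P) ^ (j + 1) = X ^ e * X ^ c := by rw [← pow_mul, hc, pow_add]
  have hX' : ((X : ℤ[X]) ^ P) ^ j * X ^ d = X ^ e * X ^ c' := by
    rw [← pow_mul, ← pow_add, hc', pow_add]
  refine ⟨X ^ c * g ^ (j + 1), ((j + 1 : ℕ) : ℤ[X]) * X ^ c' * (g ^ j * ε),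
    ((j + 1 : ℕ) : ℤ[X]) * (X ^ P * g) ^ j * η + k * (X ^ d * ε + (p : ℤ[X]) * η) ^ 2, ?_⟩
  rw [hH, add_assoc, hk, Nat.add_sub_cancel, mul_pow, mul_pow]
  linear_combination g ^ (j + 1) * hX
    + (((j + 1 : ℕ) : ℤ[X]) * (p : ℤ[X]) * g ^ j * ε) * hX'

theorem natCast_sq_dvd_fleckFunctional_zero_sub [Fact p.Prime] {a e j : ℕ} {G H F F₁ F₂ : ℤ[X]}
    (hH : X ^ p ^ a = 1 - (1 - X) ^ p ^ a + (p : ℤ[X]) * H) (he : e ≤ p ^ a)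
    (hF : H ^ j = X ^ e * F + (p : ℤ[X]) * (X ^ e * F₁) + (p : ℤ[X]) ^ 2 * F₂) :
    (p : ℤ) ^ 2 ∣ fleckFunctional (p ^ a) 0 (G * X ^ (p ^ a - e) * H ^ j)
      - p * (G * H ^ (j + 1)).coeff (p ^ a + e - 1) := by
  have hq : 0 < p ^ a := pow_pos (Fact.out : p.Prime).pos a
  have hX : (X : ℤ[X]) ^ (p ^ a - e) * X ^ e = X ^ p ^ a := by
    rw [← pow_add, Nat.sub_add_cancel he]
  have hsplit : G * X ^ (p ^ a - e) * H ^ j =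
      (G * (F + (p : ℤ[X]) * F₁)) * (1 - (1 - X) ^ p ^ a) + (p : ℤ) • (G * F * H)
        + (p : ℤ[X]) ^ 2 * (G * F₁ * H + G * X ^ (p ^ a - e) * F₂) := by
    rw [hF, smul_eq_C_mul, map_natCast]
    linear_combination (G * F + (p : ℤ[X]) * (G * F₁)) * (hX + hH)
  rw [hsplit, map_add, map_add, fleckFunctional_zero_mul_one_sub, zero_add, map_smul, smul_eq_mul,
    add_sub_right_comm, ← mul_sub]
  refine dvd_add ?_ (natCast_pow_dvd_fleckFunctional _ _ _ (dvd_mul_right _ _))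
  rw [pow_two]
  refine mul_dvd_mul_left _ ?_
  have h1 := prime_dvd_fleckFunctional_sub_coeff hH 0 (G * F * H)
  rw [mul_zero, zero_add] at h1
  have hcoeff : (G * F * H).coeff (p ^ a - 1) = (G * F * H * X ^ e).coeff (p ^ a + e - 1) := by
    rw [show p ^ a + e - 1 = p ^ a - 1 + e by omega, coeff_mul_X_pow]
  have h2 : (p : ℤ[X]) ∣ G * F * H * X ^ e - G * H ^ (j + 1) :=
    ⟨-(G * H * (X ^ e * F₁ + (p : ℤ[X]) * F₂)), by
      rw [pow_succ, hF]
      ring⟩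
  have h3 := natCast_dvd_coeff h2 (p ^ a + e - 1)
  rw [coeff_sub, ← hcoeff] at h3
  simpa using dvd_add h1 h3

theorem prime_dvd_fleckFunctional_one_sub [Fact p.Prime] {a e j : ℕ} {G H : ℤ[X]}
    (hH : X ^ p ^ a = 1 - (1 - X) ^ p ^ a + (p : ℤ[X]) * H) (he : e ≤ p ^ a) (he1 : 1 ≤ e) :
    (p : ℤ) ∣ fleckFunctional (p ^ a) 1 (G * X ^ (p ^ a - e) * H ^ (j + 1))
      - (G * H ^ (j + 1)).coeff (p ^ a + e - 1) := by
  have h := prime_dvd_fleckFunctional_sub_coeff hH 1 (G * X ^ (p ^ a - e) * H ^ (j + 1))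
  rwa [mul_right_comm G, show p ^ a * 1 + p ^ a - 1 = p ^ a + e - 1 + (p ^ a - e) by omega,
    coeff_mul_X_pow, mul_right_comm G] at h

theorem coeff_expand_mul {R : Type*} [CommSemiring R] {P i s : ℕ} (hs : s < P) (f g : R[X])
    (hg : g.natDegree < P) : (expand R P f * g).coeff (P * i + s) = f.coeff i * g.coeff s := by
  induction f using Polynomial.induction_on' with
  | add f f' hf hf' => rw [map_add, add_mul, coeff_add, hf, hf', coeff_add, add_mul]
  | monomial n c =>
    rw [expand_monomial, ← C_mul_X_pow_eq_monomial, mul_assoc, coeff_C_mul, coeff_X_pow_mul',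
      coeff_monomial]
    obtain h | rfl | h := lt_trichotomy n i
    · obtain ⟨k, rfl⟩ := Nat.exists_eq_add_of_lt h
      rw [if_neg h.ne, zero_mul, if_pos (by nlinarith), coeff_eq_zero_of_natDegree_lt, mul_zero]
      refine hg.trans_le (Nat.le_sub_of_add_le ?_)
      nlinarith
    · rw [mul_comm n, if_pos (by omega), if_pos rfl, Nat.add_sub_cancel_left]
    · rw [if_neg h.ne', zero_mul, if_neg, mul_zero]
      obtain ⟨k, rfl⟩ := Nat.exists_eq_add_of_lt h
      nlinarith

theorem natDegree_one_sub_X_pow_le {R : Type*} [CommRing R] (t : ℕ) :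
    ((1 - X : R[X]) ^ t).natDegree ≤ t := by
  compute_degree

theorem coeff_one_sub_X_pow_self {R : Type*} [CommRing R] (t : ℕ) :
    ((1 - X : R[X]) ^ t).coeff t = (-1) ^ t := by
  have h : (1 - X : R[X]).natDegree ≤ 1 := by compute_degree
  have := coeff_pow_of_natDegree_le (m := t) h
  simpa [coeff_one] using this

theorem prime_dvd_coeff_one_sub_X_pow_mul_pow_sub [Fact p.Prime] {A H : ℤ[X]} {b m d v : ℕ}
    (hH : (p : ℤ[X]) ∣ H - expand ℤ (p ^ b) A) (hd1 : 1 ≤ d) (hd : d ≤ p ^ b) :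
    (p : ℤ) ∣ ((1 - X) ^ (p ^ b * m + d - 1) * H ^ v).coeff (p ^ (b + 1) + (p ^ b * m + d) - 1)
      - (-1) ^ (d - 1) * ((1 - X) ^ m * A ^ v).coeff (p + m) := by
  rw [natCast_dvd_iff_map_eq_zero, Polynomial.map_sub, map_expand, sub_eq_zero] at hH
  set A' := A.map (Int.castRingHom (ZMod p)) with hA'
  have hmain : (((1 - X) ^ (p ^ b * m + d - 1) * H ^ v).map (Int.castRingHom (ZMod p))) =
      expand (ZMod p) (p ^ b) ((1 - X) ^ m * A' ^ v) * (1 - X) ^ (d - 1) := by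
    rw [Polynomial.map_mul, Polynomial.map_pow, Polynomial.map_pow, hH,
      show p ^ b * m + d - 1 = p ^ b * m + (d - 1) by omega, pow_add, pow_mul]
    simp only [Polynomial.map_sub, Polynomial.map_one, map_X, sub_pow_char_pow, map_mul, map_pow,
      map_sub, map_one, expand_X, one_pow]
    ring
  have hc := congrArg (coeff · (p ^ b * (p + m) + (d - 1))) hmain
  rw [coeff_expand_mul (by omega) _ _ ((natDegree_one_sub_X_pow_le _).trans_lt (by omega)),
    coeff_one_sub_X_pow_self, coeff_map] at hc
  have hc' : ((1 - X) ^ m * A ^ v).map (Int.castRingHom (ZMod p)) = (1 - X) ^ m * A' ^ v := by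
    simp [hA']
  rw [← hc', coeff_map] at hc
  rw [← ZMod.intCast_zmod_eq_zero_iff_dvd,
    show p ^ (b + 1) + (p ^ b * m + d) - 1 = p ^ b * (p + m) + (d - 1) by
      rw [pow_succ, mul_add]; omega]
  simp only [eq_intCast] at hc
  push_cast
  rw [hc]
  ring

end Expansion

section QuotientCoefficients

open Polynomial

variable {p : ℕ} [Fact p.Prime]

theorem prime_dvd_succ_mul_coeff_add_one {K : ℤ[X]}
    (hK : (1 - X) ^ p = 1 - X ^ p + (p : ℤ[X]) * (X * K)) {i : ℕ} (hi : i + 1 < p) :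
    (p : ℤ) ∣ ((i + 1 : ℕ) : ℤ) * K.coeff i + 1 := by
  have hp : p.Prime := Fact.out
  have hp0 : (p : ℤ[X]) ≠ 0 := Nat.cast_ne_zero.2 hp.ne_zero
  have hder : derivative (X * K) = X ^ (p - 1) - (1 - X) ^ (p - 1) := by
    have := congrArg derivative hK
    simp only [derivative_pow, derivative_sub, derivative_one, derivative_X, derivative_add,
      derivative_natCast_mul, map_natCast] at this
    apply mul_left_cancel₀ hp0
    linear_combination -this
  have hgeom : (p : ℤ[X]) ∣ (1 - X) ^ (p - 1) - ∑ j ∈ range p, X ^ j := by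
    rw [natCast_dvd_iff_map_eq_zero]
    have hne : (1 - X : (ZMod p)[X]) ≠ 0 := by
      rw [← neg_ne_zero, neg_sub, ← C_1]
      exact X_sub_C_ne_zero 1
    apply mul_right_cancel₀ hne
    simp only [Polynomial.map_sub, Polynomial.map_pow, Polynomial.map_one, map_X,
      Polynomial.map_sum, sub_mul, zero_mul, geom_sum_mul_neg]
    rw [← pow_succ, Nat.sub_add_cancel hp.one_le, sub_pow_char, one_pow, sub_self]
  have h1 := natCast_dvd_coeff hgeom i
  have h2 := congrArg (coeff · i) hder
  simp only [coeff_derivative, coeff_X_mul, coeff_sub, coeff_X_pow] at h2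
  rw [if_neg (by omega)] at h2
  have h3 : (∑ j ∈ range p, (X : ℤ[X]) ^ j).coeff i = 1 := by
    simp only [finsetSum_coeff, coeff_X_pow, sum_ite_eq, mem_range]
    rw [if_pos (by omega)]
  rw [coeff_sub, h3] at h1
  have h4 : ((i + 1 : ℕ) : ℤ) * K.coeff i + 1 = -(((1 - X : ℤ[X]) ^ (p - 1)).coeff i - 1) := by
    push_cast
    linear_combination h2
  rw [h4]
  exact h1.neg_right

/-- An integer polynomial, regarded as a rational power series. -/
noncomputable def toRatPowerSeries : ℤ[X] →+* PowerSeries ℚ :=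
  coeToPowerSeries.ringHom.comp (mapRingHom (Int.castRingHom ℚ))

theorem coeff_toRatPowerSeries (f : ℤ[X]) (i : ℕ) :
    PowerSeries.coeff i (toRatPowerSeries f) = f.coeff i := by
  simp [toRatPowerSeries]

theorem toRatPowerSeries_X : toRatPowerSeries X = PowerSeries.X := by
  simp [toRatPowerSeries]

theorem toRatPowerSeries_mem_integralUpTo (f : ℤ[X]) (D : ℕ) :
    toRatPowerSeries f ∈ integralUpTo p D := by
  intro i _
  rw [coeff_toRatPowerSeries]
  exact intCast_mem _ _

theorem coeff_quotient_pow_congr {K : ℤ[X]}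
    (hK : (1 - X) ^ p = 1 - X ^ p + (p : ℤ[X]) * (X * K)) {m w : ℕ} (hw : 2 ≤ w) (hwp : w ≤ p) :
    (((((1 - X) ^ m * (X * K) ^ (m + w)).coeff (p + m) : ℤ) : ℚ)
      - (-1) ^ m * ((w - 1).factorial * bernHigher (m + 1) (p - w))) / p ∈ pIntegral p := by
  let L : PowerSeries ℚ := PowerSeries.mk fun i => -(1 / ((i + 1 : ℕ) : ℚ))
  have hp2 := (Fact.out : p.Prime).two_le
  have hL : logOneSub = PowerSeries.X * L := by
    ext i
    cases i with
    | zero => simp [logOneSub]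
    | succ i => simp [logOneSub, L, PowerSeries.coeff_succ_X_mul]
  have hdiv {i : ℕ} (hi : i ≤ p - 2) : 1 / ((i + 1 : ℕ) : ℚ) ∈ pIntegral p :=
    one_div_natCast_mem_pIntegral (Nat.not_dvd_of_pos_of_lt i.succ_pos (by omega))
  have hLint : L ∈ integralUpTo p (p - 2) := by
    intro i hi
    rw [PowerSeries.coeff_mk]
    exact neg_mem (hdiv hi)
  have hKL : toRatPowerSeries K - L ∈ smallUpTo p (p - 2) := by
    intro i hi
    have h := intCast_div_prime_mem_pIntegral
      (prime_dvd_succ_mul_coeff_add_one hK (i := i) (by omega))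
    convert mul_mem (hdiv hi) h using 1
    have : ((i + 1 : ℕ) : ℚ) ≠ 0 := Nat.cast_ne_zero.2 i.succ_ne_zero
    rw [map_sub, coeff_toRatPowerSeries, PowerSeries.coeff_mk]
    push_cast at this ⊢
    field_simp
    ring
  have hone : (1 - PowerSeries.X : PowerSeries ℚ) ^ m = toRatPowerSeries ((1 - X) ^ m) := by
    simp [toRatPowerSeries_X]
  have hpow := mul_mem_smallUpTo
    (pow_sub_pow_mem_smallUpTo (toRatPowerSeries_mem_integralUpTo K _) hLint hKL (m + w))
    (toRatPowerSeries_mem_integralUpTo ((1 - X) ^ m) _) (p - w) (by omega)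
  have hlog := coeff_logOneSub_pow_congr (p := p) (m := m) hw hwp
  have hdeg : p + m = (p - w) + (m + w) := by omega
  convert add_mem hpow hlog using 1
  have hcoeff (f : PowerSeries ℚ) : PowerSeries.coeff (p + m)
      ((1 - PowerSeries.X) ^ m * (PowerSeries.X * f) ^ (m + w)) =
        PowerSeries.coeff (p - w) (f ^ (m + w) * (1 - PowerSeries.X) ^ m) := by
    rw [mul_pow, mul_left_comm, hdeg, PowerSeries.coeff_X_pow_mul, mul_comm]
  rw [← coeff_toRatPowerSeries, map_mul toRatPowerSeries, ← hone, hL, map_pow toRatPowerSeries,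
    map_mul toRatPowerSeries, toRatPowerSeries_X, hcoeff, hcoeff, sub_mul, map_sub]
  ring

end QuotientCoefficients

section FleckSum

open Polynomial

theorem fleckFunctional_eq_sum_choose {p a e n : ℕ} (hp : 0 < p) (ha : 1 ≤ a) (he : 1 ≤ e)
    (heq : e ≤ p ^ a) (hn : 1 ≤ n) (l : ℕ) :
    fleckFunctional (p ^ a) l ((1 - X) ^ (e - 1) * X ^ (p ^ a * n - e)) =
      (-1) ^ (l + e) * ∑ k ∈ Icc (l + 1) n,
        ((p ^ a * n - e).choose (p ^ a * k - e) : ℤ) * (-1) ^ (p * k) * ((k - 1).choose l : ℤ) := by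
  have hq : 0 < p ^ a := pow_pos hp a
  have hge {k : ℕ} (hk : 1 ≤ k) : e ≤ p ^ a * k := heq.trans (Nat.le_mul_of_pos_right _ hk)
  rw [fleckFunctional_one_sub_X_pow_mul_X_pow, mul_sum]
  symm
  refine sum_of_injOn (fun k => p ^ a * k - e) ?_ ?_ ?_ ?_
  · intro k hk k' hk' h
    simp only [coe_Icc, Set.mem_Icc] at hk hk' h
    have h1 := hge (k := k) (by omega)
    have h2 := hge (k := k') (by omega)
    exact Nat.eq_of_mul_eq_mul_left hq (by omega)
  · intro k hk
    simp only [coe_Icc, Set.mem_Icc, coe_range, Set.mem_Iio] at hk ⊢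
    have := Nat.mul_le_mul_left (p ^ a) hk.2
    omega
  · intro j hj hj'
    have hj := mem_range.1 hj
    rw [fleckWeight]
    split_ifs with hdvd
    · obtain ⟨k, hk⟩ := hdvd
      have hn' := hge hn
      have hk1 : 1 ≤ k := Nat.pos_of_ne_zero (by rintro rfl; omega)
      have hkn : k ≤ n := Nat.le_of_mul_le_mul_left (by omega) hq
      have hkl : k - 1 < l := by
        by_contra hlt
        refine hj' ⟨k, ?_, ?_⟩
        · simp only [coe_Icc, Set.mem_Icc]
          omega
        · simp only
          omega
      rw [hk, Nat.mul_div_cancel_left _ hq, Nat.choose_eq_zero_of_lt hkl]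
      simp
    · simp
  · intro k hk
    have hk := mem_Icc.1 hk
    have hek := hge (k := k) (by omega)
    have hidx : e - 1 + (p ^ a * k - e) + 1 = p ^ a * k := by omega
    rw [fleckWeight, hidx, if_pos (dvd_mul_right _ _), Nat.mul_div_cancel_left _ hq]
    have hpar : (-1 : ℤ) ^ (p ^ a * k) = (-1) ^ (p * k) := by
      apply neg_one_pow_congr
      rw [Nat.even_mul, Nat.even_mul, Nat.even_pow]
      have : a ≠ 0 := by omega
      tauto
    have hsub : (-1 : ℤ) ^ (p ^ a * k - e) * (-1) ^ e = (-1) ^ (p * k) := by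
      rw [← pow_add, Nat.sub_add_cancel hek, hpar]
    have hsq : (-1 : ℤ) ^ e * (-1) ^ e = 1 := by rw [← mul_pow]; simp
    rw [← hsub, pow_add]
    linear_combination ((-1) ^ l * ((p ^ a * n - e).choose (p ^ a * k - e) : ℤ)
      * (-1) ^ (p ^ a * k - e) * ((k - 1).choose l : ℤ)) * hsq

theorem exists_fleck_sum_eq {p : ℕ} [Fact p.Prime] {K : ℤ[X]}
    (hK : (1 - X) ^ p = 1 - X ^ p + (p : ℤ[X]) * (X * K)) {a l m n d : ℕ} (ha : 1 ≤ a)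
    (hm : m < p) (hn : l + m + 2 ≤ n) (hd1 : 1 ≤ d) (hd : d ≤ p ^ (a - 2)) :
    ∃ S : ℤ, ∑ k ∈ Icc (l + 1) n, ((p ^ a * n - (p ^ (a - 1) * m + d)).choose
          (p ^ a * k - (p ^ (a - 1) * m + d)) : ℤ) * (-1) ^ (p * k) * ((k - 1).choose l : ℤ) =
        p ^ (n - l) * S ∧
      (p : ℤ) ∣ S - (-1) ^ (l + 1) * (n.choose l *
        ((-1) ^ m * ((1 - X) ^ m * (X * K) ^ (n - l)).coeff (p + m))) := by
  have hp : p.Prime := Fact.out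
  obtain ⟨b, rfl⟩ := Nat.exists_eq_add_of_le' ha
  have hdP : d ≤ p ^ b := hd.trans (Nat.pow_le_pow_right hp.pos (by omega))
  rw [Nat.add_sub_cancel]
  set e := p ^ b * m + d with he
  have heq : e ≤ p ^ (b + 1) := by
    have := Nat.mul_le_mul_left (p ^ b) hm
    rw [pow_succ]
    rw [Nat.succ_eq_add_one, mul_add] at this
    omega
  obtain ⟨j, hj⟩ : ∃ j, n - 1 - l = j + 1 := ⟨n - l - 2, by omega⟩
  have hmj : m ≤ j := by omega
  have hPj := Nat.mul_le_mul_left (p ^ b) hmj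
  obtain ⟨H, ε, η, hH, hHdec⟩ := exists_quotient_eq hK ha hd
  rw [Nat.add_sub_cancel] at hHdec
  have hHdec' : H = X ^ p ^ b * expand ℤ (p ^ b) K + (p : ℤ[X]) * (X ^ d * ε)
      + (p : ℤ[X]) ^ 2 * η := by
    rw [hHdec, map_mul, expand_X]
  obtain ⟨F, F₁, F₂, hF⟩ := exists_pow_eq_X_pow_mul (e := e) (j := j) hHdec'
    (by rw [mul_add]; omega) (by omega)
  set κ := ((1 - X) ^ (e - 1) * H ^ (j + 1 + 1)).coeff (p ^ (b + 1) + e - 1) with hκ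
  have h0 := natCast_sq_dvd_fleckFunctional_zero_sub (G := (1 - X) ^ (e - 1)) hH heq hF
  have h1 := prime_dvd_fleckFunctional_one_sub (G := (1 - X) ^ (e - 1)) (j := j + 1) hH heq
    (by omega)
  have hM := natCast_pow_dvd_fleckFunctional_mul_X_pow_sub hH _ κ (l := l) (s := n - 1)
    (by omega) (by rw [hj]; exact h0) (by rw [hj]; exact h1)
  have hX : (1 - X : ℤ[X]) ^ (e - 1) * X ^ (p ^ (b + 1) - e) * (X ^ p ^ (b + 1)) ^ (n - 1) =
      (1 - X) ^ (e - 1) * X ^ (p ^ (b + 1) * n - e) := by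
    rw [mul_assoc, ← pow_mul, ← pow_add]
    congr 2
    obtain ⟨n, rfl⟩ : ∃ k, n = k + 1 := ⟨n - 1, by omega⟩
    rw [Nat.add_sub_cancel, mul_add]
    omega
  have hκ' := prime_dvd_coeff_one_sub_X_pow_mul_pow_sub (A := X * K) (m := m) (v := n - l)
    (H := H) (b := b) (d := d)
    ⟨X ^ d * ε + (p : ℤ[X]) * η, by linear_combination hHdec⟩ hd1 hdP
  rw [← he] at hκ'
  rw [show n - l = j + 1 + 1 by omega] at hκ' ⊢
  rw [← hκ] at hκ'
  rw [hX, fleckFunctional_eq_sum_choose hp.pos ha (by omega) heq (by omega), hj,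
    Nat.sub_add_cancel (by omega : 1 ≤ n)] at hM
  set Z := ∑ k ∈ Icc (l + 1) n, ((p ^ (b + 1) * n - e).choose (p ^ (b + 1) * k - e) : ℤ)
    * (-1) ^ (p * k) * ((k - 1).choose l : ℤ)
  set c := ((1 - X) ^ m * (X * K) ^ (j + 1 + 1)).coeff (p + m)
  obtain ⟨t, ht⟩ := hM
  obtain ⟨u, hu⟩ := hκ'
  have hsq (i : ℕ) : (-1 : ℤ) ^ i * (-1) ^ i = 1 := by rw [← mul_pow]; simp
  obtain ⟨r, hr⟩ : (p : ℤ) ∣ (-1) ^ (p ^ b * m) - (-1) ^ m := by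
    rw [pow_mul]
    have h := prime_dvd_neg_one_pow_add_one p b
    rw [← sub_neg_eq_add] at h
    exact h.trans (sub_dvd_pow_sub_pow _ _ m)
  have hsign : (-1 : ℤ) ^ (l + e) * (-1) ^ (d - 1) = (-1) ^ (l + 1) * (-1) ^ (p ^ b * m) := by
    obtain ⟨d, rfl⟩ : ∃ k, d = k + 1 := ⟨d - 1, by omega⟩
    rw [he, Nat.add_sub_cancel]
    linear_combination ((-1) ^ (l + 1) * (-1) ^ (p ^ b * m)) * hsq d
  refine ⟨(-1) ^ (l + e) * (n.choose l * κ + p * t), ?_, ?_⟩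
  · linear_combination (-Z) * hsq (l + e) + (-1) ^ (l + e) * ht
  · refine ⟨(-1) ^ (l + e) * (n.choose l * u + t) + (-1) ^ (l + 1) * n.choose l * c * r, ?_⟩
    linear_combination ((-1) ^ (l + e) * n.choose l) * hu + (n.choose l * c) * hsign
      + ((-1) ^ (l + 1) * n.choose l * c) * hr

theorem factorial_div_prod_eq {l m n : ℕ} (h : l + m + 1 ≤ n) :
    (n.factorial : ℚ) / l.factorial / ∏ k ∈ range (m + 1), ((n : ℚ) - l - k) =
      n.choose l * ((n - l - m - 1).factorial : ℚ) := by
  have hprod : ∏ k ∈ range (m + 1), ((n : ℚ) - l - k) = ((n - l).descFactorial (m + 1) : ℚ) := by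
    rw [Nat.descFactorial_eq_prod_range, Nat.cast_prod]
    refine prod_congr rfl fun k hk => ?_
    have := mem_range.1 hk
    rw [Nat.cast_sub (by omega), Nat.cast_sub (by omega)]
  have h1 := Nat.choose_mul_factorial_mul_factorial (by omega : l ≤ n)
  have h2 := Nat.factorial_mul_descFactorial (by omega : m + 1 ≤ n - l)
  rw [← Nat.sub_sub] at h2
  have hdesc : ((n - l).descFactorial (m + 1) : ℚ) ≠ 0 := by
    rw [Nat.cast_ne_zero, Ne, Nat.descFactorial_eq_zero_iff_lt]
    omega
  have hl : (l.factorial : ℚ) ≠ 0 := Nat.cast_ne_zero.2 l.factorial_ne_zero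
  rw [hprod, ← h1, ← h2]
  push_cast
  field_simp

end FleckSum

end FleckQuotient

open FleckQuotient

theorem stmt12 (p a l m n d : ℕ) (hp : p.Prime) (ha : 1 ≤ a) (hm : m < p)
    (h1 : 2 ≤ (n:ℤ) - l - m) (h2 : (n:ℤ) - l - m ≤ p)
    (hd1 : 1 ≤ d) (hd2 : d ≤ p^(a-2)) :
    modCong p 1
      ((1/(p:ℚ)^(n-l)) * ∑ k ∈ Finset.Icc (l+1) n,
        ((p^a*n - p^(a-1)*m - d).choose (p^a*k - p^(a-1)*m - d) : ℚ)
          * (-1:ℚ)^(p*k) * ((k-1).choose l : ℚ))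
      ((-1:ℚ)^(l+1) * ((n.factorial : ℚ) / (l.factorial : ℚ))
          / (∏ k ∈ Finset.range (m+1), ((n:ℚ) - (l:ℚ) - (k:ℚ)))
          * bernHigher (m+1) (((p:ℤ) - n + l + m).toNat)) := by
  have : Fact p.Prime := ⟨hp⟩
  have hp0 : (p : ℚ) ≠ 0 := Nat.cast_ne_zero.2 hp.ne_zero
  obtain ⟨w, rfl⟩ : ∃ w, n = l + (m + w) := ⟨n - l - m, by omega⟩
  obtain ⟨K, hK⟩ := exists_one_sub_X_pow_prime_eq p
  obtain ⟨S, hS, t, ht⟩ := exists_fleck_sum_eq hK (l := l) (n := l + (m + w)) ha hm (by omega)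
    hd1 hd2
  have hc := coeff_quotient_pow_congr hK (m := m) (w := w) (by omega) (by omega)
  rw [Nat.add_sub_cancel_left] at hS ht
  rw [Nat.add_sub_cancel_left, mul_div_assoc, factorial_div_prod_eq (by omega),
    show l + (m + w) - l - m - 1 = w - 1 by omega,
    show ((p : ℤ) - (l + (m + w) : ℕ) + l + m).toNat = p - w by omega]
  simp only [Nat.sub_sub]
  have hS' := congrArg (Int.cast : ℤ → ℚ) hS
  push_cast at hS'
  rw [hS', one_div, inv_mul_cancel_left₀ (pow_ne_zero _ hp0)]
  apply modCong_one_of_sub_div_mem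
  set c := ((1 - Polynomial.X) ^ m * (Polynomial.X * K) ^ (m + w)).coeff (p + m)
  set B := bernHigher (m + 1) (p - w)
  have ht' := congrArg (Int.cast : ℤ → ℚ) ht
  push_cast at ht'
  have hsq : (-1 : ℚ) ^ m * (-1) ^ m = 1 := by rw [← mul_pow]; simp
  have hmem : ((-1 : ℚ) ^ (l + 1) * ((l + (m + w)).choose l * (-1) ^ m)) ∈ pIntegral p :=
    mul_mem (pow_mem (neg_mem (one_mem _)) _)
      (mul_mem (natCast_mem _ _) (pow_mem (neg_mem (one_mem _)) _))
  convert add_mem (intCast_mem (pIntegral p) t) (mul_mem hmem hc) using 1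
  field_simp
  linear_combination ht' +
    ((-1) ^ (l + 1) * ((l + (m + w)).choose l : ℚ) * (w - 1).factorial * B) * hsq
end

section
/- Let k ≥ 1 and m ≥ 0 be integers. Then Σ (−1)^{i_1+⋯+i_k}·((i_1+⋯+i_k − 1)!/(i_1!⋯i_k!))·∏_{j=1}^k (B_j^{(m)}/j!)^{i_j} = m·(−1)^k·B_k/(k!·k), where the sum ranges over all k-tuples (i_1,…,i_k) of nonnegative integers with Σ_{j=1}^k j·i_j = k. -/
open Finset

open PowerSeries

/-- `B_k^{(m)} / k!` is the `k`-th coefficient of `(X / (exp X - 1)) ^ m`. -/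
theorem bernHigher_div_factorial (m k : ℕ) :
    bernHigher m k / k.factorial = coeff k (bernoulliPowerSeries ℚ ^ m) := by
  have h : bernoulliPowerSeries ℚ ^ m = ∏ _j : Fin m, bernoulliPowerSeries ℚ := by simp
  rw [bernHigher, mul_div_cancel_left₀ _ (by positivity), h, coeff_prod]
  refine Finset.sum_nbij' (fun i => Finsupp.equivFunOnFinite.symm i) (fun i => i) ?_ ?_ ?_ ?_ ?_
  · intro i hi
    simpa [mem_finsuppAntidiag, Finset.Nat.mem_antidiagonalTuple] using hi
  · intro i hi
    simpa [mem_finsuppAntidiag, Finset.Nat.mem_antidiagonalTuple] using hi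
  · intro i _; rfl
  · intro i _; ext; rfl
  · intro i _
    simp [bernoulliPowerSeries]

theorem X_mul_derivative_bernoulliPowerSeries :
    X * derivative ℚ (bernoulliPowerSeries ℚ) =
      bernoulliPowerSeries ℚ * (1 - bernoulli'PowerSeries ℚ) := by
  have hE : (exp ℚ - 1 : PowerSeries ℚ) ≠ 0 := by
    intro h
    have := congrArg (coeff 1) h
    simp [coeff_exp, coeff_one] at this
  have h1 := bernoulliPowerSeries_mul_exp_sub_one ℚ
  have h2 := bernoulli'PowerSeries_mul_exp_sub_one ℚ
  have h3 : bernoulli'PowerSeries ℚ = bernoulliPowerSeries ℚ * exp ℚ := by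
    apply mul_right_cancel₀ hE
    linear_combination h2 - exp ℚ * h1
  have h4 := congrArg (derivative ℚ) h1
  have h5 : derivative ℚ (exp ℚ) = exp ℚ := by
    ext n
    simp [coeff_derivative, coeff_exp, Nat.factorial_succ]
    field_simp
  simp [h5] at h4
  rw [h3]
  linear_combination bernoulliPowerSeries ℚ * h4 - derivative ℚ (bernoulliPowerSeries ℚ) * h1

/-- If `f` agrees with `1 + p` up to order `k`, where `X ∣ p`, then the derivative of the truncated
series `∑ (-1)ⁿ pⁿ / n` of `-log (1 + p)` agrees below order `k` with minus the logarithmic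
derivative of `f`. -/
theorem X_pow_dvd_mul_derivative_log (k : ℕ) (f p : PowerSeries ℚ) (hp : X ∣ p)
    (hf : X ^ (k + 1) ∣ f - 1 - p) :
    X ^ (k + 1) ∣ X * (f * derivative ℚ
      (∑ n ∈ range k, C ((-1 : ℚ) ^ (n + 1) / (n + 1 : ℕ)) * p ^ (n + 1)) + derivative ℚ f) := by
  have hL : derivative ℚ (∑ n ∈ range k, C ((-1 : ℚ) ^ (n + 1) / (n + 1 : ℕ)) * p ^ (n + 1)) =
      - derivative ℚ p * ∑ n ∈ range k, (-p) ^ n := by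
    rw [map_sum, mul_sum]
    refine sum_congr rfl fun n _ => ?_
    have hc : C ((-1 : ℚ) ^ (n + 1) / (n + 1 : ℕ)) * ((n + 1 : ℕ) : PowerSeries ℚ) =
        (-1) ^ (n + 1) := by
      rw [← map_natCast (C (R := ℚ)), ← map_mul, div_mul_cancel₀ _ (by positivity)]
      simp
    rw [Derivation.leibniz, Derivation.leibniz_pow]
    simp only [derivative_C, smul_eq_mul, nsmul_eq_mul, Nat.add_sub_cancel]
    rw [neg_pow p]
    linear_combination p ^ n * derivative ℚ p * hc
  have hg := mul_neg_geom_sum (-p) k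
  obtain ⟨q, rfl⟩ := hp
  obtain ⟨r, hr⟩ := hf
  have hf' : f = 1 + X * q + X ^ (k + 1) * r := by linear_combination hr
  rw [hL]
  have hd : derivative ℚ f = derivative ℚ (X * q) +
      (X ^ (k + 1) * derivative ℚ r + ((k : PowerSeries ℚ) + 1) * X ^ k * r) := by
    rw [hf']
    simp [Derivation.leibniz_pow]
    ring
  rw [hd, hf']
  generalize derivative ℚ (X * q) = d at *
  refine ⟨r * (- X * d * ∑ n ∈ range k, (-(X * q)) ^ n) + d * (-q) ^ k +
    (X * derivative ℚ r + ((k : PowerSeries ℚ) + 1) * r), ?_⟩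
  have : (-(X * q)) ^ k = X ^ k * (-q) ^ k := by rw [← mul_pow]; ring
  rw [this] at hg
  linear_combination (-X * d) * hg

theorem coeff_sum_pow (k n : ℕ) (a : ℕ → ℚ) :
    coeff k ((∑ j : Fin k, C (a (j + 1)) * X ^ ((j : ℕ) + 1)) ^ n) =
      ∑ i ∈ (piAntidiag (univ : Finset (Fin k)) n).filter 
          (fun i => ∑ j : Fin k, ((j : ℕ) + 1) * i j = k),
        (n.factorial : ℚ) / (∏ j, ((i j).factorial : ℚ)) * ∏ j : Fin k, a (j + 1) ^ i j := by
  rw [sum_pow_eq_sum_piAntidiag, map_sum, sum_filter]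
  refine sum_congr rfl fun i hi => ?_
  have hs : ∑ j, i j = n := (mem_piAntidiag.1 hi).1
  have hm : (Nat.multinomial univ i : ℚ) = (n.factorial : ℚ) / (∏ j, ((i j).factorial : ℚ)) := by
    rw [eq_div_iff (by positivity), mul_comm, ← hs]
    exact_mod_cast Nat.multinomial_spec univ i
  have : (Nat.multinomial univ i : PowerSeries ℚ) *
      ∏ j : Fin k, (C (a (j + 1)) * X ^ ((j : ℕ) + 1)) ^ i j =
      C ((Nat.multinomial univ i : ℚ) * ∏ j : Fin k, a (j + 1) ^ i j) *
        X ^ (∑ j : Fin k, ((j : ℕ) + 1) * i j) := by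
    simp [mul_pow, prod_mul_distrib, ← pow_mul, prod_pow_eq_pow_sum, mul_assoc]
  rw [this, coeff_C_mul, coeff_X_pow, hm]
  simp [eq_comm]

theorem sum_weighted_eq_coeff_log (k : ℕ) (hk : 1 ≤ k) (a : ℕ → ℚ) :
    ∑ i ∈ (Fintype.piFinset fun _ : Fin k => Finset.range (k+1)).filter
        (fun i => ∑ j : Fin k, ((j:ℕ)+1) * i j = k),
      (-1:ℚ)^(∑ j : Fin k, i j) * (((∑ j : Fin k, i j) - 1).factorial : ℚ)
          / (∏ j : Fin k, ((i j).factorial : ℚ))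
          * ∏ j : Fin k, a ((j:ℕ)+1) ^ (i j) =
    coeff k (∑ n ∈ range k, C ((-1 : ℚ) ^ (n + 1) / (n + 1 : ℕ)) *
      (∑ j : Fin k, C (a (j + 1)) * X ^ ((j : ℕ) + 1)) ^ (n + 1)) := by
  have hle : ∀ i : Fin k → ℕ, ∑ j : Fin k, ((j:ℕ)+1) * i j = k → ∑ j, i j ≤ k := fun i hi =>
    le_of_le_of_eq (sum_le_sum fun j _ => Nat.le_mul_of_pos_left (i j) (Nat.succ_pos (j : ℕ))) hi
  have hpos : ∀ i : Fin k → ℕ, ∑ j : Fin k, ((j:ℕ)+1) * i j = k → 0 < ∑ j, i j := by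
    intro i hi
    by_contra h
    have h0 : ∀ j, i j = 0 := by simpa using h
    simp [h0] at hi
    omega
  rw [map_sum]
  simp only [coeff_C_mul, coeff_sum_pow]
  rw [← sum_fiberwise_of_maps_to (t := range k) (g := fun i => ∑ j, i j - 1)]
  · refine sum_congr rfl fun n hn => ?_
    rw [mul_sum, filter_filter]
    refine sum_congr ?_ ?_
    · ext i
      simp only [mem_filter, Fintype.mem_piFinset, mem_range, mem_piAntidiag]
      constructor
      · rintro ⟨-, h1, h2⟩
        have := hpos i h1
        have hs : ∑ j, i j = n + 1 := by omega
        exact ⟨⟨hs, by simp⟩, h1⟩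
      · rintro ⟨⟨h1, -⟩, h2⟩
        have hs : ∑ j, i j = n + 1 := h1
        refine ⟨fun j => ?_, h2, by omega⟩
        have := hle i h2
        have := single_le_sum (f := i) (fun _ _ => Nat.zero_le _) (mem_univ j)
        omega
    · intro i hi
      have hs : ∑ j, i j = n + 1 := (mem_piAntidiag.1 (mem_filter.1 hi).1).1
      rw [hs, Nat.add_sub_cancel, Nat.factorial_succ]
      push_cast
      field_simp
  · intro i hi
    have h := (mem_filter.1 hi).2
    have := hpos i h
    have := hle i h
    simp only [mem_range]
    omega

theorem stmt13 (k m : ℕ) (hk : 1 ≤ k) :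
    ∑ i ∈ (Fintype.piFinset fun _ : Fin k => Finset.range (k+1)).filter
        (fun i => ∑ j : Fin k, ((j:ℕ)+1) * i j = k),
      (-1:ℚ)^(∑ j : Fin k, i j) * (((∑ j : Fin k, i j) - 1).factorial : ℚ)
          / (∏ j : Fin k, ((i j).factorial : ℚ))
          * ∏ j : Fin k, (bernHigher m ((j:ℕ)+1) / (((j:ℕ)+1).factorial : ℚ))^(i j)
      = (m:ℚ) * (-1:ℚ)^k * bernoulli k / ((k.factorial : ℚ) * (k:ℚ)) := by
  set F := bernoulliPowerSeries ℚ with hF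
  have hF0 : coeff 0 F = 1 := by simp [hF, bernoulliPowerSeries]
  simp only [bernHigher_div_factorial]
  rw [sum_weighted_eq_coeff_log k hk (fun j => coeff j (F ^ m))]
  set p : PowerSeries ℚ := ∑ j : Fin k, C (coeff (j + 1) (F ^ m)) * X ^ ((j : ℕ) + 1) with hp
  have hXp : X ∣ p := dvd_sum fun j _ => (dvd_pow_self X (Nat.succ_ne_zero _)).mul_left _
  have hfp : X ^ (k + 1) ∣ F ^ m - 1 - p := by
    rw [X_pow_dvd_iff]
    intro d hd
    have hcp : coeff d p = ∑ j ∈ range k, if d = j + 1 then coeff (j + 1) (F ^ m) else 0 := by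
      rw [sum_range, hp, map_sum]
      simp [coeff_C_mul, coeff_X_pow]
    rw [map_sub, map_sub, hcp]
    rcases d with _ | d
    · have : constantCoeff F = 1 := by simpa using hF0
      simp [this]
    · have hdk : d < k := by omega
      simp [coeff_one, hdk]
  have h := X_pow_dvd_mul_derivative_log k (F ^ m) p hXp hfp
  set L := ∑ n ∈ range k, C ((-1 : ℚ) ^ (n + 1) / (n + 1 : ℕ)) * p ^ (n + 1)
  have hd : X * derivative ℚ (F ^ m) = F ^ m * ((m : PowerSeries ℚ) *
      (1 - bernoulli'PowerSeries ℚ)) := by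
    rcases m with _ | m
    · simp
    · rw [Derivation.leibniz_pow]
      simp only [smul_eq_mul, nsmul_eq_mul, Nat.add_sub_cancel]
      linear_combination ((m + 1 : ℕ) : PowerSeries ℚ) * F ^ m *
        X_mul_derivative_bernoulliPowerSeries
  have hu : IsUnit (F ^ m) := by
    apply IsUnit.pow
    rw [isUnit_iff_constantCoeff, ← coeff_zero_eq_constantCoeff_apply, hF0]
    exact isUnit_one
  have h' : X ^ (k + 1) ∣ F ^ m * (X * derivative ℚ L +
      (m : PowerSeries ℚ) * (1 - bernoulli'PowerSeries ℚ)) := by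
    convert h using 1
    linear_combination -hd
  rw [hu.dvd_mul_left, X_pow_dvd_iff] at h'
  have hc := h' k (Nat.lt_succ_self k)
  obtain ⟨k, rfl⟩ : ∃ l, k = l + 1 := ⟨k - 1, by omega⟩
  rw [← map_natCast (C (R := ℚ)), map_add, coeff_C_mul, coeff_succ_X_mul, coeff_derivative] at hc
  simp [bernoulli'PowerSeries, coeff_one] at hc
  rw [bernoulli, ← mul_assoc, mul_assoc (m : ℚ), ← pow_add, Even.neg_one_pow ⟨_, rfl⟩]
  rw [eq_div_iff (by positivity)]
  push_cast
  have hk0 : ((k + 1).factorial : ℚ) ≠ 0 := by positivity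
  field_simp at hc
  linear_combination hc
end

section
/- Let p be an odd prime and let b be a positive integer. Then the generalized Wilson quotient w_{p^b} = (1 + ∏_{0<a<p^b, p∤a} a)/p^b is an integer, and w_{p^b} ≡ (p·B_{φ(p^b)} − p + 1)/p^b (mod p). -/
open Finset

theorem ZMod.eq_one_or_neg_one_of_sq_eq_one {p b : ℕ} (hp : p.Prime) (hodd : Odd p)
    {x : ZMod (p ^ b)} (hx : x * x = 1) : x = 1 ∨ x = -1 := by
  obtain ⟨z, rfl⟩ := ZMod.intCast_surjective x
  have hdvd : ((p ^ b : ℕ) : ℤ) ∣ (z - 1) * (z + 1) := by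
    rw [← ZMod.intCast_zmod_eq_zero_iff_dvd]
    push_cast
    linear_combination hx
  have hp' : Prime (p : ℤ) := Nat.prime_iff_prime_int.mp hp
  push_cast at hdvd
  by_cases h : (p : ℤ) ∣ z - 1
  · left
    have h2 : ¬ (p : ℤ) ∣ z + 1 := by
      intro h'
      have h3 : (p : ℤ) ∣ 2 := by
        have := dvd_sub h' h
        ring_nf at this
        exact this
      have h4 : p ∣ 2 := by exact_mod_cast h3
      have := (Nat.prime_dvd_prime_iff_eq hp Nat.prime_two).mp h4
      subst this
      exact absurd hodd (by decide)
    have hc : IsCoprime ((p : ℤ) ^ b) (z + 1) :=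
      ((Irreducible.coprime_iff_not_dvd hp'.irreducible).mpr h2).pow_left
    have := hc.dvd_of_dvd_mul_right hdvd
    rw [← sub_eq_zero]
    exact_mod_cast (ZMod.intCast_zmod_eq_zero_iff_dvd (z - 1) (p ^ b)).mpr (by exact_mod_cast this)
  · right
    have hc : IsCoprime ((p : ℤ) ^ b) (z - 1) :=
      ((Irreducible.coprime_iff_not_dvd hp'.irreducible).mpr h).pow_left
    have := hc.dvd_of_dvd_mul_left hdvd
    rw [← sub_eq_zero, sub_neg_eq_add]
    exact_mod_cast (ZMod.intCast_zmod_eq_zero_iff_dvd (z + 1) (p ^ b)).mpr (by exact_mod_cast this)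

/-- The product of all units modulo an odd prime power is `-1`. -/
theorem ZMod.prod_units_prime_pow {p b : ℕ} [NeZero (p ^ b)] (hp : p.Prime) (hodd : Odd p) :
    ∏ u : (ZMod (p ^ b))ˣ, u = -1 := by
  classical
  have h : ∏ u ∈ (univ.erase (-1) : Finset (ZMod (p ^ b))ˣ), u = 1 := by
    refine prod_involution (fun u _ => u⁻¹) (by simp) ?_ ?_ (by simp)
    · intro u hu hu1 h
      have hsq : (u : ZMod (p ^ b)) * u = 1 := by
        nth_rewrite 2 [← h]
        simp
      rcases ZMod.eq_one_or_neg_one_of_sq_eq_one hp hodd hsq with h | h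
      · exact hu1 (Units.ext h)
      · exact (mem_erase.mp hu).1 (Units.ext (by simpa using h))
    · intro u hu
      simpa [inv_eq_iff_eq_inv] using hu
  rw [← mul_prod_erase univ _ (mem_univ (-1 : (ZMod (p ^ b))ˣ)), h, mul_one]

theorem filter_not_dvd_Ico_eq {p b : ℕ} (hp : p.Prime) (hb : 0 < b) :
    (Ico 1 (p ^ b)).filter (fun a => ¬ p ∣ a) =
      (range (p ^ b)).filter (fun a => (p ^ b).Coprime a) := by
  ext a
  simp only [mem_filter, mem_Ico, mem_range, Nat.coprime_pow_left_iff hb,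
    hp.coprime_iff_not_dvd]
  constructor
  · tauto
  · rintro ⟨h1, h2⟩
    refine ⟨⟨Nat.pos_of_ne_zero ?_, h1⟩, h2⟩
    rintro rfl
    exact h2 (dvd_zero p)

/-- Gauss's generalization of Wilson's theorem for odd prime powers. -/
theorem prime_pow_dvd_one_add_prod_coprime {p b : ℕ} (hp : p.Prime) (hodd : Odd p) :
    (p : ℤ) ^ b ∣ 1 + ∏ a ∈ (range (p ^ b)).filter (fun a => (p ^ b).Coprime a), (a : ℤ) := by
  have : NeZero (p ^ b) := ⟨pow_ne_zero _ hp.ne_zero⟩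
  have key : ∏ a ∈ (range (p ^ b)).filter (fun a => (p ^ b).Coprime a), (a : ZMod (p ^ b)) =
      ((∏ u : (ZMod (p ^ b))ˣ, u : (ZMod (p ^ b))ˣ) : ZMod (p ^ b)) := by
    rw [Units.coe_prod]
    symm
    refine prod_bij (fun u _ => (u : ZMod (p ^ b)).val) ?_ ?_ ?_ ?_
    · intro u _
      simp only [mem_filter, mem_range]
      exact ⟨ZMod.val_lt _, (ZMod.val_coe_unit_coprime u).symm⟩
    · intro u _ v _ h
      exact Units.ext (ZMod.val_injective _ h)
    · intro a ha
      simp only [mem_filter, mem_range] at ha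
      exact ⟨ZMod.unitOfCoprime a ha.2.symm, mem_univ _, by
        simp [ZMod.val_cast_of_lt ha.1]⟩
    · intro u _
      simp
  have h := (ZMod.intCast_zmod_eq_zero_iff_dvd
    (1 + ∏ a ∈ (range (p ^ b)).filter (fun a => (p ^ b).Coprime a), (a : ℤ)) (p ^ b)).mp (by
      push_cast
      rw [key, ZMod.prod_units_prime_pow hp hodd]
      simp)
  exact_mod_cast h

theorem sq_dvd_prod_sub_one_sub_sum {R ι : Type*} [CommRing R] (s : Finset ι) (n : R) (x : ι → R)
    (h : ∀ i ∈ s, n ∣ x i - 1) : n ^ 2 ∣ ∏ i ∈ s, x i - 1 - ∑ i ∈ s, (x i - 1) := by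
  classical
  suffices n ∣ ∑ i ∈ s, (x i - 1) ∧ n ^ 2 ∣ ∏ i ∈ s, x i - 1 - ∑ i ∈ s, (x i - 1) from this.2
  induction s using Finset.induction_on with
  | empty => simp
  | insert a s ha ih =>
    obtain ⟨⟨u, hu⟩, v, hv⟩ := ih fun i hi => h i (mem_insert_of_mem hi)
    obtain ⟨w, hw⟩ := h a (mem_insert_self a s)
    rw [prod_insert ha, sum_insert ha]
    refine ⟨⟨w + u, by linear_combination hu + hw⟩, ⟨w * u + x a * v, ?_⟩⟩
    linear_combination x a * hv + (x a - 1) * hu + n * u * hw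

theorem two_mul_le_totient_prime_pow {p b : ℕ} (hp : p.Prime) (hodd : Odd p) (hb : 0 < b) :
    2 * b ≤ Nat.totient (p ^ b) := by
  have h3 : 3 ≤ p := lt_of_le_of_ne hp.two_le (by rintro rfl; exact absurd hodd (by decide))
  rw [Nat.totient_prime_pow hp hb, mul_comm]
  have h1 : b - 1 < p ^ (b - 1) := Nat.lt_pow_self hp.one_lt
  exact Nat.mul_le_mul (by omega) (by omega)

/-- The Wilson quotient of `p ^ b` expressed through a power sum. -/
theorem prime_pow_sq_dvd_wilson_sub_sum_pow {p b : ℕ} (hp : p.Prime) (hodd : Odd p) (hb : 0 < b)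
    {w : ℤ} (hw : 1 + ∏ a ∈ (range (p ^ b)).filter (fun a => (p ^ b).Coprime a), (a : ℤ) =
      (p : ℤ) ^ b * w) :
    ((p : ℤ) ^ b) ^ 2 ∣ (p : ℤ) ^ (2 * b - 1) * w -
      (∑ a ∈ range (p ^ b), (a : ℤ) ^ Nat.totient (p ^ b) - Nat.totient (p ^ b)) := by
  set N := Nat.totient (p ^ b) with hN
  set U := (range (p ^ b)).filter (fun a => (p ^ b).Coprime a) with hU
  have hcard : #U = N := (Nat.totient_eq_card_coprime _).symm
  have hNeven : Even N := by
    rw [hN, Nat.totient_prime_pow hp hb]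
    exact (Nat.Odd.sub_odd hodd odd_one).mul_left _
  have hprod := sq_dvd_prod_sub_one_sub_sum U ((p : ℤ) ^ b) (fun a => (a : ℤ) ^ N) (by
    intro a ha
    have h := Nat.ModEq.pow_totient ((mem_filter.mp ha).2.symm)
    have h' := (Nat.modEq_iff_dvd.mp h.symm)
    exact_mod_cast h')
  have hpow := sq_dvd_prod_sub_one_sub_sum (range N) ((p : ℤ) ^ b)
    (fun _ => 1 - (p : ℤ) ^ b * w) (by intro i _; exact ⟨-w, by ring⟩)
  have hP : ∏ a ∈ U, (a : ℤ) ^ N = (1 - (p : ℤ) ^ b * w) ^ N := by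
    rw [prod_pow, ← hNeven.neg_pow]
    congr 1
    linear_combination -hw
  have hrest : ((p : ℤ) ^ b) ^ 2 ∣
      ∑ a ∈ (range (p ^ b)).filter (fun a => ¬ (p ^ b).Coprime a), (a : ℤ) ^ N := by
    refine dvd_sum fun a ha => ?_
    have hpa : p ∣ a := by
      have := (mem_filter.mp ha).2
      rwa [Nat.coprime_pow_left_iff hb, hp.coprime_iff_not_dvd, not_not] at this
    rw [← pow_mul]
    refine (pow_dvd_pow (p : ℤ) ?_).trans (pow_dvd_pow_of_dvd (Int.natCast_dvd_natCast.mpr hpa) N)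
    rw [mul_comm]
    exact two_mul_le_totient_prime_pow hp hodd hb
  have hsplit := sum_filter_add_sum_filter_not (range (p ^ b)) (fun a => (p ^ b).Coprime a)
    (fun a => (a : ℤ) ^ N)
  have hNval : (N : ℤ) * p ^ b = (p ^ b) ^ 2 - p ^ (2 * b - 1) := by
    obtain ⟨c, rfl⟩ : ∃ c, b = c + 1 := ⟨b - 1, by omega⟩
    rw [hN, Nat.totient_prime_pow_succ hp, show 2 * (c + 1) - 1 = 2 * c + 1 by omega]
    push_cast [hp.one_le]
    ring
  simp only [hP, sum_sub_distrib, sum_const, hcard, nsmul_eq_mul, mul_one, prod_const,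
    card_range] at hprod hpow
  rw [← hsplit]
  obtain ⟨x, hx⟩ := hprod
  obtain ⟨y, hy⟩ := hpow
  obtain ⟨z, hz⟩ := hrest
  refine ⟨x - y - z + w, ?_⟩
  linear_combination hx - hy - hz + w * hNval

theorem mem_integer_padicValuation_of_not_dvd_den {p : ℕ} [Fact p.Prime] {x : ℚ}
    (h : ¬ p ∣ x.den) : x ∈ (Rat.padicValuation p).integer :=
  Rat.padicValuation_le_one_iff.mpr h

theorem prime_pow_div_mem_integer {p e m : ℕ} [hp : Fact p.Prime] (hm : m ≠ 0)
    (h : m < p ^ (e + 1)) : (p : ℚ) ^ e / m ∈ (Rat.padicValuation p).integer := by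
  obtain ⟨v, m', hm', rfl⟩ := Nat.exists_eq_pow_mul_and_not_dvd hm p hp.out.ne_one
  have hm0 : 0 < m' := Nat.pos_of_ne_zero (by rintro rfl; simp at hm)
  have hv : v ≤ e := by
    have : p ^ v < p ^ (e + 1) := lt_of_le_of_lt (Nat.le_mul_of_pos_right _ hm0) h
    exact Nat.lt_succ_iff.mp ((Nat.pow_lt_pow_iff_right hp.out.one_lt).mp this)
  have hp0 : (p : ℚ) ≠ 0 := mod_cast hp.out.ne_zero
  have heq : (p : ℚ) ^ e / (p ^ v * m' : ℕ) = ((p ^ (e - v) : ℕ) : ℚ) * (m' : ℚ)⁻¹ := by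
    obtain ⟨k, rfl⟩ := Nat.exists_eq_add_of_le hv
    rw [Nat.add_sub_cancel_left]
    push_cast
    rw [pow_add]
    field_simp
  rw [heq]
  refine mul_mem (natCast_mem _ _) (mem_integer_padicValuation_of_not_dvd_den ?_)
  rwa [Rat.inv_natCast_den_of_pos hm0]

/-- Faulhaber's formula with the leading Bernoulli term split off. -/
theorem sum_range_pow_eq_bernoulli_add (n m : ℕ) :
    ∑ k ∈ range n, (k : ℚ) ^ m = n * bernoulli m +
      ∑ i ∈ range m, bernoulli i * m.choose i * ((n : ℚ) ^ (m - i + 1) / (m - i + 1 : ℕ)) := by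
  rw [sum_range_pow, sum_range_succ, add_comm]
  congr 1
  · rw [Nat.choose_succ_self_right, Nat.add_sub_cancel_left]
    push_cast
    field_simp
  · refine sum_congr rfl fun i hi => ?_
    have hi := mem_range.mp hi
    have h := Nat.choose_mul_succ_eq m i
    rw [Nat.sub_add_comm hi.le] at h
    have h' : (m.choose i : ℚ) * (m + 1) = (m + 1).choose i * (m - i + 1 : ℕ) := by exact_mod_cast h
    have h1 : ((m - i + 1 : ℕ) : ℚ) ≠ 0 := by positivity
    have h2 : (m + 1 : ℚ) ≠ 0 := by positivity
    rw [Nat.sub_add_comm hi.le]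
    field_simp
    linear_combination -(bernoulli i) * (n : ℚ) ^ (m - i + 1) * h'

theorem prime_mul_bernoulli_mem_integer (p : ℕ) [hp : Fact p.Prime] (m : ℕ) :
    (p : ℚ) * bernoulli m ∈ (Rat.padicValuation p).integer := by
  induction m using Nat.strong_induction_on with
  | _ m ih =>
    rw [← add_sub_cancel_right ((p : ℚ) * bernoulli m), ← sum_range_pow_eq_bernoulli_add]
    refine sub_mem (sum_mem fun k _ => pow_mem (natCast_mem _ k) m) (sum_mem fun i hi => ?_)
    have heq : bernoulli i * m.choose i * ((p : ℚ) ^ (m - i + 1) / (m - i + 1 : ℕ)) =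
        (p * bernoulli i) * m.choose i * ((p : ℚ) ^ (m - i) / (m - i + 1 : ℕ)) := by ring
    rw [heq]
    exact mul_mem (mul_mem (ih i (mem_range.mp hi)) (natCast_mem _ _))
      (prime_pow_div_mem_integer (Nat.succ_ne_zero _) (Nat.lt_pow_self hp.out.one_lt))

theorem add_three_lt_pow {n d : ℕ} (hn : 3 < n) : d + 3 < n ^ (d + 1) := by
  induction d with
  | zero => simpa
  | succ d ih =>
    rw [pow_succ]
    nlinarith

theorem exists_sum_range_pow_eq_bernoulli_add {p b m : ℕ} [hp : Fact p.Prime] (hpb : 3 < p ^ b)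
    (hm : Even m) (hm2 : 2 < m) :
    ∃ r ∈ (Rat.padicValuation p).integer, ∑ k ∈ range (p ^ b), (k : ℚ) ^ m =
      (p : ℚ) ^ b * bernoulli m + ((p : ℚ) ^ b) ^ 2 * r := by
  have hb : 0 < b := Nat.pos_of_ne_zero (by rintro rfl; simp at hpb)
  refine ⟨∑ i ∈ range m,
    bernoulli i * m.choose i * (((p : ℚ) ^ b) ^ (m - i - 1) / (m - i + 1 : ℕ)),
    sum_mem fun i hi => ?_, ?_⟩
  · have hi := mem_range.mp hi
    obtain ⟨d, rfl⟩ : ∃ d, m = i + d + 1 := ⟨m - i - 1, by omega⟩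
    rcases d with _ | d
    · have hodd : Odd i := by
        rcases Nat.even_or_odd i with h | h
        · exact absurd hm (by simpa [Nat.even_add_one] using h)
        · exact h
      rw [bernoulli_eq_zero_of_odd hodd (by omega), zero_mul, zero_mul]
      exact zero_mem _
    · rw [show i + (d + 1) + 1 - i - 1 = d + 1 by omega,
        show i + (d + 1) + 1 - i + 1 = d + 3 by omega]
      obtain ⟨e, he⟩ : ∃ e, b * (d + 1) = e + 1 :=
        ⟨b * (d + 1) - 1, by have : 0 < b * (d + 1) := Nat.mul_pos hb d.succ_pos; omega⟩
      have hlt := add_three_lt_pow (d := d) hpb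
      rw [← pow_mul, he] at hlt
      rw [← pow_mul, he]
      have heq : bernoulli i * (i + (d + 1) + 1).choose i *
          ((p : ℚ) ^ (e + 1) / (d + 3 : ℕ)) =
          (p * bernoulli i) * (i + (d + 1) + 1).choose i * ((p : ℚ) ^ e / (d + 3 : ℕ)) := by ring
      rw [heq]
      exact mul_mem (mul_mem (prime_mul_bernoulli_mem_integer p i) (natCast_mem _ _))
        (prime_pow_div_mem_integer (Nat.succ_ne_zero _) hlt)
  · rw [sum_range_pow_eq_bernoulli_add, mul_sum]
    push_cast
    congr 1
    refine sum_congr rfl fun i hi => ?_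
    have hi := mem_range.mp hi
    rw [show m - i + 1 = m - i - 1 + 2 by omega, pow_add]
    ring

theorem modCong_one_of_sub_eq {p : ℕ} [hp : Fact p.Prime] {x y r : ℚ}
    (hr : r ∈ (Rat.padicValuation p).integer) (h : x - y = p * r) : modCong p 1 x y := by
  rcases eq_or_ne r 0 with rfl | hr0
  · exact Or.inl (sub_eq_zero.mp (by simpa using h))
  · right
    have hden : ¬ p ∣ r.den := Rat.padicValuation_le_one_iff.mp hr
    rw [h, padicValRat.mul (mod_cast hp.out.ne_zero) hr0, padicValRat.self hp.out.one_lt,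
      padicValRat, padicValNat.eq_zero_of_not_dvd hden]
    simp

theorem stmt15 (p b : ℕ) (hp : p.Prime) (hodd : Odd p) (hb : 0 < b) :
    (∃ w : ℤ, (w:ℚ) =
      (1 + ∏ a ∈ (Finset.Ico 1 (p^b)).filter (fun a => ¬ p ∣ a), (a:ℚ)) / (p:ℚ)^b) ∧
    modCong p 1
      ((1 + ∏ a ∈ (Finset.Ico 1 (p^b)).filter (fun a => ¬ p ∣ a), (a:ℚ)) / (p:ℚ)^b)
      (((p:ℚ) * bernoulli (Nat.totient (p^b)) - (p:ℚ) + 1) / (p:ℚ)^b) := by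
  have : Fact p.Prime := ⟨hp⟩
  have hp0 : (p : ℚ) ≠ 0 := mod_cast hp.ne_zero
  rw [filter_not_dvd_Ico_eq hp hb]
  obtain ⟨w, hw⟩ := prime_pow_dvd_one_add_prod_coprime hp hodd
  have hwq : (w : ℚ) = (1 + ∏ a ∈ (range (p ^ b)).filter (fun a => (p ^ b).Coprime a), (a : ℚ)) /
      (p : ℚ) ^ b := by
    rw [eq_div_iff (pow_ne_zero _ hp0), mul_comm]
    have h := congrArg (Int.cast : ℤ → ℚ) hw
    push_cast at h
    exact h.symm
  rw [← hwq]
  refine ⟨⟨w, rfl⟩, ?_⟩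
  obtain ⟨t, ht⟩ := prime_pow_sq_dvd_wilson_sub_sum_pow hp hodd hb hw
  have h3p : 3 ≤ p := lt_of_le_of_ne hp.two_le (by rintro rfl; exact absurd hodd (by decide))
  have hpb : p ≤ p ^ b := Nat.le_self_pow hb.ne' p
  have hmain : ∃ r ∈ (Rat.padicValuation p).integer,
      ∑ k ∈ range (p ^ b), (k : ℚ) ^ Nat.totient (p ^ b) =
        (p : ℚ) ^ b * bernoulli (Nat.totient (p ^ b)) + ((p : ℚ) ^ b) ^ 2 * r := by
    rcases (h3p.trans hpb).eq_or_lt with h3 | h3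
    · obtain rfl : p = 3 := by omega
      have hb1 : b = 1 := Nat.pow_right_injective (by norm_num : 2 ≤ 3)
        (by simpa using h3.symm)
      subst hb1
      refine ⟨(2 : ℚ)⁻¹, mem_integer_padicValuation_of_not_dvd_den ?_, ?_⟩
      · norm_num
      · have : Nat.totient 3 = 2 := by decide
        norm_num [this, sum_range_succ, bernoulli_two]
    · refine exists_sum_range_pow_eq_bernoulli_add h3 (Nat.totient_even (by omega)) ?_
      rw [Nat.totient_prime_pow hp hb]
      rcases h3p.eq_or_lt with rfl | h4
      · obtain ⟨c, rfl⟩ : ∃ c, b = c + 2 := ⟨b - 2, by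
          rcases b with _ | _ | b
          · omega
          · simp at h3
          · omega⟩
        rw [show c + 2 - 1 = c + 1 by omega, pow_succ]
        have := Nat.one_le_pow c 3 (by norm_num)
        omega
      · have := Nat.one_le_pow (b - 1) p (by omega)
        have : 3 ≤ p - 1 := by omega
        nlinarith
  obtain ⟨r, hr, hsum⟩ := hmain
  refine modCong_one_of_sub_eq (add_mem hr (intCast_mem _ t)) ?_
  have htq : (p : ℚ) ^ (2 * b - 1) * w - (∑ a ∈ range (p ^ b), (a : ℚ) ^ Nat.totient (p ^ b) -
      Nat.totient (p ^ b)) = ((p : ℚ) ^ b) ^ 2 * t := by exact_mod_cast ht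
  rw [hsum] at htq
  generalize bernoulli (Nat.totient (p ^ b)) = B at htq ⊢
  obtain ⟨c, rfl⟩ : ∃ c, b = c + 1 := ⟨b - 1, by omega⟩
  rw [Nat.totient_prime_pow_succ hp, show 2 * (c + 1) - 1 = 2 * c + 1 by omega] at htq
  push_cast [hp.one_le] at htq
  have hc : (p : ℚ) ^ c ≠ 0 := pow_ne_zero _ hp0
  field_simp
  refine mul_left_cancel₀ hc ?_
  linear_combination htq
end

section
/- Let f be a function from ℤ to a field, let m,n be positive integers, and let r be an integer. Set r̄ = r + m − 1. Then Σ_{k=0}^{n} binom(n,k)·(−1)^k·f(⌊(k−r)/m⌋) = Σ_{0≤k≤n−1, k≡r̄ (mod m)} binom(n−1,k)·(−1)^{k−1}·(f((k−r̄)/m + 1) − f((k−r̄)/m)), where ⌊·⌋ is the integer floor. -/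
open Finset

/-- Pascal's rule turns an alternating binomial sum into one over first differences. -/
theorem sum_choose_mul_neg_one_pow_succ {R : Type*} [CommRing R] (g : ℕ → R) (n : ℕ) :
    ∑ k ∈ range (n + 2), ((n + 1).choose k : R) * (-1) ^ k * g k
      = ∑ k ∈ range (n + 1), (n.choose k : R) * (-1) ^ (k + 1) * (g (k + 1) - g k) := by
  have shift : ∑ k ∈ range (n + 1), (n.choose (k + 1) : R) * (-1) ^ (k + 1) * g (k + 1) + g 0
      = ∑ k ∈ range (n + 1), (n.choose k : R) * (-1) ^ k * g k := by
    have h := sum_range_succ' (fun k ↦ (n.choose k : R) * (-1) ^ k * g k) (n + 1)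
    rw [sum_range_succ] at h
    simpa using h.symm
  calc _ = ∑ k ∈ range (n + 1), (n.choose k : R) * (-1) ^ (k + 1) * g (k + 1)
        + (∑ k ∈ range (n + 1), (n.choose (k + 1) : R) * (-1) ^ (k + 1) * g (k + 1) + g 0) := by
        rw [sum_range_succ', ← add_assoc, ← sum_add_distrib]
        simp [Nat.choose_succ_succ, add_mul]
    _ = _ := by
        rw [shift, ← sum_add_distrib]
        exact sum_congr rfl fun k _ ↦ by ring

/-- The floor of `x / m` jumps by one from `x` to `x + 1` exactly when `m ∣ x + 1`. -/
theorem sub_ediv_succ_eq_ite {G : Type*} [AddGroup G] (f : ℤ → G) {m : ℤ} (hm : 0 < m) (x : ℤ) :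
    f ((x + 1) / m) - f (x / m)
      = if (x - (m - 1)) % m = 0 then f ((x - (m - 1)) / m + 1) - f ((x - (m - 1)) / m)
        else 0 := by
  have hx : x - (m - 1) = x + 1 - m := by ring
  have hdiv : (x + 1 - m) / m = (x + 1) / m - 1 := by
    simpa [sub_eq_add_neg] using Int.add_mul_ediv_right (x + 1) (-1) hm.ne'
  rw [hx, Int.sub_emod_right, hdiv, sub_add_cancel]
  have e := Int.mul_ediv_add_emod (x + 1) m
  have hlt := Int.emod_lt_of_pos (x + 1) hm
  have hnonneg := Int.emod_nonneg (x + 1) hm.ne'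
  split_ifs with h
  · have : x / m = (x + 1) / m - 1 := by
      rw [Int.ediv_eq_iff_of_pos hm]
      constructor <;> linarith
    rw [this]
  · have : x / m = (x + 1) / m := by
      have : 0 < (x + 1) % m := lt_of_le_of_ne hnonneg (Ne.symm h)
      rw [Int.ediv_eq_iff_of_pos hm]
      constructor <;> linarith
    rw [this, sub_self]

theorem stmt16 {F : Type*} [Field F] (f : ℤ → F) (m n : ℕ) (hm : 0 < m) (hn : 0 < n)
    (r : ℤ) :
    ∑ k ∈ Finset.range (n+1), (n.choose k : F) * (-1:F)^k * f (Int.fdiv ((k:ℤ) - r) m)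
      = ∑ k ∈ Finset.range n,
          if ((k:ℤ) - (r + m - 1)) % m = 0 then
            ((n-1).choose k : F) * (-1:F)^(k+1) *
              (f (((k:ℤ) - (r + m - 1)) / m + 1) - f (((k:ℤ) - (r + m - 1)) / m))
          else 0 := by
  obtain ⟨n, rfl⟩ := Nat.exists_eq_succ_of_ne_zero hn.ne'
  simp only [Int.fdiv_eq_ediv_of_nonneg _ (Int.natCast_nonneg m), Nat.succ_eq_add_one,
    Nat.add_sub_cancel]
  rw [sum_choose_mul_neg_one_pow_succ (fun k : ℕ ↦ f (((k : ℤ) - r) / m))]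
  refine sum_congr rfl fun k _ ↦ ?_
  have hstep : ((k + 1 : ℕ) : ℤ) - r = (k - r) + 1 := by push_cast; ring
  have hres : (k : ℤ) - (r + m - 1) = k - r - (m - 1) := by ring
  rw [hstep, hres, sub_ediv_succ_eq_ite f (Int.natCast_pos.mpr hm), mul_ite, mul_zero]
end
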